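/- arXiv:1103.3401 — 3 statements merged into one kernel-verified Lean document; each statement's English description precedes it below -/
import Mathlib

section
/- Let X be a proper complete separable metric space, 1 <= p < infinity, and f: X -> X a continuous map such that the pushforward f_* maps P_p(X) into itself and is w_p-continuous, f_* has a global attractor in (P_p(X), w_p), and f_* is uniformly w_p-continuous on some w_p-neighborhood of this global attractor. Let (P_n) be MW-maps of order p relative to f with noise levels eps_n -> 0. Then there is n_0 such that for every n >= n_0 there exists a closed, positively P_n-invariant isolating neighborhood N_n in (P_p(X), w_p) whose maximal P_n-invariant set K_n = A_{P_n}(N_n) is nonempty, compact in the weak topology, a weak attractor for P_n with respect to the weak topology, contains all measures lying on bounded full P_n-orbits in P_p(X) (i.e. K_n = A_{P_n}(P_p(X)) for bounded orbits), and contains at least one fixed point of P_n (a stationary measure). -/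
open MeasureTheory Topology Filter Metric Set
open scoped ENNReal NNReal

noncomputable section

variable {X : Type*}

/-- `π` is a coupling of `μ` and `ν`, i.e. a measure on `X × X` with marginals `μ` and `ν`. -/
def IsCoupling [MeasurableSpace X] (π : Measure (X × X)) (μ ν : Measure X) : Prop :=
  π.map Prod.fst = μ ∧ π.map Prod.snd = ν

/-- The `p`-th power optimal transport cost between `μ` and `ν`. -/
def wCost [MetricSpace X] [MeasurableSpace X] (p : ℝ) (μ ν : Measure X) : ℝ≥0∞ :=
  ⨅ π ∈ {π : Measure (X × X) | IsProbabilityMeasure π ∧ IsCoupling π μ ν},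
    ∫⁻ q, ENNReal.ofReal (dist q.1 q.2 ^ p) ∂π

/-- The Wasserstein distance of order `p` (the `p`-th root of the optimal cost), as a real
number. -/
def Wp [MetricSpace X] [MeasurableSpace X] (p : ℝ) (μ ν : Measure X) : ℝ :=
  ((wCost p μ ν) ^ (1 / p)).toReal

/-- `μ` has finite `p`-th moment about the base point `x₀`. -/
def FiniteMoment [MetricSpace X] [MeasurableSpace X] (p : ℝ) (x₀ : X) (μ : Measure X) : Prop :=
  ∫⁻ x, ENNReal.ofReal (dist x₀ x ^ p) ∂μ < ⊤

/-- The Wasserstein space `P_p(X)`: Borel probability measures with finite `p`-th moment. -/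
def Pp [MetricSpace X] [MeasurableSpace X] (p : ℝ) (x₀ : X) : Set (Measure X) :=
  {μ | IsProbabilityMeasure μ ∧ FiniteMoment p x₀ μ}

/-- The convex combination `t • μ + (1 - t) • ν` of two measures. -/
def mix [MeasurableSpace X] (t : ℝ) (μ ν : Measure X) : Measure X :=
  ENNReal.ofReal t • μ + ENNReal.ofReal (1 - t) • ν

/-- `μₙ → μ` in the weak topology: integrals of bounded continuous functions converge. -/
def WeakConv [MeasurableSpace X] [TopologicalSpace X] (μs : ℕ → Measure X) (μ : Measure X) :
    Prop :=
  ∀ g : BoundedContinuousFunction X ℝ,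
    Tendsto (fun n => ∫ x, g x ∂(μs n)) atTop (𝓝 (∫ x, g x ∂μ))

/-- `μₙ → μ` with respect to the Wasserstein distance of order `p`. -/
def WpTendsto [MetricSpace X] [MeasurableSpace X] (p : ℝ) (μs : ℕ → Measure X)
    (μ : Measure X) : Prop :=
  Tendsto (fun n => Wp p (μs n) μ) atTop (𝓝 0)

/-- A set of measures is sequentially compact for the Wasserstein distance of order `p`. -/
def WpSeqCompact [MetricSpace X] [MeasurableSpace X] (p : ℝ) (S : Set (Measure X)) : Prop :=
  ∀ μs : ℕ → Measure X, (∀ n, μs n ∈ S) →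
    ∃ μ ∈ S, ∃ φ : ℕ → ℕ, StrictMono φ ∧ WpTendsto p (fun n => μs (φ n)) μ

/-- A set of measures is sequentially compact for the weak topology. -/
def WeakSeqCompact [MeasurableSpace X] [TopologicalSpace X] (S : Set (Measure X)) : Prop :=
  ∀ μs : ℕ → Measure X, (∀ n, μs n ∈ S) →
    ∃ μ ∈ S, ∃ φ : ℕ → ℕ, StrictMono φ ∧ WeakConv (fun n => μs (φ n)) μ

/-- A set `N ⊆ P_p(X)` is admissible for a sequence of maps `F n` on measures: whenever
orbit segments `F n^[0..m n] (μs n)` stay in `N` with `m n → ∞`, the endpoints have a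
subsequence converging in `(P_p(X), w_p)`. -/
def WpSeqAdmissible [MetricSpace X] [MeasurableSpace X] (p : ℝ) (x₀ : X)
    (F : ℕ → Measure X → Measure X) (N : Set (Measure X)) : Prop :=
  ∀ (μs : ℕ → Measure X) (m : ℕ → ℕ), Tendsto m atTop atTop →
    (∀ n, ∀ k ≤ m n, (F n)^[k] (μs n) ∈ N) →
    ∃ μ ∈ Pp p x₀, ∃ φ : ℕ → ℕ, StrictMono φ ∧
      WpTendsto p (fun j => (F (φ j))^[m (φ j)] (μs (φ j))) μ

/-- A set `N ⊆ P_p(X)` is `F`-admissible. -/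
def WpAdmissible [MetricSpace X] [MeasurableSpace X] (p : ℝ) (x₀ : X)
    (F : Measure X → Measure X) (N : Set (Measure X)) : Prop :=
  WpSeqAdmissible p x₀ (fun _ => F) N

/-- A subset of `P_p(X)` that is (sequentially) closed in `(P_p(X), w_p)`. -/
def WpClosed [MetricSpace X] [MeasurableSpace X] (p : ℝ) (x₀ : X)
    (N : Set (Measure X)) : Prop :=
  N ⊆ Pp p x₀ ∧ ∀ (μs : ℕ → Measure X) (μ : Measure X), (∀ n, μs n ∈ N) →
    μ ∈ Pp p x₀ → WpTendsto p μs μ → μ ∈ N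

/-- A subset of `P_p(X)` that is bounded for `w_p`. -/
def WpBounded [MetricSpace X] [MeasurableSpace X] (p : ℝ) (x₀ : X)
    (N : Set (Measure X)) : Prop :=
  ∃ R : ℝ, ∀ μ ∈ N, Wp p μ (Measure.dirac x₀) ≤ R

/-- The (sequential) closure of a subset of `P_p(X)` in `(P_p(X), w_p)`. -/
def WpClosure [MetricSpace X] [MeasurableSpace X] (p : ℝ) (x₀ : X)
    (S : Set (Measure X)) : Set (Measure X) :=
  {μ | μ ∈ Pp p x₀ ∧ ∃ μs : ℕ → Measure X, (∀ n, μs n ∈ S) ∧ WpTendsto p μs μ}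

/-- A set `N` is positively invariant under `g`. -/
def PosInvariant {Y : Type*} (g : Y → Y) (N : Set Y) : Prop :=
  ∀ x ∈ N, g x ∈ N

/-- There is a full left solution of `g` in `N` through `x` (indexed so that `u n = x_{-n}`). -/
def FullLeftSolution {Y : Type*} (g : Y → Y) (N : Set Y) (x : Y) : Prop :=
  ∃ u : ℕ → Y, u 0 = x ∧ (∀ k, g (u (k + 1)) = u k) ∧ ∀ k, u k ∈ N

/-- The maximal positively invariant subset `A⁺(N)` of `N`. -/
def aPlus {Y : Type*} (g : Y → Y) (N : Set Y) : Set Y :=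
  {x | x ∈ N ∧ ∀ k : ℕ, g^[k] x ∈ N}

/-- The maximal negatively invariant subset `A⁻(N)` of `N`. -/
def aMinus {Y : Type*} (g : Y → Y) (N : Set Y) : Set Y :=
  {x | x ∈ N ∧ FullLeftSolution g N x}

/-- The maximal invariant subset `A(N) = A⁺(N) ∩ A⁻(N)` of `N`. -/
def maxInv {Y : Type*} (g : Y → Y) (N : Set Y) : Set Y :=
  aPlus g N ∩ aMinus g N

/-- The weak ω-limit set of `N` under a map `P` on measures, with respect to the weak
topology of `P(X)`. -/
def omegaWeakM [MetricSpace X] [MeasurableSpace X] (P : Measure X → Measure X)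
    (N : Set (Measure X)) : Set (Measure X) :=
  {ν | ∃ (μs : ℕ → Measure X) (m : ℕ → ℕ), (∀ k, μs k ∈ N) ∧ Tendsto m atTop atTop ∧
    WeakConv (fun k => P^[m k] (μs k)) ν}



section Basics

set_option linter.unusedSectionVars false
set_option linter.style.haveILetI false

variable [MetricSpace X] [MeasurableSpace X]

/-- The `p`-th moment about `z`. -/
def mom (p : ℝ) (z : X) (μ : Measure X) : ℝ≥0∞ := ∫⁻ x, edist z x ^ p ∂μ

lemma ofReal_dist_rpow (p : ℝ) (hp : 1 ≤ p) (x y : X) :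
    ENNReal.ofReal (dist x y ^ p) = edist x y ^ p := by
  rw [edist_dist, ENNReal.ofReal_rpow_of_nonneg dist_nonneg (by linarith)]

lemma mem_Pp_iff (p : ℝ) (hp : 1 ≤ p) (z : X) (μ : Measure X) :
    μ ∈ Pp p z ↔ IsProbabilityMeasure μ ∧ mom p z μ < ⊤ := by
  simp only [Pp, FiniteMoment, mom, ofReal_dist_rpow p hp, Set.mem_ofPred_eq]

lemma wCost_eq (p : ℝ) (hp : 1 ≤ p) (μ ν : Measure X) :
    wCost p μ ν = ⨅ π ∈ {π : Measure (X × X) | IsProbabilityMeasure π ∧ IsCoupling π μ ν},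
    ∫⁻ q, edist q.1 q.2 ^ p ∂π := by
  simp only [wCost, ofReal_dist_rpow p hp]

/-- The quasi-triangle constant. -/
def cp (p : ℝ) : ℝ≥0∞ := 2 ^ p

lemma cp_ne_top (p : ℝ) (hp : 1 ≤ p) : cp p ≠ ⊤ := by
  unfold cp
  exact ENNReal.rpow_ne_top_of_nonneg (by linarith) (by simp)

lemma one_le_cp (p : ℝ) (hp : 1 ≤ p) : 1 ≤ cp p := by
  unfold cp
  exact ENNReal.one_le_rpow (by norm_num) (by linarith)

lemma add_rpow_le_cp (p : ℝ) (hp : 1 ≤ p) (a b : ℝ≥0∞) :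
    (a + b) ^ p ≤ cp p * (a ^ p + b ^ p) := by
  refine (ENNReal.rpow_add_le_mul_rpow_add_rpow a b hp).trans ?_
  gcongr
  unfold cp
  exact ENNReal.rpow_le_rpow_of_exponent_le (by norm_num) (by linarith)

lemma edist_rpow_le (p : ℝ) (hp : 1 ≤ p) (x y z : X) :
    edist x z ^ p ≤ cp p * (edist x y ^ p + edist y z ^ p) :=
  (ENNReal.rpow_le_rpow (edist_triangle x y z) (by linarith)).trans (add_rpow_le_cp p hp _ _)

variable [BorelSpace X] [TopologicalSpace.SeparableSpace X]

lemma meas_edist_rpow (p : ℝ) (z : X) : Measurable (fun x : X => edist z x ^ p) :=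
  (measurable_edist_right).pow_const p

lemma meas_edist_rpow2 (p : ℝ) : Measurable (fun q : X × X => edist q.1 q.2 ^ p) := by
  haveI : SecondCountableTopology X := UniformSpace.secondCountable_of_separable X
  exact (measurable_fst.edist measurable_snd).pow_const p

lemma coupling_fst {π : Measure (X × X)} {μ ν : Measure X} (h : IsCoupling π μ ν)
    {g : X → ℝ≥0∞} (hg : Measurable g) : ∫⁻ q, g q.1 ∂π = ∫⁻ x, g x ∂μ := by
  rw [← h.1, lintegral_map hg measurable_fst]

lemma coupling_snd {π : Measure (X × X)} {μ ν : Measure X} (h : IsCoupling π μ ν)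
    {g : X → ℝ≥0∞} (hg : Measurable g) : ∫⁻ q, g q.2 ∂π = ∫⁻ x, g x ∂ν := by
  rw [← h.2, lintegral_map hg measurable_snd]

lemma wCost_le_of_coupling (p : ℝ) (hp : 1 ≤ p) {π : Measure (X × X)} {μ ν : Measure X}
    (hπ : IsProbabilityMeasure π) (h : IsCoupling π μ ν) :
    wCost p μ ν ≤ ∫⁻ q, edist q.1 q.2 ^ p ∂π := by
  rw [wCost_eq p hp]
  exact iInf₂_le π ⟨hπ, h⟩

lemma le_wCost (p : ℝ) (hp : 1 ≤ p) {μ ν : Measure X} {c : ℝ≥0∞}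
    (h : ∀ π : Measure (X × X), IsProbabilityMeasure π → IsCoupling π μ ν →
      c ≤ ∫⁻ q, edist q.1 q.2 ^ p ∂π) : c ≤ wCost p μ ν := by
  rw [wCost_eq p hp]
  exact le_iInf₂ fun π hπ => h π hπ.1 hπ.2

lemma isCoupling_prod (μ ν : Measure X) [IsProbabilityMeasure μ] [IsProbabilityMeasure ν] :
    IsCoupling (μ.prod ν) μ ν := by
  constructor
  · simp
  · simp

lemma mom_le (p : ℝ) (hp : 1 ≤ p) (z : X) (μ ν : Measure X) :
    mom p z μ ≤ cp p * (mom p z ν + wCost p μ ν) := by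
  have h0 : cp p ≠ 0 := (lt_of_lt_of_le one_pos (one_le_cp p hp)).ne'
  rw [mul_add, ← tsub_le_iff_left]
  have : (mom p z μ - cp p * mom p z ν) / cp p ≤ wCost p μ ν := by
    refine le_wCost p hp fun π _ h => ?_
    rw [ENNReal.div_le_iff_le_mul (Or.inl h0) (Or.inl (cp_ne_top p hp)), tsub_le_iff_left]
    unfold mom
    rw [← coupling_fst h (meas_edist_rpow p z), ← coupling_snd h (meas_edist_rpow p z),
      mul_comm _ (cp p), ← mul_add, ← lintegral_add_left, ← lintegral_const_mul]
    · refine lintegral_mono fun q => ?_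
      rw [edist_comm q.1 q.2]
      exact edist_rpow_le p hp _ _ _
    · exact ((meas_edist_rpow p z).comp measurable_snd).add (meas_edist_rpow2 p)
    · exact (meas_edist_rpow p z).comp measurable_snd
  rw [ENNReal.div_le_iff_le_mul (Or.inl h0) (Or.inl (cp_ne_top p hp))] at this
  rwa [mul_comm (cp p) (wCost p μ ν)]

lemma mom_prod (p : ℝ) (hp : 1 ≤ p) (z : X) (μ ν : Measure X) [IsProbabilityMeasure μ]
    [IsProbabilityMeasure ν] :
    ∫⁻ q, edist q.1 q.2 ^ p ∂(μ.prod ν) ≤ cp p * (mom p z μ + mom p z ν) := by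
  unfold mom
  rw [← coupling_fst (isCoupling_prod μ ν) (meas_edist_rpow p z),
    ← coupling_snd (isCoupling_prod μ ν) (meas_edist_rpow p z), ← lintegral_add_left,
    ← lintegral_const_mul]
  · refine lintegral_mono fun q => ?_
    rw [edist_comm z q.1]
    exact edist_rpow_le p hp _ _ _
  · exact ((meas_edist_rpow p z).comp measurable_fst).add
      ((meas_edist_rpow p z).comp measurable_snd)
  · exact (meas_edist_rpow p z).comp measurable_fst

lemma wCost_lt_top (p : ℝ) (hp : 1 ≤ p) (z : X) {μ ν : Measure X} (hμ : μ ∈ Pp p z)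
    (hν : ν ∈ Pp p z) : wCost p μ ν < ⊤ := by
  rw [mem_Pp_iff p hp] at hμ hν
  haveI := hμ.1
  haveI := hν.1
  refine (wCost_le_of_coupling p hp inferInstance (isCoupling_prod μ ν)).trans_lt
    ((mom_prod p hp z μ ν).trans_lt ?_)
  exact ENNReal.mul_lt_top (cp_ne_top p hp).lt_top (ENNReal.add_lt_top.2 ⟨hμ.2, hν.2⟩)

lemma wCost_dirac (p : ℝ) (hp : 1 ≤ p) (μ : Measure X) [IsProbabilityMeasure μ] (z : X) :
    wCost p μ (Measure.dirac z) = mom p z μ := by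
  apply le_antisymm
  · refine (wCost_le_of_coupling p hp inferInstance (isCoupling_prod μ _)).trans ?_
    rw [Measure.prod_dirac, lintegral_map (meas_edist_rpow2 p) (by fun_prop)]
    simp [mom, edist_comm z]
  · refine le_wCost p hp fun π _ h => ?_
    unfold mom
    rw [← coupling_fst h (meas_edist_rpow p z)]
    have : ∀ᵐ q ∂π, q.2 = z := by
      have h2 : ∀ᵐ x ∂(π.map Prod.snd), x = z := by
        rw [h.2, ae_dirac_eq]
        rfl
      exact ae_of_ae_map measurable_snd.aemeasurable h2
    refine lintegral_mono_ae ?_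
    filter_upwards [this] with q hq
    rw [hq, edist_comm]

lemma wCost_eq_ofReal (p : ℝ) (hp : 1 ≤ p) (z : X) {μ ν : Measure X} (hμ : μ ∈ Pp p z)
    (hν : ν ∈ Pp p z) : wCost p μ ν = ENNReal.ofReal (Wp p μ ν) ^ p := by
  have h := wCost_lt_top p hp z hμ hν
  have hp0 : p ≠ 0 := by linarith
  unfold Wp
  rw [ENNReal.ofReal_toReal (ENNReal.rpow_ne_top_of_nonneg (by positivity) h.ne), ← ENNReal.rpow_mul,
    one_div_mul_cancel hp0, ENNReal.rpow_one]

lemma Wp_nonneg (p : ℝ) (μ ν : Measure X) : 0 ≤ Wp p μ ν := ENNReal.toReal_nonneg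

lemma wCost_le_of_Wp_le (p : ℝ) (hp : 1 ≤ p) (z : X) {μ ν : Measure X} (hμ : μ ∈ Pp p z)
    (hν : ν ∈ Pp p z) {e : ℝ} (h : Wp p μ ν ≤ e) : wCost p μ ν ≤ ENNReal.ofReal e ^ p := by
  rw [wCost_eq_ofReal p hp z hμ hν]
  have : 0 ≤ p := by linarith
  gcongr

lemma wCost_lt_of_Wp_lt (p : ℝ) (hp : 1 ≤ p) (z : X) {μ ν : Measure X} (hμ : μ ∈ Pp p z)
    (hν : ν ∈ Pp p z) {e : ℝ} (h : Wp p μ ν < e) : wCost p μ ν < ENNReal.ofReal e ^ p := by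
  rw [wCost_eq_ofReal p hp z hμ hν]
  refine ENNReal.rpow_lt_rpow ((ENNReal.ofReal_lt_ofReal_iff ?_).2 h) (by linarith)
  exact (Wp_nonneg p μ ν).trans_lt h

lemma Wp_lt_of_wCost_lt (p : ℝ) (hp : 1 ≤ p) {μ ν : Measure X}
    {e : ℝ} (h : wCost p μ ν < ENNReal.ofReal e ^ p) : Wp p μ ν < e := by
  have hp0 : p ≠ 0 := by linarith
  have h1 : wCost p μ ν ^ (1 / p) < ENNReal.ofReal e := by
    have := ENNReal.rpow_lt_rpow h (z := 1 / p) (by positivity)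
    rwa [← ENNReal.rpow_mul, mul_one_div_cancel hp0, ENNReal.rpow_one] at this
  unfold Wp
  have he : 0 < e := by
    by_contra hcon
    rw [ENNReal.ofReal_of_nonpos (not_lt.1 hcon)] at h1
    exact not_lt_bot h1
  exact (ENNReal.lt_ofReal_iff_toReal_lt h1.ne_top).1 h1

lemma Wp_le_of_wCost_le (p : ℝ) (hp : 1 ≤ p) {μ ν : Measure X}
    {e : ℝ} (he : 0 ≤ e) (h : wCost p μ ν ≤ ENNReal.ofReal e ^ p) : Wp p μ ν ≤ e := by
  have hp0 : p ≠ 0 := by linarith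
  have h1 : wCost p μ ν ^ (1 / p) ≤ ENNReal.ofReal e := by
    have := ENNReal.rpow_le_rpow h (z := 1 / p) (by positivity)
    rwa [← ENNReal.rpow_mul, mul_one_div_cancel hp0, ENNReal.rpow_one] at this
  exact ENNReal.toReal_le_of_le_ofReal he h1

lemma dirac_mem_Pp (p : ℝ) (hp : 1 ≤ p) (z y : X) : Measure.dirac y ∈ Pp p z := by
  rw [mem_Pp_iff p hp]
  refine ⟨inferInstance, ?_⟩
  unfold mom
  rw [lintegral_dirac]
  exact ENNReal.rpow_lt_top_of_nonneg (by linarith) (edist_ne_top _ _)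

lemma mom_mix (p : ℝ) (z : X) (t : ℝ) (μ ν : Measure X) :
    mom p z (mix t μ ν) = ENNReal.ofReal t * mom p z μ + ENNReal.ofReal (1 - t) * mom p z ν := by
  simp [mom, mix, lintegral_add_measure, lintegral_smul_measure]

lemma mix_prob {t : ℝ} (h0 : 0 ≤ t) (h1 : t ≤ 1) {Y : Type*} [MeasurableSpace Y]
    (μ ν : Measure Y) [IsProbabilityMeasure μ] [IsProbabilityMeasure ν] :
    IsProbabilityMeasure (mix t μ ν) := by
  constructor
  simp [mix]
  rw [← ENNReal.ofReal_add h0 (by linarith)]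
  simp

lemma mix_mem_Pp (p : ℝ) (hp : 1 ≤ p) (z : X) {t : ℝ} (h0 : 0 ≤ t) (h1 : t ≤ 1) {μ ν : Measure X}
    (hμ : μ ∈ Pp p z) (hν : ν ∈ Pp p z) : mix t μ ν ∈ Pp p z := by
  rw [mem_Pp_iff p hp] at *
  haveI := hμ.1
  haveI := hν.1
  refine ⟨mix_prob h0 h1 _ _, ?_⟩
  rw [mom_mix]
  exact ENNReal.add_lt_top.2 ⟨ENNReal.mul_lt_top (by simp) hμ.2, ENNReal.mul_lt_top (by simp) hν.2⟩

lemma mix_map {Y : Type*} [MeasurableSpace Y] (t : ℝ) (μ ν : Measure X) {g : X → Y}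
    (hg : Measurable g) :
    (mix t μ ν).map g = mix t (μ.map g) (ν.map g) := by
  simp [mix, Measure.map_add _ _ hg, Measure.map_smul]

lemma mix_self {t : ℝ} (h0 : 0 ≤ t) (h1 : t ≤ 1) (μ : Measure X) : mix t μ μ = μ := by
  unfold mix
  rw [← add_smul, ← ENNReal.ofReal_add h0 (by linarith)]
  simp

/-- Mixing with a common measure: only the differing part is transported. -/
lemma wCost_mix_le (p : ℝ) (hp : 1 ≤ p) {t : ℝ} (h0 : 0 ≤ t) (h1 : t ≤ 1)
    (μ ν α : Measure X) [IsProbabilityMeasure μ] [IsProbabilityMeasure ν]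
    [IsProbabilityMeasure α] :
    wCost p (mix t μ α) (mix t ν α) ≤
      ENNReal.ofReal t * ∫⁻ q, edist q.1 q.2 ^ p ∂(μ.prod ν) := by
  haveI : SecondCountableTopology X := UniformSpace.secondCountable_of_separable X
  have hd : Measurable (fun x : X => (x, x)) := by fun_prop
  haveI : IsProbabilityMeasure (α.map (fun x : X => (x, x))) :=
    Measure.isProbabilityMeasure_map hd.aemeasurable
  have hc : IsCoupling (mix t (μ.prod ν) (α.map (fun x : X => (x, x)))) (mix t μ α)
      (mix t ν α) := by
    constructor
    · unfold mix
      rw [Measure.map_add _ _ measurable_fst, Measure.map_smul, Measure.map_smul,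
        Measure.map_map measurable_fst hd]
      simp [Function.comp_def]
    · unfold mix
      rw [Measure.map_add _ _ measurable_snd, Measure.map_smul, Measure.map_smul,
        Measure.map_map measurable_snd hd]
      simp [Function.comp_def]
  refine (wCost_le_of_coupling p hp (mix_prob h0 h1 _ _) hc).trans ?_
  unfold mix
  rw [lintegral_add_measure, lintegral_smul_measure, lintegral_smul_measure,
    lintegral_map (meas_edist_rpow2 p) hd]
  have : (0 : ℝ≥0∞) ^ p = 0 := ENNReal.zero_rpow_of_pos (by linarith)
  simp [this]

/-- Lower bound for the transport cost of an atom (source side). -/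
lemma atom_le_fst (p : ℝ) (hp : 1 ≤ p) (μ ν : Measure X) (a : X) (r : ℝ≥0∞) :
    r ^ p * μ {a} ≤ wCost p μ ν + r ^ p * ν {x | edist a x < r} := by
  have hp0 : 0 ≤ p := by linarith
  rw [← tsub_le_iff_right]
  refine le_wCost p hp fun π _ h => ?_
  rw [tsub_le_iff_right]
  have hm : MeasurableSet {x : X | edist a x < r} := measurableSet_lt measurable_edist_right measurable_const
  have hE : MeasurableSet {q : X × X | r ^ p ≤ edist q.1 q.2 ^ p} :=
    measurableSet_le measurable_const (meas_edist_rpow2 p)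
  rw [← h.1, ← h.2, Measure.map_apply measurable_fst (measurableSet_singleton a),
    Measure.map_apply measurable_snd hm]
  have hsub : Prod.fst ⁻¹' {a} ⊆ {q : X × X | r ^ p ≤ edist q.1 q.2 ^ p} ∪
      Prod.snd ⁻¹' {x : X | edist a x < r} := by
    rintro ⟨x, y⟩ hx
    simp only [Set.mem_preimage, Set.mem_singleton_iff] at hx
    subst hx
    rcases lt_or_ge (edist x y) r with h | h
    · exact Or.inr h
    · exact Or.inl (ENNReal.rpow_le_rpow h hp0)
  calc r ^ p * π (Prod.fst ⁻¹' {a})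
      ≤ r ^ p * (π {q : X × X | r ^ p ≤ edist q.1 q.2 ^ p} +
        π (Prod.snd ⁻¹' {x : X | edist a x < r})) := by
        gcongr
        exact (measure_mono hsub).trans (measure_union_le _ _)
    _ ≤ _ := by
        rw [mul_add]
        gcongr
        exact mul_meas_ge_le_lintegral (meas_edist_rpow2 p) _

end Basics


section WeakSide

set_option linter.unusedSectionVars false
set_option linter.style.haveILetI false

variable [MetricSpace X] [MeasurableSpace X] [BorelSpace X] [TopologicalSpace.SeparableSpace X]

lemma lip_bound (p : ℝ) (hp : 1 ≤ p) (z : X) {μ ν : Measure X} (hμ : μ ∈ Pp p z)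
    (hν : ν ∈ Pp p z) (g : X → ℝ) (L : ℝ≥0) (hg : LipschitzWith L g)
    (hgμ : Integrable g μ) (hgν : Integrable g ν) :
    |∫ x, g x ∂μ - ∫ x, g x ∂ν| ≤ L * Wp p μ ν := by
  haveI : SecondCountableTopology X := UniformSpace.secondCountable_of_separable X
  have hp0 : 0 < p := by linarith
  have key : (ENNReal.ofReal |∫ x, g x ∂μ - ∫ x, g x ∂ν| / L) ^ p ≤ wCost p μ ν := by
    refine le_wCost p hp fun π _ h => ?_
    have e1 : ∫ x, g x ∂μ = ∫ q, g q.1 ∂π := by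
      rw [← h.1, integral_map measurable_fst.aemeasurable]
      exact hg.continuous.aestronglyMeasurable
    have e2 : ∫ x, g x ∂ν = ∫ q, g q.2 ∂π := by
      rw [← h.2, integral_map measurable_snd.aemeasurable]
      exact hg.continuous.aestronglyMeasurable
    have i1 : Integrable (fun q : X × X => g q.1) π := by
      have := hgμ
      rw [← h.1] at this
      exact this.comp_measurable measurable_fst
    have i2 : Integrable (fun q : X × X => g q.2) π := by
      have := hgν
      rw [← h.2] at this
      exact this.comp_measurable measurable_snd
    have hJ : ∫⁻ q, edist q.1 q.2 ∂π ≤ (∫⁻ q, edist q.1 q.2 ^ p ∂π) ^ (1 / p) := by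
      have := eLpNorm'_le_eLpNorm'_of_exponent_le (μ := π) (f := fun q : X × X => dist q.1 q.2)
        (p := 1) (q := p) one_pos hp (by fun_prop)
      simp only [eLpNorm', ENNReal.rpow_one, Real.enorm_eq_ofReal dist_nonneg, ← edist_dist,
        div_one] at this
      exact this
    have hle : ENNReal.ofReal |∫ x, g x ∂μ - ∫ x, g x ∂ν| ≤ L * ∫⁻ q, edist q.1 q.2 ∂π := by
      rw [e1, e2, ← integral_sub i1 i2, ← Real.enorm_eq_ofReal_abs]
      refine (enorm_integral_le_lintegral_enorm _).trans ?_
      rw [← lintegral_const_mul _ (measurable_fst.edist measurable_snd)]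
      refine lintegral_mono fun q => ?_
      have := hg q.1 q.2
      rwa [edist_eq_enorm_sub] at this
    calc (ENNReal.ofReal |∫ x, g x ∂μ - ∫ x, g x ∂ν| / L) ^ p
        ≤ ((∫⁻ q, edist q.1 q.2 ^ p ∂π) ^ (1 / p)) ^ p := by
          refine ENNReal.rpow_le_rpow ?_ hp0.le
          refine (ENNReal.div_le_of_le_mul' hle).trans hJ
      _ = _ := by rw [← ENNReal.rpow_mul, one_div_mul_cancel hp0.ne', ENNReal.rpow_one]
  rw [wCost_eq_ofReal p hp z hμ hν, ENNReal.rpow_le_rpow_iff hp0] at key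
  by_cases hL : L = 0
  · subst hL
    by_cases h0 : |∫ x, g x ∂μ - ∫ x, g x ∂ν| = 0
    · simp [h0]
    · exfalso
      have h1 : ENNReal.ofReal |∫ x, g x ∂μ - ∫ x, g x ∂ν| ≠ 0 := by
        have : 0 < |∫ x, g x ∂μ - ∫ x, g x ∂ν| := lt_of_le_of_ne (abs_nonneg _) (Ne.symm h0)
        simpa using this
      rw [ENNReal.coe_zero, ENNReal.div_zero h1] at key
      exact ENNReal.ofReal_ne_top (top_le_iff.1 key)
  · rw [ENNReal.div_le_iff_le_mul (Or.inl (by simpa using hL)) (Or.inl (by simp)), mul_comm,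
      ← ENNReal.ofReal_coe_nnreal (p := L), ← ENNReal.ofReal_mul (by positivity)] at key
    exact (ENNReal.ofReal_le_ofReal_iff (mul_nonneg (by positivity) (Wp_nonneg _ _ _))).1 key

lemma weak_of_WpTendsto (p : ℝ) (hp : 1 ≤ p) (z : X) (μs : ℕ → ProbabilityMeasure X)
    (μ : ProbabilityMeasure X) (hμs : ∀ n, (μs n : Measure X) ∈ Pp p z)
    (hμ : (μ : Measure X) ∈ Pp p z)
    (h : Tendsto (fun n => Wp p (μs n : Measure X) μ) atTop (𝓝 0)) :
    Tendsto μs atTop (𝓝 μ) := by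
  rw [tendsto_iff_forall_lipschitz_integral_tendsto]
  rintro g ⟨C, hC⟩ ⟨L, hL⟩
  have hgint : ∀ ν : ProbabilityMeasure X, Integrable g (ν : Measure X) := by
    intro ν
    refine Integrable.of_bound hL.continuous.aestronglyMeasurable (C + |g z|)
      (Eventually.of_forall fun x => ?_)
    have h1 := hC x z
    rw [Real.dist_eq] at h1
    rw [Real.norm_eq_abs]
    have := abs_sub_abs_le_abs_sub (g x) (g z)
    linarith
  rw [tendsto_iff_dist_tendsto_zero]
  refine squeeze_zero (fun _ => dist_nonneg) (fun n => ?_) (by simpa using h.const_mul (L : ℝ))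
  rw [Real.dist_eq]
  exact lip_bound p hp z (hμs n) hμ g L hL (hgint _) (hgint _)

/-- A bounded continuous function from a bounded continuous nonnegative map. -/
def bcfNN (h : X → ℝ≥0) (hc : Continuous h) (c : ℝ≥0) (hb : ∀ x, h x ≤ c) :
    BoundedContinuousFunction X ℝ≥0 :=
  ⟨⟨h, hc⟩, ⟨c, fun x y => by
    rw [NNReal.dist_eq, abs_le]
    have h1 : (h x : ℝ) ≤ c := hb x
    have h2 : (h y : ℝ) ≤ c := hb y
    have h3 := (h x).coe_nonneg
    have h4 := (h y).coe_nonneg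
    constructor
    · change -(c : ℝ) ≤ (h x : ℝ) - h y
      linarith
    · change (h x : ℝ) - h y ≤ c
      linarith⟩⟩

lemma isClosed_mom_le (p : ℝ) (hp : 1 ≤ p) (z : X) (c : ℝ≥0∞) :
    IsClosed {μ : ProbabilityMeasure X | mom p z (μ : Measure X) ≤ c} := by
  have hp0 : 0 ≤ p := by linarith
  let F : ℕ → BoundedContinuousFunction X ℝ≥0 := fun k =>
    bcfNN (fun x => min (nndist z x ^ p) k)
      (by
        have h1 : Continuous fun x : X => nndist z x := continuous_const.nndist continuous_id
        have h2 : Continuous fun x : X => nndist z x ^ p := by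
          have := (NNReal.continuous_rpow_const hp0).comp h1
          exact this
        exact h2.min continuous_const) k
      (fun x => min_le_right _ _)
  have hF : ∀ k x, ((F k x : ℝ≥0) : ℝ≥0∞) = min (edist z x ^ p) k := by
    intro k x
    change ((min (nndist z x ^ p) (k : ℝ≥0) : ℝ≥0) : ℝ≥0∞) = _
    rw [ENNReal.coe_min, edist_nndist, ENNReal.coe_rpow_of_nonneg _ hp0]
    simp
  have hsup : ∀ μ : ProbabilityMeasure X,
      mom p z (μ : Measure X) = ⨆ k, ∫⁻ x, F k x ∂(μ : Measure X) := by
    intro μ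
    rw [← lintegral_iSup]
    · unfold mom
      refine lintegral_congr fun x => ?_
      simp only [hF]
      apply le_antisymm
      · have hx : edist z x ^ p ≠ ⊤ := ENNReal.rpow_ne_top_of_nonneg hp0 (edist_ne_top _ _)
        obtain ⟨k, hk⟩ := ENNReal.exists_nat_gt hx
        refine le_iSup_of_le k ?_
        rw [min_eq_left hk.le]
      · exact iSup_le fun k => min_le_left _ _
    · intro k
      exact (F k).continuous.measurable.coe_nnreal_ennreal
    · intro k l hkl x
      simp only [hF]
      gcongr
  have : {μ : ProbabilityMeasure X | mom p z (μ : Measure X) ≤ c} =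
      ⋂ k, {μ : ProbabilityMeasure X | ∫⁻ x, F k x ∂(μ : Measure X) ≤ c} := by
    ext μ
    simp [hsup μ]
  rw [this]
  refine isClosed_iInter fun k => isClosed_le ?_ continuous_const
  rw [continuous_iff_continuousAt]
  intro μ
  exact (ProbabilityMeasure.tendsto_iff_forall_lintegral_tendsto.1 tendsto_id) (F k)

lemma isCompact_mom_le [ProperSpace X] (p : ℝ) (hp : 1 ≤ p) (z : X) (c : ℝ≥0) :
    IsCompact {μ : ProbabilityMeasure X | mom p z (μ : Measure X) ≤ c} := by
  have hp0 : 0 < p := by linarith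
  rw [← (isClosed_mom_le p hp z c).closure_eq]
  apply isCompact_closure_of_isTightMeasureSet
  rw [isTightMeasureSet_iff_exists_isCompact_measure_compl_le]
  intro ε hε
  have h0 : Tendsto (fun r : ℕ => (c : ℝ≥0∞) / ((r : ℝ≥0∞))) atTop (𝓝 0) := by
    have := ENNReal.Tendsto.const_div (a := (c : ℝ≥0∞)) ENNReal.tendsto_nat_nhds_top
      (Or.inr ENNReal.coe_ne_top)
    simpa using this
  obtain ⟨r, hr⟩ := ((h0.eventually (gt_mem_nhds hε)).and (eventually_ge_atTop 1)).exists
  refine ⟨closedBall z r, isCompact_closedBall z r, ?_⟩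
  rintro _ ⟨μ, hμ, rfl⟩
  have hr1 : (1 : ℝ≥0∞) ≤ r := by exact_mod_cast hr.2
  have hsub : (closedBall z (r : ℝ))ᶜ ⊆ {x | (r : ℝ≥0∞) ≤ edist z x ^ p} := by
    intro x hx
    simp only [mem_compl_iff, mem_closedBall, not_le] at hx
    have h1 : (r : ℝ≥0∞) ≤ edist z x := by
      rw [edist_dist, dist_comm, ← ENNReal.ofReal_natCast]
      exact ENNReal.ofReal_le_ofReal hx.le
    refine h1.trans ?_
    have := ENNReal.rpow_le_rpow_of_exponent_le (hr1.trans h1) hp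
    rwa [ENNReal.rpow_one] at this
  refine (measure_mono hsub).trans ?_
  refine (meas_ge_le_lintegral_div (meas_edist_rpow p z).aemeasurable (by positivity)
    (by simp)).trans ?_
  refine le_trans ?_ hr.1.le
  gcongr
  exact hμ

/-- The Markov operator on probability measures. -/
def PM (κ : ProbabilityTheory.Kernel X X) [ProbabilityTheory.IsMarkovKernel κ]
    (μ : ProbabilityMeasure X) : ProbabilityMeasure X :=
  ⟨(μ : Measure X).bind κ, inferInstance⟩

/-- The kernel as a map into probability measures. -/
def kPM (κ : ProbabilityTheory.Kernel X X) [ProbabilityTheory.IsMarkovKernel κ]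
    (x : X) : ProbabilityMeasure X := ⟨κ x, inferInstance⟩

lemma PM_coe_iter (κ : ProbabilityTheory.Kernel X X) [ProbabilityTheory.IsMarkovKernel κ]
    (μ : ProbabilityMeasure X) (k : ℕ) :
    (((PM κ)^[k] μ : ProbabilityMeasure X) : Measure X) =
      (fun μ : Measure X => μ.bind κ)^[k] (μ : Measure X) := by
  induction k with
  | zero => rfl
  | succ k ih => rw [Function.iterate_succ_apply', Function.iterate_succ_apply', ← ih]; rfl

lemma lintegral_PM (κ : ProbabilityTheory.Kernel X X) [ProbabilityTheory.IsMarkovKernel κ]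
    (μ : ProbabilityMeasure X) {g : X → ℝ≥0∞} (hg : Measurable g) :
    ∫⁻ x, g x ∂(PM κ μ : Measure X) = ∫⁻ x, ∫⁻ y, g y ∂(κ x) ∂(μ : Measure X) :=
  Measure.lintegral_bind κ.measurable.aemeasurable hg.aemeasurable

lemma PM_continuous (κ : ProbabilityTheory.Kernel X X) [ProbabilityTheory.IsMarkovKernel κ]
    (hκ : Continuous (kPM κ)) :
    Continuous (PM κ) := by
  refine continuous_iff_continuousAt.2 fun μ => ?_
  unfold ContinuousAt
  rw [ProbabilityMeasure.tendsto_iff_forall_lintegral_tendsto]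
  intro g
  have hgm : Measurable (fun x => (g x : ℝ≥0∞)) := g.continuous.measurable.coe_nnreal_ennreal
  simp_rw [lintegral_PM κ _ hgm]
  have hb : ∀ x, ∫⁻ y, g y ∂(κ x) ≤ (nndist g 0 : ℝ≥0) := by
    intro x
    calc ∫⁻ y, g y ∂(κ x) ≤ ∫⁻ _, (nndist g 0 : ℝ≥0) ∂(κ x) := by
          refine lintegral_mono fun y => ?_
          exact ENNReal.coe_le_coe.2 (BoundedContinuousFunction.NNReal.upper_bound g y)
      _ = _ := by simp
  have hc : Continuous fun x => ∫⁻ y, g y ∂(κ x) := by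
    rw [continuous_iff_continuousAt]
    intro x
    exact (ProbabilityMeasure.tendsto_iff_forall_lintegral_tendsto.1 (hκ.tendsto x)) g
  have hfin : ∀ x, ∫⁻ y, g y ∂(κ x) ≠ ⊤ := fun x => ne_top_of_le_ne_top (by simp) (hb x)
  have hc' : Continuous fun x => (∫⁻ y, g y ∂(κ x)).toNNReal := by
    rw [continuous_iff_continuousAt]
    intro x
    exact (ENNReal.tendsto_toNNReal (hfin x)).comp (hc.tendsto x)
  let G : BoundedContinuousFunction X ℝ≥0 :=
    bcfNN (fun x => (∫⁻ y, g y ∂(κ x)).toNNReal) hc'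
      (nndist g 0) (fun x => by
        have := ENNReal.toNNReal_mono ENNReal.coe_ne_top (hb x)
        rwa [ENNReal.toNNReal_coe] at this)
  have hG : ∀ x, ((G x : ℝ≥0) : ℝ≥0∞) = ∫⁻ y, g y ∂(κ x) := fun x => ENNReal.coe_toNNReal (hfin x)
  have := (ProbabilityMeasure.tendsto_iff_forall_lintegral_tendsto.1
    (tendsto_id (α := ProbabilityMeasure X) (x := 𝓝 μ))) G
  simpa only [hG, id] using this

/-- In a compact positively invariant set, the points with arbitrarily long backward orbits have
full left solutions. -/
lemma exists_left_solution {Y : Type*} [TopologicalSpace Y] [T2Space Y] (g : Y → Y)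
    (hg : Continuous g) (N : Set Y) (hN : IsCompact N) (hinv : ∀ y ∈ N, g y ∈ N) (x : Y)
    (hx : ∀ j, x ∈ g^[j] '' N) : FullLeftSolution g N x := by
  have hcpt : ∀ j, IsCompact (g^[j] '' N) := fun j => hN.image (hg.iterate j)
  have hmono : ∀ j, g^[j + 1] '' N ⊆ g^[j] '' N := by
    rintro j _ ⟨y, hy, rfl⟩
    exact ⟨g y, hinv y hy, (Function.iterate_succ_apply g j y).symm⟩
  have step : ∀ x : {x : Y // ∀ j, x ∈ g^[j] '' N}, ∃ y : {x : Y // ∀ j, x ∈ g^[j] '' N},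
      g y.1 = x.1 := by
    rintro ⟨x, hx⟩
    have := IsCompact.nonempty_iInter_of_sequence_nonempty_isCompact_isClosed
      (fun j => g^[j] '' N ∩ g ⁻¹' {x}) (fun j => inter_subset_inter_left _ (hmono j)) ?_ ?_ ?_
    · obtain ⟨y, hy⟩ := this
      rw [mem_iInter] at hy
      exact ⟨⟨y, fun j => (hy j).1⟩, (hy 0).2⟩
    · intro j
      obtain ⟨y, hy, hyx⟩ := hx (j + 1)
      rw [Function.iterate_succ_apply'] at hyx
      exact ⟨g^[j] y, ⟨y, hy, rfl⟩, hyx⟩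
    · exact (hcpt 0).inter_right (isClosed_singleton.preimage hg)
    · intro j
      exact (hcpt j).isClosed.inter (isClosed_singleton.preimage hg)
  choose s hs using step
  refine ⟨fun k => (s^[k] ⟨x, hx⟩).1, rfl, fun k => ?_, fun k => ?_⟩
  · change g (s^[k + 1] ⟨x, hx⟩).1 = (s^[k] ⟨x, hx⟩).1
    rw [Function.iterate_succ_apply']
    exact hs _
  · obtain ⟨y, hy, h⟩ := (s^[k] ⟨x, hx⟩).2 0
    change (s^[k] ⟨x, hx⟩).1 ∈ N
    rw [← h]
    exact hy

end WeakSide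


section FixedPoint

set_option linter.unusedSectionVars false
set_option linter.style.haveILetI false

variable [MetricSpace X] [MeasurableSpace X] [BorelSpace X] [TopologicalSpace.SeparableSpace X]

/-- Cesàro average of probability measures. -/
def avgPM (u : ℕ → ProbabilityMeasure X) (m : ℕ) : ProbabilityMeasure X :=
  ⟨((m : ℝ≥0∞) + 1)⁻¹ • ∑ i ∈ Finset.range (m + 1), (u i : Measure X), by
    constructor
    simp only [Measure.smul_apply, Measure.finsetSum_apply, measure_univ, smul_eq_mul,
      Finset.sum_const, Finset.card_range, nsmul_eq_mul, mul_one, Nat.cast_add, Nat.cast_one]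
    exact ENNReal.inv_mul_cancel (by simp) (by finiteness)⟩

lemma avgPM_lintegral (u : ℕ → ProbabilityMeasure X) (m : ℕ) (g : X → ℝ≥0∞) :
    ∫⁻ x, g x ∂(avgPM u m : Measure X) =
      ((m : ℝ≥0∞) + 1)⁻¹ * ∑ i ∈ Finset.range (m + 1), ∫⁻ x, g x ∂(u i : Measure X) := by
  change ∫⁻ x, g x ∂(((m : ℝ≥0∞) + 1)⁻¹ • ∑ i ∈ Finset.range (m + 1), (u i : Measure X)) = _
  rw [lintegral_smul_measure, lintegral_finsetSum_measure, smul_eq_mul]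

lemma avgPM_integral (u : ℕ → ProbabilityMeasure X) (m : ℕ) (g : BoundedContinuousFunction X ℝ) :
    ∫ x, g x ∂(avgPM u m : Measure X) =
      ((m : ℝ) + 1)⁻¹ * ∑ i ∈ Finset.range (m + 1), ∫ x, g x ∂(u i : Measure X) := by
  change ∫ x, g x ∂(((m : ℝ≥0∞) + 1)⁻¹ • ∑ i ∈ Finset.range (m + 1), (u i : Measure X)) = _
  rw [integral_smul_measure, integral_finsetSum_measure]
  · rw [smul_eq_mul, ENNReal.toReal_inv]
    congr 2
  · intro i _
    exact g.integrable _

lemma PM_avgPM (κ : ProbabilityTheory.Kernel X X) [ProbabilityTheory.IsMarkovKernel κ]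
    (u : ℕ → ProbabilityMeasure X) (m : ℕ) :
    PM κ (avgPM u m) = avgPM (fun i => PM κ (u i)) m := by
  apply ProbabilityMeasure.toMeasure_injective
  refine Measure.ext fun s hs => ?_
  rw [← lintegral_indicator_one hs, ← lintegral_indicator_one hs]
  have hm : Measurable (s.indicator (1 : X → ℝ≥0∞)) := measurable_one.indicator hs
  rw [lintegral_PM κ _ hm, avgPM_lintegral, avgPM_lintegral]
  simp_rw [lintegral_PM κ _ hm]

lemma PM_iter_avgPM (κ : ProbabilityTheory.Kernel X X) [ProbabilityTheory.IsMarkovKernel κ]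
    (u : ℕ → ProbabilityMeasure X) (m j : ℕ) :
    (PM κ)^[j] (avgPM u m) = avgPM (fun i => (PM κ)^[j] (u i)) m := by
  induction j with
  | zero => rfl
  | succ j ih =>
    rw [Function.iterate_succ_apply', ih, PM_avgPM]
    simp_rw [Function.iterate_succ_apply']

lemma avgPM_mom_le (p : ℝ) (z : X) (u : ℕ → ProbabilityMeasure X) (m : ℕ) (c : ℝ≥0∞)
    (h : ∀ i, mom p z (u i : Measure X) ≤ c) : mom p z (avgPM u m : Measure X) ≤ c := by
  unfold mom
  rw [avgPM_lintegral]
  calc _ ≤ ((m : ℝ≥0∞) + 1)⁻¹ * ∑ i ∈ Finset.range (m + 1), c := by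
        gcongr with i _
        exact h i
    _ = c := by
        simp only [Finset.sum_const, Finset.card_range, nsmul_eq_mul, Nat.cast_add, Nat.cast_one]
        rw [← mul_assoc, ENNReal.inv_mul_cancel (by simp) (by finiteness), one_mul]

/-- Krylov–Bogoliubov. -/
lemma exists_fixed (κ : ProbabilityTheory.Kernel X X) [ProbabilityTheory.IsMarkovKernel κ]
    (hκ : Continuous (kPM κ)) (N : Set (ProbabilityMeasure X)) (hN : IsCompact N)
    (μ : ProbabilityMeasure X)
    (hav : ∀ m, avgPM (fun i => (PM κ)^[i] μ) m ∈ N) : ∃ ν ∈ N, PM κ ν = ν := by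
  obtain ⟨ν, hν, φ, hφ, hlim⟩ := hN.tendsto_subseq hav
  refine ⟨ν, hν, ?_⟩
  have h1 := ((PM_continuous κ hκ).tendsto ν).comp hlim
  have h2 : Tendsto (PM κ ∘ (fun m => avgPM (fun i => (PM κ)^[i] μ) m) ∘ φ) atTop (𝓝 ν) := by
    rw [ProbabilityMeasure.tendsto_iff_forall_integral_tendsto] at hlim ⊢
    intro g
    have hg := hlim g
    set a : ℕ → ℝ := fun i => ∫ x, g x ∂((PM κ)^[i] μ : Measure X) with ha
    have hab : ∀ i, |a i| ≤ ‖g‖ := by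
      intro i
      have := norm_integral_le_of_norm_le_const (μ := ((PM κ)^[i] μ : Measure X))
        (Eventually.of_forall g.norm_coe_le_norm)
      simpa using this
    have hdiff : ∀ m, ∫ x, g x ∂(PM κ (avgPM (fun i => (PM κ)^[i] μ) m) : Measure X) =
        ∫ x, g x ∂(avgPM (fun i => (PM κ)^[i] μ) m : Measure X) +
          ((m : ℝ) + 1)⁻¹ * (a (m + 1) - a 0) := by
      intro m
      rw [PM_avgPM, avgPM_integral, avgPM_integral, ← mul_add]
      congr 1
      simp_rw [← Function.iterate_succ_apply' (PM κ)]
      have e1 := Finset.sum_range_succ a (m + 1)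
      have e2 := Finset.sum_range_succ' a (m + 1)
      change ∑ i ∈ Finset.range (m + 1), a (i + 1) = ∑ i ∈ Finset.range (m + 1), a i + _
      linarith
    have h0 : Tendsto (fun m : ℕ => ((m : ℝ) + 1)⁻¹ * (a (m + 1) - a 0)) atTop (𝓝 0) := by
      refine squeeze_zero_norm (a := fun m : ℕ => ((m : ℝ) + 1)⁻¹ * (2 * ‖g‖)) (fun m => ?_) ?_
      · rw [norm_mul, Real.norm_of_nonneg (by positivity : (0 : ℝ) ≤ ((m : ℝ) + 1)⁻¹)]
        gcongr
        rw [Real.norm_eq_abs]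
        have := abs_sub (a (m + 1)) (a 0)
        linarith [hab (m + 1), hab 0]
      · have := (tendsto_one_div_add_atTop_nhds_zero_nat (𝕜 := ℝ)).mul_const (2 * ‖g‖)
        simpa using this
    have := hg.add (h0.comp hφ.tendsto_atTop)
    rw [add_zero] at this
    refine this.congr fun i => ?_
    exact (hdiff (φ i)).symm
  exact tendsto_nhds_unique h1 h2

end FixedPoint


section PartTwo

set_option linter.unusedSectionVars false
set_option linter.style.haveILetI false

variable [MetricSpace X] [MeasurableSpace X] [BorelSpace X] [TopologicalSpace.SeparableSpace X]

lemma contr_iter (p : ℝ) (x₀ : X) (κ : ProbabilityTheory.Kernel X X)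
    [ProbabilityTheory.IsMarkovKernel κ] (k : ℕ) (C : ℝ≥0)
    (hC : ∀ μ : ProbabilityMeasure X, mom p x₀ ((PM κ)^[k] μ : Measure X) ≤
      2⁻¹ * mom p x₀ (μ : Measure X) + C) (μ : ProbabilityMeasure X) (j : ℕ) :
    mom p x₀ ((PM κ)^[k * j] μ : Measure X) ≤ 2 * C + 2⁻¹ ^ j * mom p x₀ (μ : Measure X) := by
  induction j with
  | zero => simp
  | succ j ih =>
    rw [Nat.mul_succ, Nat.add_comm, Function.iterate_add_apply]
    refine (hC _).trans ?_
    calc 2⁻¹ * mom p x₀ ((PM κ)^[k * j] μ : Measure X) + C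
        ≤ 2⁻¹ * (2 * C + 2⁻¹ ^ j * mom p x₀ (μ : Measure X)) + C := by gcongr
      _ = (2⁻¹ * 2) * C + C + 2⁻¹ ^ (j + 1) * mom p x₀ (μ : Measure X) := by ring
      _ = _ := by
        rw [ENNReal.inv_mul_cancel (by simp) (by simp)]
        ring

lemma growth_iter (p : ℝ) (x₀ : X) (κ : ProbabilityTheory.Kernel X X)
    [ProbabilityTheory.IsMarkovKernel κ] (G : ℝ≥0)
    (hG : ∀ μ : ProbabilityMeasure X, 1 + mom p x₀ (PM κ μ : Measure X) ≤
      G * (1 + mom p x₀ (μ : Measure X))) (μ : ProbabilityMeasure X) (j : ℕ) :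
    1 + mom p x₀ ((PM κ)^[j] μ : Measure X) ≤ G ^ j * (1 + mom p x₀ (μ : Measure X)) := by
  induction j with
  | zero => simp
  | succ j ih =>
    rw [Function.iterate_succ_apply']
    refine (hG _).trans ?_
    rw [pow_succ', mul_assoc]
    gcongr

lemma all_iter (p : ℝ) (x₀ : X) (κ : ProbabilityTheory.Kernel X X)
    [ProbabilityTheory.IsMarkovKernel κ] (k : ℕ) (hk : 0 < k) (C G : ℝ≥0) (hG1 : 1 ≤ G)
    (hC : ∀ μ : ProbabilityMeasure X, mom p x₀ ((PM κ)^[k] μ : Measure X) ≤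
      2⁻¹ * mom p x₀ (μ : Measure X) + C)
    (hG : ∀ μ : ProbabilityMeasure X, 1 + mom p x₀ (PM κ μ : Measure X) ≤
      G * (1 + mom p x₀ (μ : Measure X))) (μ : ProbabilityMeasure X) (j : ℕ) :
    mom p x₀ ((PM κ)^[j] μ : Measure X) ≤ 2 * C + G ^ k * (1 + mom p x₀ (μ : Measure X)) := by
  rw [← Nat.div_add_mod j k, Function.iterate_add_apply]
  refine (contr_iter p x₀ κ k C hC _ _).trans ?_
  refine add_le_add le_rfl ?_
  have h1 : ((2 : ℝ≥0∞)⁻¹) ^ (j / k) ≤ 1 := by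
    apply pow_le_one₀ (by simp)
    rw [ENNReal.inv_le_one]
    norm_num
  calc (2 : ℝ≥0∞)⁻¹ ^ (j / k) * mom p x₀ ((PM κ)^[j % k] μ : Measure X)
      ≤ 1 * (1 + mom p x₀ ((PM κ)^[j % k] μ : Measure X)) := by
        gcongr
        exact le_add_self
    _ ≤ G ^ (j % k) * (1 + mom p x₀ (μ : Measure X)) := by
        rw [one_mul]
        exact growth_iter p x₀ κ G hG μ _
    _ ≤ _ := by
        gcongr
        · exact_mod_cast hG1
        · exact (Nat.mod_lt _ hk).le

lemma backward_bound (p : ℝ) (x₀ : X) (κ : ProbabilityTheory.Kernel X X)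
    [ProbabilityTheory.IsMarkovKernel κ] (k : ℕ) (C : ℝ≥0)
    (hC : ∀ μ : ProbabilityMeasure X, mom p x₀ ((PM κ)^[k] μ : Measure X) ≤
      2⁻¹ * mom p x₀ (μ : Measure X) + C) (u : ℕ → ProbabilityMeasure X)
    (hu : ∀ i, PM κ (u (i + 1)) = u i) (R : ℝ≥0∞) (hR : R ≠ ⊤)
    (hb : ∀ i, mom p x₀ (u i : Measure X) ≤ R) :
    mom p x₀ (u 0 : Measure X) ≤ 2 * C := by
  have hit : ∀ i, (PM κ)^[i] (u i) = u 0 := by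
    intro i
    induction i with
    | zero => rfl
    | succ i ih => rw [Function.iterate_succ_apply, hu, ih]
  have hle : ∀ j, mom p x₀ (u 0 : Measure X) ≤ 2 * C + 2⁻¹ ^ j * R := by
    intro j
    rw [← hit (k * j)]
    refine (contr_iter p x₀ κ k C hC _ _).trans ?_
    gcongr
    exact hb _
  have hlim : Tendsto (fun j : ℕ => 2 * (C : ℝ≥0∞) + 2⁻¹ ^ j * R) atTop (𝓝 (2 * C + 0 * R)) := by
    refine tendsto_const_nhds.add (ENNReal.Tendsto.mul_const ?_ (Or.inr hR))
    apply ENNReal.tendsto_pow_atTop_nhds_zero_of_lt_one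
    rw [ENNReal.inv_lt_one]
    norm_num
  rw [zero_mul, add_zero] at hlim
  exact ge_of_tendsto' hlim hle

lemma prob_of_weakConv (μs : ℕ → ProbabilityMeasure X) (ν : Measure X)
    (h : WeakConv (fun k => (μs k : Measure X)) ν) : IsProbabilityMeasure ν := by
  have h1 := h 1
  simp only [BoundedContinuousFunction.coe_one, Pi.one_apply, integral_const, smul_eq_mul,
    mul_one, probReal_univ] at h1
  have h2 : ν.real univ = 1 := tendsto_nhds_unique h1 tendsto_const_nhds |>.symm ▸ rfl
  constructor
  rw [measureReal_def] at h2
  exact (ENNReal.toReal_eq_one_iff _).1 h2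

theorem part_two [ProperSpace X] (p : ℝ) (hp : 1 ≤ p) (x₀ : X) (κ : ProbabilityTheory.Kernel X X)
    [ProbabilityTheory.IsMarkovKernel κ] (hκ : Continuous (kPM κ))
    (P : Measure X → Measure X) (hP : P = fun μ => μ.bind κ)
    (k : ℕ) (hk : 0 < k) (C G : ℝ≥0) (hG1 : 1 ≤ G)
    (hC : ∀ μ : ProbabilityMeasure X, mom p x₀ ((PM κ)^[k] μ : Measure X) ≤
      2⁻¹ * mom p x₀ (μ : Measure X) + C)
    (hG : ∀ μ : ProbabilityMeasure X, 1 + mom p x₀ (PM κ μ : Measure X) ≤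
      G * (1 + mom p x₀ (μ : Measure X))) :
    ∃ Nn : Set (Measure X),
      Nn ⊆ Pp p x₀ ∧
      WpClosed p x₀ Nn ∧
      PosInvariant P Nn ∧
      (∃ δ : ℝ, 0 < δ ∧
        {μ : Measure X | μ ∈ Pp p x₀ ∧ ∃ ν ∈ maxInv P Nn, Wp p μ ν < δ} ⊆ Nn) ∧
      (maxInv P Nn).Nonempty ∧
      WeakSeqCompact (maxInv P Nn) ∧
      omegaWeakM P Nn ⊆ maxInv P Nn ∧
      (∀ σ : ℤ → Measure X, (∀ k, σ k ∈ Pp p x₀) →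
        (∀ k : ℤ, P (σ k) = σ (k + 1)) →
        (∃ R : ℝ, ∀ k : ℤ, Wp p (σ k) (Measure.dirac x₀) ≤ R) →
        σ 0 ∈ maxInv P Nn) ∧
      ∃ μ ∈ maxInv P Nn, P μ = μ := by
  have hall := all_iter p x₀ κ k hk C G hG1 hC hG
  have hPit : ∀ (μ : ProbabilityMeasure X) (j : ℕ), P^[j] (μ : Measure X) = ((PM κ)^[j] μ : ProbabilityMeasure X) := by
    intro μ j
    rw [PM_coe_iter, hP]
  have hP1 : ∀ (μ : ProbabilityMeasure X), P (μ : Measure X) = (PM κ μ : ProbabilityMeasure X) :=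
    fun μ => hPit μ 1
  -- the bound
  obtain ⟨C', hC'⟩ : ∃ C' : ℝ≥0, (C' : ℝ≥0∞) =
      2 * C + G ^ k * (1 + cp p * (2 * C + 1)) := by
    refine ⟨(2 * C + G ^ k * (1 + cp p * (2 * C + 1)) : ℝ≥0∞).toNNReal, ENNReal.coe_toNNReal ?_⟩
    have := cp_ne_top p hp
    finiteness
  let N' : Set (ProbabilityMeasure X) := {μ | ∀ j, mom p x₀ ((PM κ)^[j] μ : Measure X) ≤ C'}
  have hPc := PM_continuous κ hκ
  have hN'closed : IsClosed N' := by
    have : N' = ⋂ j, (PM κ)^[j] ⁻¹' {μ | mom p x₀ (μ : Measure X) ≤ C'} := by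
      ext μ
      simp [N']
    rw [this]
    exact isClosed_iInter fun j => (isClosed_mom_le p hp x₀ C').preimage (hPc.iterate j)
  have hN'cpt : IsCompact N' :=
    (isCompact_mom_le p hp x₀ C').of_isClosed_subset hN'closed (fun μ hμ => hμ 0)
  have hN'inv : ∀ μ ∈ N', PM κ μ ∈ N' := by
    intro μ hμ j
    rw [← Function.iterate_succ_apply]
    exact hμ (j + 1)
  have hN'of : ∀ μ : ProbabilityMeasure X, mom p x₀ (μ : Measure X) ≤ cp p * (2 * C + 1) →
      μ ∈ N' := by
    intro μ hμ j
    refine (hall μ j).trans ?_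
    rw [hC']
    gcongr
  have hN'of2 : ∀ μ : ProbabilityMeasure X, mom p x₀ (μ : Measure X) ≤ 2 * C →
      μ ∈ N' := by
    intro μ hμ
    refine hN'of μ (hμ.trans ?_)
    calc (2 * C : ℝ≥0∞) ≤ 1 * (2 * C + 1) := by rw [one_mul]; exact le_self_add
      _ ≤ _ := by gcongr; exact one_le_cp p hp
  let Nn : Set (Measure X) := (fun μ : ProbabilityMeasure X => (μ : Measure X)) '' N'
  have hNiff : ∀ μ : ProbabilityMeasure X, (μ : Measure X) ∈ Nn ↔ μ ∈ N' := by
    intro μ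
    constructor
    · rintro ⟨ν, hν, h⟩
      rwa [← ProbabilityMeasure.toMeasure_injective h]
    · intro h
      exact ⟨μ, h, rfl⟩
  have hNPp : Nn ⊆ Pp p x₀ := by
    rintro _ ⟨μ, hμ, rfl⟩
    rw [mem_Pp_iff p hp]
    exact ⟨inferInstance, (hμ 0).trans_lt ENNReal.coe_lt_top⟩
  have hlift : ∀ μ ∈ Pp p x₀, ∃ ν : ProbabilityMeasure X, (ν : Measure X) = μ :=
    fun μ hμ => ⟨⟨μ, hμ.1⟩, rfl⟩
  have hNinv : PosInvariant P Nn := by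
    rintro _ ⟨μ, hμ, rfl⟩
    change P (μ : Measure X) ∈ Nn
    rw [hP1, hNiff]
    exact hN'inv μ hμ
  let K' : Set (ProbabilityMeasure X) := ⋂ j, (PM κ)^[j] '' N'
  have hKclosed : IsClosed K' :=
    isClosed_iInter fun j => (hN'cpt.image (hPc.iterate j)).isClosed
  have hKN : K' ⊆ N' := by
    intro μ hμ
    obtain ⟨ν, hν, h⟩ := mem_iInter.1 hμ 0
    rw [← h]
    exact hν
  have hKcpt : IsCompact K' := hN'cpt.of_isClosed_subset hKclosed hKN
  have haplus : ∀ μ ∈ N', (μ : Measure X) ∈ aPlus P Nn := by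
    intro μ hμ
    refine ⟨(hNiff μ).2 hμ, fun j => ?_⟩
    rw [hPit, hNiff]
    intro i
    rw [← Function.iterate_add_apply]
    exact hμ (i + j)
  have hsol : ∀ μ : Measure X, FullLeftSolution P Nn μ ↔
      ∃ u : ℕ → ProbabilityMeasure X, (u 0 : Measure X) = μ ∧ (∀ i, PM κ (u (i + 1)) = u i) ∧
        ∀ i, u i ∈ N' := by
    intro μ
    constructor
    · rintro ⟨u, h0, h1, h2⟩
      choose v hv hvu using h2
      refine ⟨v, (hvu 0).trans h0, fun i => ?_, hv⟩
      apply ProbabilityMeasure.toMeasure_injective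
      have hvu' : ∀ k, (v k : Measure X) = u k := hvu
      change ((PM κ (v (i + 1)) : ProbabilityMeasure X) : Measure X) = (v i : Measure X)
      rw [← hP1, hvu', hvu']
      exact h1 i
    · rintro ⟨u, h0, h1, h2⟩
      refine ⟨fun i => u i, h0, fun i => ?_, fun i => (hNiff _).2 (h2 i)⟩
      rw [hP1, h1]
  have hKiff : ∀ μ : ProbabilityMeasure X, (μ : Measure X) ∈ maxInv P Nn ↔ μ ∈ K' := by
    intro μ
    constructor
    · rintro ⟨-, -, h⟩
      obtain ⟨u, h0, h1, h2⟩ := (hsol _).1 h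
      have h0' : u 0 = μ := ProbabilityMeasure.toMeasure_injective h0
      refine mem_iInter.2 fun j => ⟨u j, h2 j, ?_⟩
      rw [← h0']
      clear h2
      induction j with
      | zero => rfl
      | succ j ih => rw [Function.iterate_succ_apply, h1, ih]
    · intro h
      refine ⟨haplus μ (hKN h), (hNiff μ).2 (hKN h), ?_⟩
      obtain ⟨u, h0, h1, h2⟩ := exists_left_solution (PM κ) hPc N' hN'cpt hN'inv μ (mem_iInter.1 h)
      exact (hsol _).2 ⟨u, by rw [h0], h1, h2⟩
  have hKmom : ∀ μ ∈ maxInv P Nn, mom p x₀ μ ≤ 2 * C := by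
    rintro μ ⟨-, -, h⟩
    obtain ⟨u, h0, h1, h2⟩ := (hsol _).1 h
    rw [← h0]
    exact backward_bound p x₀ κ k C hC u h1 C' ENNReal.coe_ne_top (fun i => h2 i 0)
  have hKsub : ∀ μ ∈ maxInv P Nn, ∃ ν : ProbabilityMeasure X, ν ∈ K' ∧ (ν : Measure X) = μ := by
    rintro μ hμ
    obtain ⟨ν, hν⟩ := hlift μ (hNPp hμ.1.1)
    refine ⟨ν, ?_, hν⟩
    rw [← hKiff, hν]
    exact hμ
  have hfix : ∃ μ ∈ maxInv P Nn, P μ = μ := by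
    obtain ⟨d, hd⟩ := hlift (Measure.dirac x₀) (dirac_mem_Pp p hp x₀ x₀)
    obtain ⟨ν, hν, hfix⟩ := exists_fixed κ hκ N' hN'cpt d (by
      intro m j
      rw [PM_iter_avgPM]
      refine avgPM_mom_le p x₀ _ m _ fun i => ?_
      rw [← Function.iterate_add_apply]
      refine hN'of2 d ?_ (j + i)
      have : mom p x₀ (Measure.dirac x₀) = 0 := by
        simp [mom, lintegral_dirac, ENNReal.zero_rpow_of_pos (by linarith : 0 < p)]
      rw [hd, this]
      simp)
    refine ⟨ν, ?_, by rw [hP1, hfix]⟩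
    refine ⟨haplus ν hν, (hNiff ν).2 hν, (hsol _).2 ⟨fun _ => ν, rfl, fun _ => hfix, fun _ => hν⟩⟩
  refine ⟨Nn, hNPp, ⟨hNPp, ?_⟩, hNinv, ⟨1, one_pos, ?_⟩, hfix.imp fun _ h => h.1, ?_, ?_, ?_, hfix⟩
  · intro μs μ hμs hμ hlim
    choose v hv hvu using hμs
    obtain ⟨ν, rfl⟩ := hlift μ hμ
    rw [hNiff]
    refine hN'closed.mem_of_tendsto (weak_of_WpTendsto p hp x₀ v ν
      (fun n => hNPp ((hNiff _).2 (hv n))) hμ ?_) (Eventually.of_forall hv)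
    unfold WpTendsto at hlim
    simpa only [hvu] using hlim
  · rintro μ ⟨hμ, ν, hν, hW⟩
    obtain ⟨μ, rfl⟩ := hlift μ hμ
    rw [hNiff]
    apply hN'of
    refine (mom_le p hp x₀ _ ν).trans ?_
    gcongr
    · exact hKmom ν hν
    · have := wCost_le_of_Wp_le p hp x₀ hμ (hNPp hν.1.1) hW.le
      simpa using this
  · intro μs hμs
    choose v hv hvu using fun n => hKsub _ (hμs n)
    obtain ⟨ν, hν, φ, hφ, hlim⟩ := hKcpt.tendsto_subseq hv
    refine ⟨ν, (hKiff ν).2 hν, φ, hφ, ?_⟩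
    intro g
    have := (ProbabilityMeasure.tendsto_iff_forall_integral_tendsto.1 hlim) g
    simpa only [Function.comp, hvu] using this
  · rintro ν ⟨μs, m, hμs, hm, hlim⟩
    choose v hv hvu using hμs
    have hlim' : WeakConv (fun i => ((PM κ)^[m i] (v i) : Measure X)) ν := by
      have : (fun i => ((PM κ)^[m i] (v i) : Measure X)) = fun i => P^[m i] (μs i) := by
        funext i
        rw [← hPit, ← hvu i]
      rw [this]
      exact hlim
    haveI := prob_of_weakConv _ ν hlim'
    have hT : Tendsto (fun i => (PM κ)^[m i] (v i)) atTop
        (𝓝 (⟨ν, inferInstance⟩ : ProbabilityMeasure X)) :=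
      ProbabilityMeasure.tendsto_iff_forall_integral_tendsto.2 hlim'
    refine (hKiff ⟨ν, inferInstance⟩).2 (mem_iInter.2 fun j => ?_)
    refine (hN'cpt.image (hPc.iterate j)).isClosed.mem_of_tendsto hT ?_
    filter_upwards [hm.eventually_ge_atTop j] with i hi
    refine ⟨(PM κ)^[m i - j] (v i), ?_, ?_⟩
    · intro l
      rw [← Function.iterate_add_apply]
      exact hv i _
    · rw [← Function.iterate_add_apply, Nat.add_sub_cancel' hi]
  · rintro σ hσ hσP ⟨R, hR⟩
    choose v hv using fun i => hlift _ (hσ i)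
    have hvP : ∀ i, PM κ (v i) = v (i + 1) := by
      intro i
      apply ProbabilityMeasure.toMeasure_injective
      rw [← hP1, hv, hσP, hv]
    have hvb : ∀ i, mom p x₀ (v i : Measure X) ≤ ENNReal.ofReal R ^ p := by
      intro i
      rw [← wCost_dirac p hp]
      refine wCost_le_of_Wp_le p hp x₀ ?_ (dirac_mem_Pp p hp x₀ x₀) ?_
      · rw [hv]
        exact hσ i
      · rw [hv]
        exact hR i
    have hvN : ∀ i, v i ∈ N' := by
      intro i
      apply hN'of2
      have := backward_bound p x₀ κ k C hC (fun j : ℕ => v (i - j)) (fun j => by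
        rw [hvP]
        congr 1
        push_cast
        ring) (ENNReal.ofReal R ^ p)
        (ENNReal.rpow_ne_top_of_nonneg (by linarith) ENNReal.ofReal_ne_top) (fun j => hvb _)
      simpa using this
    rw [← hv 0]
    refine ⟨haplus _ (hvN 0), (hNiff _).2 (hvN 0), (hsol _).2 ⟨fun j : ℕ => v (-j), by simp,
      fun j => ?_, fun j => hvN _⟩⟩
    rw [hvP]
    congr 1
    push_cast
    ring

end PartTwo


section PartOne

set_option linter.unusedSectionVars false
set_option linter.style.haveILetI false

variable [MetricSpace X] [MeasurableSpace X] [BorelSpace X] [TopologicalSpace.SeparableSpace X]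

lemma exists_small {p : ℝ} (hp : 1 ≤ p) (K : ℝ≥0∞) (hK : K ≠ ⊤) {e : ℝ≥0∞} (he : e ≠ 0) :
    ∃ e' : ℝ≥0, 0 < e' ∧ K * (e' : ℝ≥0∞) ^ p ≤ e := by
  have h1 : Tendsto (fun x : ℝ≥0∞ => K * x ^ p) (𝓝 0) (𝓝 (K * 0 ^ p)) :=
    ENNReal.Tendsto.const_mul ((ENNReal.continuous_rpow_const).tendsto 0) (Or.inr hK)
  rw [ENNReal.zero_rpow_of_pos (by linarith), mul_zero] at h1
  have h2 : Tendsto (fun n : ℕ => ((((n : ℝ≥0) + 1)⁻¹ : ℝ≥0) : ℝ≥0∞)) atTop (𝓝 0) := by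
    rw [← ENNReal.coe_zero, ENNReal.tendsto_coe]
    simpa using tendsto_one_div_add_atTop_nhds_zero_nat (𝕜 := ℝ≥0)
  have h3 := (h1.comp h2).eventually (gt_mem_nhds (pos_iff_ne_zero.2 he))
  obtain ⟨n, hn⟩ := h3.exists
  exact ⟨((n : ℝ≥0) + 1)⁻¹, by positivity, hn.le⟩

lemma scale_mul {p : ℝ} (hp : 1 ≤ p) (c : ℝ≥0) {u : ℝ} (hu : 0 < u) :
    ENNReal.ofReal (c * u ^ (-p)) * ENNReal.ofReal u ^ p = c := by
  rw [ENNReal.ofReal_rpow_of_nonneg hu.le (by linarith), ← ENNReal.ofReal_mul (by positivity),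
    mul_assoc, ← Real.rpow_add hu]
  simp

lemma scale_le_one {p : ℝ} (hp : 1 ≤ p) {c : ℝ≥0} (hc : c ≤ 1) {u : ℝ} (hu : 1 ≤ u) :
    (c : ℝ) * u ^ (-p) ≤ 1 := by
  have h1 : u ^ (-p) ≤ 1 := Real.rpow_le_one_of_one_le_of_nonpos hu (by linarith)
  have h2 : (c : ℝ) ≤ 1 := by exact_mod_cast hc
  have h3 : 0 ≤ u ^ (-p) := by positivity
  calc (c : ℝ) * u ^ (-p) ≤ 1 * 1 := by gcongr
    _ = 1 := one_mul 1

lemma mom_dirac (p : ℝ) (z y : X) : mom p z (Measure.dirac y) = edist z y ^ p := by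
  unfold mom
  rw [lintegral_dirac]

/-- The growth weight. -/
def VV (x₀ x : X) : ℝ≥0∞ := 1 + edist x₀ x

lemma VV_eq (x₀ x : X) : VV x₀ x = ENNReal.ofReal (1 + dist x₀ x) := by
  unfold VV
  rw [ENNReal.ofReal_add (by norm_num) dist_nonneg, edist_dist]
  simp

lemma one_le_VV (x₀ x : X) : 1 ≤ VV x₀ x := le_self_add

lemma VV_ne_top (x₀ x : X) : VV x₀ x ≠ ⊤ := by
  rw [VV_eq]
  exact ENNReal.ofReal_ne_top

lemma edist_le_VV (x₀ x : X) : edist x₀ x ≤ VV x₀ x := le_add_self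

lemma VV_rpow_le {p : ℝ} (hp : 1 ≤ p) (x₀ x : X) :
    VV x₀ x ^ p ≤ cp p * (1 + edist x₀ x ^ p) := by
  have := add_rpow_le_cp p hp 1 (edist x₀ x)
  rwa [ENNReal.one_rpow] at this

lemma iter_map {f : X → X} (hf : Continuous f) (μ : Measure X) (k : ℕ) :
    (fun μ : Measure X => μ.map f)^[k] μ = μ.map f^[k] := by
  induction k generalizing μ with
  | zero => simp
  | succ k ih =>
    rw [Function.iterate_succ_apply, ih, Measure.map_map (hf.iterate k).measurable hf.measurable,
      Function.iterate_succ]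

lemma iter_map_mem {p : ℝ} {x₀ : X} {f : X → X} (hmap : ∀ μ ∈ Pp p x₀, μ.map f ∈ Pp p x₀)
    {μ : Measure X} (hμ : μ ∈ Pp p x₀) (k : ℕ) :
    (fun μ : Measure X => μ.map f)^[k] μ ∈ Pp p x₀ := by
  induction k with
  | zero => exact hμ
  | succ k ih =>
    rw [Function.iterate_succ_apply']
    exact hmap _ ih

lemma growth (p : ℝ) (hp : 1 ≤ p) (x₀ : X) (f : X → X) (hf : Continuous f)
    (hmap : ∀ μ ∈ Pp p x₀, μ.map f ∈ Pp p x₀)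
    (hcont : ∀ (μs : ℕ → Measure X) (μ : Measure X), (∀ n, μs n ∈ Pp p x₀) → μ ∈ Pp p x₀ →
      WpTendsto p μs μ → WpTendsto p (fun n => (μs n).map f) (μ.map f)) :
    ∃ C : ℝ≥0, ∀ y, VV x₀ (f y) ≤ C * VV x₀ y := by
  have hp0 : 0 ≤ p := by linarith
  have key : ∃ C : ℝ≥0, ∀ y, edist (f x₀) (f y) ≤ C * VV x₀ y := by
    by_contra hcon
    push Not at hcon
    choose y hy using fun j : ℕ => hcon ((j : ℝ≥0) + 1)
    let u : ℕ → ℝ := fun j => ((j : ℝ) + 1) * (1 + dist x₀ (y j))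
    have hu1 : ∀ j, 1 ≤ u j := by
      intro j
      have h1 : (1 : ℝ) ≤ (j : ℝ) + 1 := by simp
      have h2 : (1 : ℝ) ≤ 1 + dist x₀ (y j) := by simp
      calc (1 : ℝ) = 1 * 1 := by ring
        _ ≤ _ := by
          change (1 : ℝ) * 1 ≤ ((j : ℝ) + 1) * (1 + dist x₀ (y j))
          gcongr
    have hu : ∀ j, ENNReal.ofReal (u j) = (((j : ℝ≥0) + 1 : ℝ≥0) : ℝ≥0∞) * VV x₀ (y j) := by
      intro j
      rw [VV_eq, ENNReal.ofReal_mul (by positivity)]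
      congr 1
      rw [ENNReal.ofReal_add (by positivity) (by norm_num)]
      simp
    let t : ℕ → ℝ := fun j => ((1 : ℝ≥0) : ℝ) * u j ^ (-p)
    have ht0 : ∀ j, 0 ≤ t j := fun j => by
      have := hu1 j
      positivity
    have ht1 : ∀ j, t j ≤ 1 := fun j => scale_le_one hp le_rfl (hu1 j)
    have htu : ∀ j, ENNReal.ofReal (t j) * ENNReal.ofReal (u j) ^ p = 1 := fun j => by
      exact (scale_mul hp 1 (lt_of_lt_of_le one_pos (hu1 j))).trans ENNReal.coe_one
    let μs : ℕ → Measure X := fun j => mix (t j) (Measure.dirac (y j)) (Measure.dirac x₀)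
    have hμs : ∀ j, μs j ∈ Pp p x₀ := fun j =>
      mix_mem_Pp p hp x₀ (ht0 j) (ht1 j) (dirac_mem_Pp p hp _ _) (dirac_mem_Pp p hp _ _)
    have hzero : ∀ z : X, mom p z (Measure.dirac z) = 0 := by
      intro z
      rw [mom_dirac, edist_self, ENNReal.zero_rpow_of_pos (by linarith)]
    have hlim : WpTendsto p μs (Measure.dirac x₀) := by
      refine squeeze_zero (fun n => Wp_nonneg _ _ _) (fun n => ?_)
        (tendsto_one_div_add_atTop_nhds_zero_nat (𝕜 := ℝ))
      refine Wp_le_of_wCost_le p hp (by positivity) ?_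
      haveI := (hμs n).1
      rw [wCost_dirac p hp, mom_mix, hzero, mul_zero, add_zero, mom_dirac]
      have h1 : ENNReal.ofReal (1 / ((n : ℝ) + 1)) * ENNReal.ofReal (u n) = VV x₀ (y n) := by
        rw [VV_eq, ← ENNReal.ofReal_mul (by positivity)]
        congr 1
        simp only [u]
        field_simp
      calc ENNReal.ofReal (t n) * edist x₀ (y n) ^ p
          ≤ ENNReal.ofReal (t n) * (ENNReal.ofReal (1 / ((n : ℝ) + 1)) * ENNReal.ofReal (u n)) ^ p := by
            rw [h1]
            gcongr
            exact edist_le_VV _ _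
        _ = ENNReal.ofReal (1 / ((n : ℝ) + 1)) ^ p * (ENNReal.ofReal (t n) * ENNReal.ofReal (u n) ^ p) := by
            rw [ENNReal.mul_rpow_of_nonneg _ _ hp0]
            ring
        _ ≤ _ := by rw [htu, mul_one]
    have h2 := hcont μs _ hμs (dirac_mem_Pp p hp _ _) hlim
    obtain ⟨n, hn⟩ := (h2.eventually (gt_mem_nhds (one_pos))).exists
    have h3 := wCost_lt_of_Wp_lt p hp x₀ (hmap _ (hμs n)) (hmap _ (dirac_mem_Pp p hp _ _)) hn
    rw [Measure.map_dirac' hf.measurable] at h3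
    haveI := (hmap _ (hμs n)).1
    rw [wCost_dirac p hp, mix_map _ _ _ hf.measurable, mom_mix, Measure.map_dirac' hf.measurable,
      Measure.map_dirac' hf.measurable, hzero, mul_zero, add_zero, mom_dirac] at h3
    simp only [ENNReal.ofReal_one, ENNReal.one_rpow] at h3
    refine absurd h3 (not_lt.2 ?_)
    rw [← htu n, hu]
    gcongr
    exact (hy n).le
  obtain ⟨C, hC⟩ := key
  refine ⟨1 + nndist x₀ (f x₀) + C, fun y => ?_⟩
  have h1 : VV x₀ (f y) ≤ 1 + (edist x₀ (f x₀) + C * VV x₀ y) := by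
    unfold VV
    refine add_le_add le_rfl ((edist_triangle _ (f x₀) _).trans (add_le_add le_rfl (hC y)))
  refine h1.trans ?_
  push_cast
  rw [add_mul, ← add_assoc]
  gcongr
  calc (1 : ℝ≥0∞) + edist x₀ (f x₀) = (1 + edist x₀ (f x₀)) * 1 := by rw [mul_one]
    _ ≤ _ := by
      gcongr
      exact one_le_VV _ _

lemma growth_iterate {x₀ : X} {f : X → X} {C : ℝ≥0} (hC : ∀ y, VV x₀ (f y) ≤ C * VV x₀ y)
    (k : ℕ) (y : X) : VV x₀ (f^[k] y) ≤ (C ^ k : ℝ≥0) * VV x₀ y := by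
  induction k with
  | zero => simp
  | succ k ih =>
    rw [Function.iterate_succ_apply']
    refine (hC _).trans ?_
    rw [pow_succ', ENNReal.coe_mul, mul_assoc]
    gcongr

lemma attractor_bdd (p : ℝ) (hp : 1 ≤ p) (x₀ : X)
    (A : Set (Measure X)) (hA_sub : A ⊆ Pp p x₀) (hA_cpt : WpSeqCompact p A) :
    ∃ a : ℝ≥0, ∀ μ ∈ A, mom p x₀ μ ≤ a := by
  by_contra hcon
  push Not at hcon
  choose μs hμs hlt using fun j : ℕ => hcon (j : ℝ≥0)
  obtain ⟨μ, hμ, φ, hφ, hlim⟩ := hA_cpt μs hμs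
  have hfin : cp p * (mom p x₀ μ + 1) < ⊤ := by
    have h1 := cp_ne_top p hp
    have h2 := ((mem_Pp_iff p hp x₀ μ).1 (hA_sub hμ)).2.ne
    finiteness
  obtain ⟨N, hN⟩ := ENNReal.exists_nat_gt hfin.ne
  obtain ⟨n, hn, hnN⟩ := ((hlim.eventually (gt_mem_nhds one_pos)).and (eventually_ge_atTop N)).exists
  have h1 := wCost_lt_of_Wp_lt p hp x₀ (hA_sub (hμs (φ n))) (hA_sub hμ) hn
  simp only [ENNReal.ofReal_one, ENNReal.one_rpow] at h1
  have h2 := mom_le p hp x₀ (μs (φ n)) μ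
  have h3 : ((φ n : ℝ≥0) : ℝ≥0∞) < N := by
    refine (hlt (φ n)).trans_le (h2.trans (le_trans ?_ hN.le))
    gcongr
  have h4 : φ n < N := by exact_mod_cast h3
  exact absurd (hnN.trans (hφ.id_le n)) (not_le.2 h4)

lemma contraction (p : ℝ) (hp : 1 ≤ p) (x₀ : X) (f : X → X) (hf : Continuous f)
    (hmap : ∀ μ ∈ Pp p x₀, μ.map f ∈ Pp p x₀)
    (A : Set (Measure X)) (hA_sub : A ⊆ Pp p x₀) (hA_cpt : WpSeqCompact p A)
    (hA_attr : ∀ Bs : Set (Measure X), Bs ⊆ Pp p x₀ → WpBounded p x₀ Bs →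
      ∀ e : ℝ, 0 < e → ∃ n₀ : ℕ, ∀ n, n₀ ≤ n → ∀ μ ∈ Bs,
        ∃ ν ∈ A, Wp p ((fun μ : Measure X => μ.map f)^[n] μ) ν < e)
    (l : ℝ≥0) (hl : 0 < l) :
    ∃ k : ℕ, 0 < k ∧ ∃ b : ℝ≥0, ∀ y, edist x₀ (f^[k] y) ^ p ≤ b + l * edist x₀ y ^ p := by
  have hp0 : 0 ≤ p := by linarith
  obtain ⟨a, ha⟩ := attractor_bdd p hp x₀ A hA_sub hA_cpt
  obtain ⟨b, hb⟩ : ∃ b : ℝ≥0, (b : ℝ≥0∞) = cp p * (a + 1) := by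
    refine ⟨(cp p * (a + 1)).toNNReal, ENNReal.coe_toNNReal ?_⟩
    have h1 := cp_ne_top p hp
    finiteness
  let r : ℝ≥0 := max 1 (b / l)
  have hr1 : 1 ≤ r := le_max_left _ _
  have hr0 : 0 < r := lt_of_lt_of_le one_pos hr1
  have hrp : (b : ℝ≥0∞) ≤ l * (r : ℝ≥0∞) ^ p := by
    have h1 : b ≤ l * r := by
      have : b / l ≤ r := le_max_right _ _
      rw [div_le_iff₀ hl] at this
      rwa [mul_comm]
    calc (b : ℝ≥0∞) ≤ l * r := by exact_mod_cast h1
      _ ≤ _ := by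
        gcongr
        calc (r : ℝ≥0∞) = (r : ℝ≥0∞) ^ (1 : ℝ) := by simp
          _ ≤ _ := ENNReal.rpow_le_rpow_of_exponent_le (by exact_mod_cast hr1) hp
  let Bs : Set (Measure X) := {μ | μ ∈ Pp p x₀ ∧ mom p x₀ μ ≤ (r : ℝ≥0∞) ^ p}
  obtain ⟨n₀, hn₀⟩ := hA_attr Bs (fun μ hμ => hμ.1) ⟨r, fun μ hμ => by
    haveI := hμ.1.1
    refine Wp_le_of_wCost_le p hp (by positivity) ?_
    rw [wCost_dirac p hp]
    simpa using hμ.2⟩ 1 one_pos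
  refine ⟨n₀ + 1, Nat.succ_pos _, b, ?_⟩
  set k := n₀ + 1 with hk
  have hmeas := (hf.iterate k).measurable
  have hB : ∀ μ ∈ Bs, mom p x₀ (μ.map f^[k]) ≤ b := by
    intro μ hμ
    obtain ⟨ν, hν, hW⟩ := hn₀ k (Nat.le_succ _) μ hμ
    have h1 := wCost_lt_of_Wp_lt p hp x₀ (iter_map_mem hmap hμ.1 k) (hA_sub hν) hW
    rw [iter_map hf] at h1
    simp only [ENNReal.ofReal_one, ENNReal.one_rpow] at h1
    refine (mom_le p hp x₀ _ ν).trans ?_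
    rw [hb]
    gcongr
    exact ha ν hν
  intro y
  by_cases hy : dist x₀ y ≤ r
  · have h1 := hB (Measure.dirac y) ⟨dirac_mem_Pp p hp _ _, by
      rw [mom_dirac, edist_dist]
      gcongr
      exact ENNReal.ofReal_le_of_le_toReal (by simpa using hy)⟩
    rw [Measure.map_dirac' hmeas, mom_dirac] at h1
    exact h1.trans le_self_add
  · push Not at hy
    have hy0 : 0 < dist x₀ y := lt_of_le_of_lt (by positivity) hy
    let c : ℝ≥0 := r ^ p
    have hcE : (c : ℝ≥0∞) = (r : ℝ≥0∞) ^ p := ENNReal.coe_rpow_of_nonneg _ hp0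
    let t : ℝ := c * dist x₀ y ^ (-p)
    have htu : ENNReal.ofReal t * edist x₀ y ^ p = (r : ℝ≥0∞) ^ p := by
      rw [edist_dist, ← hcE]
      exact scale_mul hp c hy0
    have ht0 : 0 ≤ t := by positivity
    have ht1 : t ≤ 1 := by
      have : t = (r : ℝ) ^ p * dist x₀ y ^ (-p) := by simp [t, c]
      rw [this, Real.rpow_neg hy0.le, ← div_eq_mul_inv, div_le_one (by positivity)]
      exact Real.rpow_le_rpow (by positivity) hy.le hp0
    have hz : mom p x₀ (Measure.dirac x₀) = 0 := by
      rw [mom_dirac, edist_self, ENNReal.zero_rpow_of_pos (by linarith)]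
    have h1 := hB (mix t (Measure.dirac y) (Measure.dirac x₀))
      ⟨mix_mem_Pp p hp x₀ ht0 ht1 (dirac_mem_Pp p hp _ _) (dirac_mem_Pp p hp _ _), by
        rw [mom_mix, hz, mul_zero, add_zero, mom_dirac, htu]⟩
    rw [mix_map _ _ _ hmeas, mom_mix, Measure.map_dirac' hmeas, mom_dirac] at h1
    have h2 : ENNReal.ofReal t * edist x₀ (f^[k] y) ^ p ≤ b := le_self_add.trans h1
    refine le_trans ?_ le_add_self
    have hrp0 : (r : ℝ≥0∞) ^ p ≠ 0 := by
      rw [← hcE]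
      have : 0 < c := NNReal.rpow_pos hr0
      exact_mod_cast this.ne'
    have hrpt : (r : ℝ≥0∞) ^ p ≠ ⊤ := by rw [← hcE]; simp
    rw [← ENNReal.mul_le_mul_iff_right hrp0 hrpt]
    calc (r : ℝ≥0∞) ^ p * edist x₀ (f^[k] y) ^ p
        = edist x₀ y ^ p * (ENNReal.ofReal t * edist x₀ (f^[k] y) ^ p) := by rw [← htu]; ring
      _ ≤ edist x₀ y ^ p * (l * (r : ℝ≥0∞) ^ p) := by
        exact mul_le_mul_right (h2.trans hrp) _
      _ = _ := by ring

lemma tail_small (p : ℝ) (hp : 1 ≤ p) (x₀ : X) (α : Measure X) (hα : α ∈ Pp p x₀)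
    {τ : ℝ≥0∞} (hτ : τ ≠ 0) :
    ∃ R : ℝ≥0, ∀ r : ℝ≥0∞, R ≤ r → r ^ p * α {x | r ≤ edist x₀ x} ≤ τ := by
  have hp0 : 0 ≤ p := by linarith
  rw [mem_Pp_iff p hp] at hα
  haveI := hα.1
  have hms : ∀ r : ℝ≥0∞, MeasurableSet {x : X | r ≤ edist x₀ x} := fun r =>
    measurableSet_le measurable_const measurable_edist_right
  let s : ℕ → Set X := fun n => {x | (n : ℝ≥0∞) ≤ edist x₀ x}
  have h1 : Tendsto (α ∘ s) atTop (𝓝 0) := by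
    have hi : ⋂ n, s n = ∅ := by
      ext x
      simp only [s, mem_iInter, Set.mem_ofPred_eq, mem_empty_iff_false, iff_false, not_forall, not_le]
      exact ENNReal.exists_nat_gt (edist_ne_top _ _)
    have := tendsto_measure_iInter_atTop (μ := α) (s := s) (fun n => (hms _).nullMeasurableSet)
      (fun m n hmn x hx => by
        refine le_trans ?_ (show (n : ℝ≥0∞) ≤ edist x₀ x from hx)
        exact_mod_cast hmn) ⟨0, measure_ne_top _ _⟩
    rwa [hi, measure_empty] at this
  have h2 := tendsto_setLIntegral_zero (f := fun x => edist x₀ x ^ p) hα.2.ne h1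
  obtain ⟨n, hn⟩ := (h2.eventually (gt_mem_nhds (pos_iff_ne_zero.2 hτ))).exists
  refine ⟨n, fun r hr => ?_⟩
  calc r ^ p * α {x | r ≤ edist x₀ x} = ∫⁻ x in {x | r ≤ edist x₀ x}, r ^ p ∂α := by simp
    _ ≤ ∫⁻ x in {x | r ≤ edist x₀ x}, edist x₀ x ^ p ∂α := by
      refine setLIntegral_mono' (hms r) fun x hx => ?_
      have : r ≤ edist x₀ x := hx
      gcongr
    _ ≤ ∫⁻ x in s n, edist x₀ x ^ p ∂α := by
      refine lintegral_mono_set fun x hx => ?_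
      have h3 : r ≤ edist x₀ x := hx
      exact le_trans (by simpa using hr) h3
    _ ≤ τ := hn.le

end PartOne

section PartOneB

set_option linter.unusedSectionVars false
set_option linter.style.haveILetI false

variable [MetricSpace X] [MeasurableSpace X] [BorelSpace X] [TopologicalSpace.SeparableSpace X]

lemma separated_cost (p : ℝ) (hp : 1 ≤ p) (x₀ : X) (α : Measure X) [IsProbabilityMeasure α]
    {t : ℝ} (ht0 : 0 ≤ t) (a b : X) (r : ℝ≥0∞)
    (ha : 2 * r ≤ edist x₀ a) (hab : r ≤ edist a b) :
    r ^ p * ENNReal.ofReal t ≤ wCost p (mix t (Measure.dirac a) α) (mix t (Measure.dirac b) α) +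
      r ^ p * α {x | r ≤ edist x₀ x} := by
  have h1 := atom_le_fst p hp (mix t (Measure.dirac a) α) (mix t (Measure.dirac b) α) a r
  have h2 : ENNReal.ofReal t ≤ mix t (Measure.dirac a) α {a} := by
    simp [mix]
  have h3 : mix t (Measure.dirac b) α {x | edist a x < r} ≤ α {x | r ≤ edist x₀ x} := by
    have hm : MeasurableSet {x : X | edist a x < r} :=
      measurableSet_lt measurable_edist_right measurable_const
    have hb : Measure.dirac b {x : X | edist a x < r} = 0 := by
      rw [Measure.dirac_apply' _ hm, indicator_of_notMem]
      simpa using hab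
    have hs : {x : X | edist a x < r} ⊆ {x | r ≤ edist x₀ x} := by
      intro x hx
      have hx' : edist a x < r := hx
      change r ≤ edist x₀ x
      by_contra hcon
      push Not at hcon
      have h5 : edist x₀ a < r + r := by
        refine (edist_triangle x₀ x a).trans_lt (ENNReal.add_lt_add hcon ?_)
        rwa [edist_comm]
      rw [← two_mul] at h5
      exact absurd ha (not_le.2 h5)
    simp only [mix, Measure.coe_add, Measure.coe_smul, Pi.add_apply, Pi.smul_apply, smul_eq_mul, hb,
      mul_zero, zero_add]
    calc ENNReal.ofReal (1 - t) * α {x | edist a x < r} ≤ 1 * α {x | r ≤ edist x₀ x} := by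
          gcongr
          · exact ENNReal.ofReal_le_one.2 (by linarith)
      _ = _ := one_mul _
  calc r ^ p * ENNReal.ofReal t ≤ r ^ p * mix t (Measure.dirac a) α {a} := by gcongr
    _ ≤ _ := h1
    _ ≤ _ := by gcongr

lemma far_modulus (p : ℝ) (hp : 1 ≤ p) (x₀ : X) (f : X → X) (hf : Continuous f)
    (hmap : ∀ μ ∈ Pp p x₀, μ.map f ∈ Pp p x₀)
    (A : Set (Measure X)) (hA_sub : A ⊆ Pp p x₀) (α : Measure X) (hαA : α ∈ A)
    (δA : ℝ) (hδA : 0 < δA)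
    (hunif : ∀ e : ℝ, 0 < e → ∃ d : ℝ, 0 < d ∧ ∀ μ ∈ Pp p x₀, ∀ ν ∈ Pp p x₀,
      (∃ α ∈ A, Wp p μ α < δA) → (∃ α ∈ A, Wp p ν α < δA) →
      Wp p μ ν < d → Wp p (μ.map f) (ν.map f) < e)
    (e : ℝ≥0) (he : 0 < e) :
    ∃ ρ d : ℝ≥0, 0 < d ∧ ∀ y y', ρ ≤ edist x₀ y' → edist y' y ≤ d * VV x₀ y' →
      edist (f y') (f y) ≤ e * VV x₀ y' := by
  have hp0 : 0 ≤ p := by linarith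
  have hp1 : 0 < p := by linarith
  have hα := hA_sub hαA
  have hα' := hmap α hα
  have hαm := (mem_Pp_iff p hp x₀ α).1 hα
  haveI := hαm.1
  haveI := hα'.1
  -- choose c
  obtain ⟨c, hc0, hc1, hc⟩ : ∃ c : ℝ≥0, 0 < c ∧ c ≤ 1 ∧
      cp p * (2 ^ p + mom p x₀ α) * c < ENNReal.ofReal δA ^ p := by
    have hK : cp p * (2 ^ p + mom p x₀ α) ≠ ⊤ := by
      have h1 := cp_ne_top p hp
      have h2 := hαm.2.ne
      have h3 : (2 : ℝ≥0∞) ^ p ≠ ⊤ := h1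
      finiteness
    have hd : ENNReal.ofReal δA ^ p / 2 ≠ 0 := by
      have : 0 < ENNReal.ofReal δA ^ p := ENNReal.rpow_pos (by simpa using hδA) (by simp)
      exact (ENNReal.half_pos this.ne').ne'
    obtain ⟨c, hc, hc'⟩ := exists_small (le_refl (1 : ℝ)) _ hK hd
    rw [ENNReal.rpow_one] at hc'
    refine ⟨min c 1, by positivity, min_le_right _ _, ?_⟩
    refine lt_of_le_of_lt (le_trans ?_ hc') (ENNReal.half_lt_self ?_ ?_)
    · gcongr
      exact min_le_left _ _
    · intro h
      simp [h] at hd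
    · exact ENNReal.rpow_ne_top_of_nonneg hp0 ENNReal.ofReal_ne_top
  -- the threshold
  let θ : ℝ≥0∞ := ((e / 4 : ℝ≥0) : ℝ≥0∞) ^ p * c / 2
  have hθ' : ((e / 4 : ℝ≥0) : ℝ≥0∞) ^ p * c ≠ 0 := by
    have h1 : 0 < ((e / 4 : ℝ≥0) : ℝ≥0∞) ^ p := by
      refine ENNReal.rpow_pos ?_ ENNReal.coe_ne_top
      have : 0 < e / 4 := by positivity
      exact_mod_cast this
    have h2 : (c : ℝ≥0∞) ≠ 0 := by exact_mod_cast hc0.ne'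
    exact mul_ne_zero h1.ne' h2
  have hθ : θ ≠ 0 := (ENNReal.half_pos hθ').ne'
  obtain ⟨e1, he1, he1'⟩ := exists_small hp 1 (by simp) hθ
  rw [one_mul] at he1'
  obtain ⟨d, hd, hunif'⟩ := hunif e1 (by exact_mod_cast he1)
  obtain ⟨R, hR⟩ := tail_small p hp x₀ _ hα' hθ
  let d0 : ℝ≥0 := min 1 (d / 2).toNNReal
  have hd0 : 0 < d0 := by
    refine lt_min one_pos ?_
    simpa using hd
  have hd0d : (d0 : ℝ≥0∞) ^ p < ENNReal.ofReal d ^ p := by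
    refine ENNReal.rpow_lt_rpow ?_ hp1
    calc (d0 : ℝ≥0∞) ≤ ENNReal.ofReal (d / 2) := by
          unfold ENNReal.ofReal
          exact_mod_cast min_le_right _ _
      _ < ENNReal.ofReal d := (ENNReal.ofReal_lt_ofReal_iff hd).2 (by linarith)
  have hd01 : (d0 : ℝ≥0∞) ≤ 1 := by exact_mod_cast min_le_left _ _
  refine ⟨4 * R / e, d0, hd0, ?_⟩
  intro y y' hy' hyy
  set V := VV x₀ y' with hV
  let u : ℝ := 1 + dist x₀ y'
  have hu1 : 1 ≤ u := by simp [u]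
  have huV : ENNReal.ofReal u = V := (VV_eq _ _).symm
  let t : ℝ := c * u ^ (-p)
  have ht0 : 0 ≤ t := by positivity
  have ht1 : t ≤ 1 := scale_le_one hp hc1 hu1
  have htV : ENNReal.ofReal t * V ^ p = c := by
    rw [← huV]
    exact scale_mul hp c (by linarith)
  have ht1' : ENNReal.ofReal t ≤ 1 := ENNReal.ofReal_le_one.2 ht1
  -- closeness to α
  have hclose : ∀ w, edist y' w ≤ V → Wp p (mix t (Measure.dirac w) α) α < δA := by
    intro w hw
    apply Wp_lt_of_wCost_lt p hp
    refine lt_of_le_of_lt ?_ hc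
    have h1 := wCost_mix_le p hp ht0 ht1 (Measure.dirac w) α α
    rw [mix_self ht0 ht1] at h1
    refine h1.trans ?_
    have h2 : edist x₀ w ≤ 2 * V := by
      rw [two_mul]
      exact (edist_triangle x₀ y' w).trans (add_le_add (edist_le_VV _ _) hw)
    calc ENNReal.ofReal t * ∫⁻ q, edist q.1 q.2 ^ p ∂((Measure.dirac w).prod α)
        ≤ ENNReal.ofReal t * (cp p * ((2 * V) ^ p + mom p x₀ α * V ^ p)) := by
          gcongr
          refine (mom_prod p hp x₀ _ _).trans ?_
          rw [mom_dirac]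
          gcongr
          calc mom p x₀ α = mom p x₀ α * 1 := (mul_one _).symm
            _ ≤ _ := by
              gcongr
              exact ENNReal.one_le_rpow (one_le_VV _ _) hp1
      _ = cp p * (2 ^ p + mom p x₀ α) * (ENNReal.ofReal t * V ^ p) := by
          rw [ENNReal.mul_rpow_of_nonneg _ _ hp0]
          ring
      _ = _ := by rw [htV]
  have hVV : (d0 : ℝ≥0∞) * V ≤ V := by
    calc (d0 : ℝ≥0∞) * V ≤ 1 * V := by gcongr
      _ = V := one_mul _
  have hc_y := hclose y (hyy.trans hVV)
  have hc_y' := hclose y' (by simp)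
  have hmem : ∀ w, mix t (Measure.dirac w) α ∈ Pp p x₀ := fun w =>
    mix_mem_Pp p hp x₀ ht0 ht1 (dirac_mem_Pp p hp _ _) hα
  have hmut : ∀ w w', edist w w' ≤ d0 * V →
      Wp p (mix t (Measure.dirac w) α) (mix t (Measure.dirac w') α) < d := by
    intro w w' hw
    apply Wp_lt_of_wCost_lt p hp
    refine lt_of_le_of_lt ?_ hd0d
    refine (wCost_mix_le p hp ht0 ht1 (Measure.dirac w) (Measure.dirac w') α).trans ?_
    rw [Measure.dirac_prod_dirac, lintegral_dirac' _ (meas_edist_rpow2 p)]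
    calc ENNReal.ofReal t * edist w w' ^ p ≤ ENNReal.ofReal t * (d0 * V) ^ p := by gcongr
      _ = (ENNReal.ofReal t * V ^ p) * (d0 : ℝ≥0∞) ^ p := by
        rw [ENNReal.mul_rpow_of_nonneg _ _ hp0]
        ring
      _ ≤ 1 * (d0 : ℝ≥0∞) ^ p := by
        rw [htV]
        gcongr
        exact_mod_cast hc1
      _ = _ := one_mul _
  have himg : ∀ w w', Wp p (mix t (Measure.dirac w) α) α < δA →
      Wp p (mix t (Measure.dirac w') α) α < δA → edist w w' ≤ d0 * V →
      wCost p (mix t (Measure.dirac (f w)) (α.map f)) (mix t (Measure.dirac (f w')) (α.map f)) < θ := by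
    intro w w' h1 h2 h3
    have h4 := hunif' _ (hmem w) _ (hmem w') ⟨α, hαA, h1⟩ ⟨α, hαA, h2⟩ (hmut w w' h3)
    have h5 := wCost_lt_of_Wp_lt p hp x₀ (hmap _ (hmem w)) (hmap _ (hmem w')) h4
    rw [mix_map _ _ _ hf.measurable, mix_map _ _ _ hf.measurable, Measure.map_dirac' hf.measurable,
      Measure.map_dirac' hf.measurable] at h5
    refine h5.trans_le ?_
    rwa [ENNReal.ofReal_coe_nnreal]
  by_contra hcon
  push Not at hcon
  let r : ℝ≥0∞ := ((e / 4 : ℝ≥0) : ℝ≥0∞) * V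
  have hrV : r * 4 = e * V := by
    have : (((e / 4 : ℝ≥0) : ℝ≥0∞)) * 4 = e := by
      have : e / 4 * 4 = e := by field_simp
      exact_mod_cast this
    calc r * 4 = (((e / 4 : ℝ≥0) : ℝ≥0∞)) * 4 * V := by simp only [r]; ring
      _ = _ := by rw [this]
  have hrt : r ≠ ⊤ := ENNReal.mul_ne_top ENNReal.coe_ne_top (VV_ne_top _ _)
  have hRr : (R : ℝ≥0∞) ≤ r := by
    calc (R : ℝ≥0∞) = ((e / 4 : ℝ≥0) : ℝ≥0∞) * ((4 * R / e : ℝ≥0) : ℝ≥0∞) := by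
          have : R = e / 4 * (4 * R / e) := by
            field_simp
          exact_mod_cast this
      _ ≤ _ := by
        simp only [r]
        gcongr
        exact hy'.trans (edist_le_VV _ _)
  have hr_tail := hR r hRr
  have hfin : ∀ a b, wCost p (mix t (Measure.dirac a) (α.map f)) (mix t (Measure.dirac b) (α.map f)) < θ →
      2 * r ≤ edist x₀ a → r ≤ edist a b → False := by
    intro a b h1 h2 h3
    have h4 := separated_cost p hp x₀ (α.map f) ht0 a b r h2 h3
    have h5 : r ^ p * ENNReal.ofReal t = ((e / 4 : ℝ≥0) : ℝ≥0∞) ^ p * c := by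
      rw [← htV]
      simp only [r]
      rw [ENNReal.mul_rpow_of_nonneg _ _ hp0]
      ring
    rw [h5, ← ENNReal.add_halves (((e / 4 : ℝ≥0) : ℝ≥0∞) ^ p * c)] at h4
    refine absurd h4 (not_le.2 ?_)
    refine ENNReal.add_lt_add_of_lt_of_le ?_ h1 hr_tail
    exact (hr_tail.trans_lt (lt_top_iff_ne_top.2 (by
      simp only [θ]
      refine ENNReal.div_ne_top (ENNReal.mul_ne_top (ENNReal.rpow_ne_top_of_nonneg hp0 ENNReal.coe_ne_top) (by simp))
        (by simp)))).ne
  have hrle : r ≤ edist (f y') (f y) := by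
    refine le_trans ?_ hcon.le
    rw [← hrV]
    calc r = r * 1 := (mul_one r).symm
      _ ≤ _ := by gcongr; norm_num
  by_cases hcase : 2 * r ≤ edist x₀ (f y')
  · exact hfin (f y') (f y) (himg y' y hc_y' hc_y hyy) hcase hrle
  · push Not at hcase
    refine hfin (f y) (f y') (himg y y' hc_y hc_y' (by rwa [edist_comm])) ?_ (by rwa [edist_comm])
    by_contra h2
    push Not at h2
    have h3 : edist (f y') (f y) < 2 * r + 2 * r := by
      refine (edist_triangle_left (f y') (f y) x₀).trans_lt ?_
      exact ENNReal.add_lt_add hcase h2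
    have h4 : 2 * r + 2 * r = r * 4 := by ring
    rw [h4, hrV] at h3
    exact absurd h3 (not_lt.2 hcon.le)

lemma cone_modulus [ProperSpace X] (x₀ : X) (f : X → X) (hf : Continuous f)
    (C : ℝ≥0) (hC : ∀ y, VV x₀ (f y) ≤ C * VV x₀ y) (e : ℝ≥0) (he : 0 < e)
    (hfar : ∃ ρ d : ℝ≥0, 0 < d ∧ ∀ y y', ρ ≤ edist x₀ y' → edist y' y ≤ d * VV x₀ y' →
      edist (f y') (f y) ≤ e * VV x₀ y') :
    ∃ D : ℝ≥0, ∀ y y', edist (f y') (f y) ≤ e * VV x₀ y' + D * edist y' y := by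
  obtain ⟨ρ, d0, hd0, hfar⟩ := hfar
  have huc : UniformContinuousOn f (closedBall x₀ (ρ + 1)) :=
    (isCompact_closedBall x₀ (ρ + 1 : ℝ)).uniformContinuousOn_of_continuous hf.continuousOn
  obtain ⟨d1, hd1, huc'⟩ := Metric.uniformContinuousOn_iff.1 huc e (by exact_mod_cast he)
  let d1' : ℝ≥0 := (d1 / 2).toNNReal
  have hd1' : 0 < d1' := by simpa [d1'] using hd1
  have hd1c : (d1' : ℝ) = d1 / 2 := Real.coe_toNNReal _ (by linarith)
  let d2 : ℝ≥0 := min d0 (min 1 d1' / (1 + ρ))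
  have hd2 : 0 < d2 := by
    refine lt_min hd0 (by positivity)
  refine ⟨C * (2 / d2 + 1), fun y y' => ?_⟩
  by_cases hyy : edist y' y ≤ d2 * VV x₀ y'
  · refine le_trans ?_ le_self_add
    by_cases hy' : (ρ : ℝ≥0∞) ≤ edist x₀ y'
    · refine hfar y y' hy' (hyy.trans ?_)
      gcongr
      exact min_le_left _ _
    · push Not at hy'
      have h1 : dist x₀ y' < ρ := by
        rw [edist_nndist] at hy'
        exact_mod_cast hy'
      have h2 : dist y' y ≤ (min 1 d1' : ℝ≥0) := by
        have h3 : edist y' y ≤ ((min 1 d1' : ℝ≥0) : ℝ≥0∞) := by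
          refine hyy.trans ?_
          calc (d2 : ℝ≥0∞) * VV x₀ y' ≤ ((min 1 d1' / (1 + ρ) : ℝ≥0) : ℝ≥0∞) * ((1 + ρ : ℝ≥0) : ℝ≥0∞) := by
                gcongr
                · exact min_le_right _ _
                · unfold VV
                  push_cast
                  gcongr
            _ = _ := by
                rw [← ENNReal.coe_mul, div_mul_cancel₀]
                positivity
        rw [edist_nndist] at h3
        exact_mod_cast h3
      have h4 : dist y' y ≤ 1 := h2.trans (by exact_mod_cast min_le_left _ _)
      have h5 : dist y' y < d1 := by
        refine (h2.trans (NNReal.coe_le_coe.2 (min_le_right _ _))).trans_lt ?_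
        rw [hd1c]
        linarith
      have h6 := huc' y' (by
        rw [mem_closedBall, dist_comm]
        linarith) y (by
        rw [mem_closedBall, dist_comm]
        have := dist_triangle x₀ y' y
        linarith) h5
      have h7 : edist (f y') (f y) ≤ e := by
        rw [edist_nndist]
        have : nndist (f y') (f y) ≤ e := by exact_mod_cast h6.le
        exact_mod_cast this
      refine h7.trans ?_
      calc (e : ℝ≥0∞) = e * 1 := (mul_one _).symm
        _ ≤ _ := by
          gcongr
          exact one_le_VV _ _
  · push Not at hyy
    refine le_trans ?_ le_add_self
    have h1 : VV x₀ y ≤ VV x₀ y' + edist y' y := by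
      unfold VV
      rw [add_assoc]
      gcongr
      exact edist_triangle _ _ _
    have h2 : VV x₀ y' ≤ ((1 / d2 : ℝ≥0) : ℝ≥0∞) * edist y' y := by
      calc VV x₀ y' = ((1 / d2 * d2 : ℝ≥0) : ℝ≥0∞) * VV x₀ y' := by
            rw [one_div_mul_cancel hd2.ne']
            simp
        _ = ((1 / d2 : ℝ≥0) : ℝ≥0∞) * (d2 * VV x₀ y') := by
            rw [ENNReal.coe_mul, mul_assoc]
        _ ≤ _ := by gcongr
    calc edist (f y') (f y) ≤ edist x₀ (f y') + edist x₀ (f y) := edist_triangle_left _ _ _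
      _ ≤ C * VV x₀ y' + C * VV x₀ y :=
        add_le_add ((edist_le_VV _ _).trans (hC _)) ((edist_le_VV _ _).trans (hC _))
      _ ≤ C * VV x₀ y' + C * (VV x₀ y' + edist y' y) := by gcongr
      _ = C * (2 * VV x₀ y' + edist y' y) := by ring
      _ ≤ C * (2 * (((1 / d2 : ℝ≥0) : ℝ≥0∞) * edist y' y) + edist y' y) := by gcongr
      _ = C * ((2 * ((1 / d2 : ℝ≥0) : ℝ≥0∞)) + 1) * edist y' y := by ring
      _ = _ := by
        congr 1
        have : (2 / d2 : ℝ≥0) = 2 * (1 / d2) := by ring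
        rw [this]
        push_cast
        rfl

end PartOneB

section PartOneC

set_option linter.unusedSectionVars false
set_option linter.style.haveILetI false

variable [MetricSpace X] [MeasurableSpace X] [BorelSpace X] [TopologicalSpace.SeparableSpace X]

/-- Dirac measures as probability measures. -/
def dPM (x : X) : ProbabilityMeasure X := ⟨Measure.dirac x, inferInstance⟩

lemma dPM_coe (x : X) : (dPM x : Measure X) = Measure.dirac x := rfl

/-- The dual operator on functions. -/
def QQ (κ : ProbabilityTheory.Kernel X X) (g : X → ℝ≥0∞) : X → ℝ≥0∞ := fun x => ∫⁻ y, g y ∂(κ x)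

lemma QQ_meas (κ : ProbabilityTheory.Kernel X X) {g : X → ℝ≥0∞} (hg : Measurable g) :
    Measurable (QQ κ g) := hg.lintegral_kernel

lemma lintegral_PM_iter (κ : ProbabilityTheory.Kernel X X) [ProbabilityTheory.IsMarkovKernel κ]
    (k : ℕ) (μ : ProbabilityMeasure X) {g : X → ℝ≥0∞} (hg : Measurable g) :
    ∫⁻ x, g x ∂((PM κ)^[k] μ : Measure X) = ∫⁻ x, ((QQ κ)^[k] g) x ∂(μ : Measure X) := by
  induction k generalizing g with
  | zero => rfl
  | succ k ih =>
    rw [Function.iterate_succ_apply', lintegral_PM κ _ hg, Function.iterate_succ_apply,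
      ← ih (QQ_meas κ hg)]
    rfl

lemma QQ_iter_meas (κ : ProbabilityTheory.Kernel X X) (k : ℕ) {g : X → ℝ≥0∞} (hg : Measurable g) :
    Measurable ((QQ κ)^[k] g) := by
  induction k generalizing g with
  | zero => exact hg
  | succ k ih =>
    rw [Function.iterate_succ_apply]
    exact ih (QQ_meas κ hg)

lemma lintegral_PM_iter_dirac (κ : ProbabilityTheory.Kernel X X)
    [ProbabilityTheory.IsMarkovKernel κ]
    (k : ℕ) (μ : ProbabilityMeasure X) {g : X → ℝ≥0∞} (hg : Measurable g) :
    ∫⁻ x, g x ∂((PM κ)^[k] μ : Measure X) =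
      ∫⁻ x, ∫⁻ z, g z ∂((PM κ)^[k] (dPM x) : Measure X) ∂(μ : Measure X) := by
  rw [lintegral_PM_iter κ k μ hg]
  congr 1
  funext x
  rw [lintegral_PM_iter κ k (dPM x) hg, dPM_coe, lintegral_dirac' _ (QQ_iter_meas κ k hg)]

lemma mom_triangle (p : ℝ) (hp : 1 ≤ p) (a b : X) (μ : Measure X) [IsProbabilityMeasure μ] :
    mom p a μ ≤ cp p * (edist a b ^ p + mom p b μ) := by
  unfold mom
  calc ∫⁻ x, edist a x ^ p ∂μ ≤ ∫⁻ x, cp p * (edist a b ^ p + edist b x ^ p) ∂μ :=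
        lintegral_mono fun x => edist_rpow_le p hp a b x
    _ = _ := by
      rw [lintegral_const_mul _ (by have := meas_edist_rpow p b; fun_prop),
        lintegral_add_left measurable_const]
      simp

lemma step_dev (p : ℝ) (hp : 1 ≤ p) (x₀ : X) (f : X → X) {e D η : ℝ≥0}
    (hmod : ∀ y y', edist (f y') (f y) ≤ e * VV x₀ y' + D * edist y' y)
    (κ : ProbabilityTheory.Kernel X X) [ProbabilityTheory.IsMarkovKernel κ]
    (hn : ∀ y, mom p (f y) (κ y) ≤ (η : ℝ≥0∞) ^ p) (ν : ProbabilityMeasure X) (a : X) :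
    mom p (f a) (PM κ ν : Measure X) ≤
      cp p * (cp p * ((e * VV x₀ a) ^ p + (D : ℝ≥0∞) ^ p * mom p a (ν : Measure X)) +
        (η : ℝ≥0∞) ^ p) := by
  have hp0 : 0 ≤ p := by linarith
  have h1 : ∀ y, mom p (f a) (κ y) ≤
      cp p * (cp p * ((e * VV x₀ a) ^ p + (D : ℝ≥0∞) ^ p * edist a y ^ p) + (η : ℝ≥0∞) ^ p) := by
    intro y
    refine (mom_triangle p hp (f a) (f y) (κ y)).trans ?_
    gcongr
    · rw [← ENNReal.mul_rpow_of_nonneg _ _ hp0]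
      refine le_trans ?_ (add_rpow_le_cp p hp _ _)
      gcongr
      exact hmod y a
    · exact hn y
  have hm := meas_edist_rpow p a
  calc mom p (f a) (PM κ ν : Measure X) = ∫⁻ y, mom p (f a) (κ y) ∂(ν : Measure X) :=
        lintegral_PM κ ν (meas_edist_rpow p (f a))
    _ ≤ ∫⁻ y, cp p * (cp p * ((e * VV x₀ a) ^ p + (D : ℝ≥0∞) ^ p * edist a y ^ p) +
          (η : ℝ≥0∞) ^ p) ∂(ν : Measure X) := lintegral_mono h1
    _ = _ := by
      rw [lintegral_const_mul _ (by fun_prop), lintegral_add_right _ measurable_const,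
        lintegral_const_mul _ (by fun_prop), lintegral_add_left measurable_const,
        lintegral_const_mul _ (by fun_prop)]
      simp [mom]

lemma iter_dev (p : ℝ) (hp : 1 ≤ p) (x₀ : X) (f : X → X)
    (C : ℝ≥0) (hC : ∀ y, VV x₀ (f y) ≤ C * VV x₀ y)
    (hmod : ∀ e : ℝ≥0, 0 < e → ∃ D : ℝ≥0, ∀ y y', edist (f y') (f y) ≤ e * VV x₀ y' + D * edist y' y)
    (k : ℕ) (e : ℝ≥0) (he : 0 < e) :
    ∃ η : ℝ≥0, 0 < η ∧ ∀ (κ : ProbabilityTheory.Kernel X X) [ProbabilityTheory.IsMarkovKernel κ],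
      (∀ y, mom p (f y) (κ y) ≤ (η : ℝ≥0∞) ^ p) →
      ∀ x, mom p (f^[k] x) ((PM κ)^[k] (dPM x) : Measure X) ≤ e * VV x₀ x ^ p := by
  have hp0 : 0 ≤ p := by linarith
  have hcp := cp_ne_top p hp
  induction k generalizing e with
  | zero =>
    refine ⟨1, one_pos, fun κ _ _ x => ?_⟩
    simp only [Function.iterate_zero, id]
    rw [dPM_coe, mom_dirac, edist_self, ENNReal.zero_rpow_of_pos (by linarith)]
    exact zero_le
  | succ k ih =>
    have he3 : (e : ℝ≥0∞) / 3 ≠ 0 := by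
      simp [he.ne']
    obtain ⟨e1, he1, hs1⟩ := exists_small hp (cp p * cp p * ((C ^ k : ℝ≥0) : ℝ≥0∞) ^ p)
      (by
        have : ((C ^ k : ℝ≥0) : ℝ≥0∞) ^ p ≠ ⊤ := ENNReal.rpow_ne_top_of_nonneg hp0 ENNReal.coe_ne_top
        finiteness) he3
    obtain ⟨D, hD⟩ := hmod e1 he1
    obtain ⟨e2, he2, hs2⟩ := exists_small (le_refl (1 : ℝ)) (cp p * cp p * (D : ℝ≥0∞) ^ p)
      (by
        have : (D : ℝ≥0∞) ^ p ≠ ⊤ := ENNReal.rpow_ne_top_of_nonneg hp0 ENNReal.coe_ne_top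
        finiteness) he3
    rw [ENNReal.rpow_one] at hs2
    obtain ⟨η1, hη1, hs3⟩ := exists_small hp (cp p) hcp he3
    obtain ⟨η2, hη2, hih⟩ := ih e2 he2
    refine ⟨min η1 η2, lt_min hη1 hη2, fun κ _ hn x => ?_⟩
    have hx := hih κ (fun y => (hn y).trans (by gcongr; exact min_le_right _ _)) x
    rw [Function.iterate_succ_apply', Function.iterate_succ_apply']
    refine (step_dev p hp x₀ f hD κ (fun y => (hn y).trans
      (by gcongr; exact min_le_left _ _ : _ ≤ (η1 : ℝ≥0∞) ^ p)) _ _).trans ?_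
    have hV1 : 1 ≤ VV x₀ x ^ p := ENNReal.one_le_rpow (one_le_VV _ _) (by linarith)
    calc cp p * (cp p * ((e1 * VV x₀ (f^[k] x)) ^ p + (D : ℝ≥0∞) ^ p *
            mom p (f^[k] x) ((PM κ)^[k] (dPM x) : Measure X)) + (η1 : ℝ≥0∞) ^ p)
        ≤ cp p * (cp p * ((e1 * ((C ^ k : ℝ≥0) * VV x₀ x)) ^ p + (D : ℝ≥0∞) ^ p *
            (e2 * VV x₀ x ^ p)) + (η1 : ℝ≥0∞) ^ p * VV x₀ x ^ p) := by
          have h1 := growth_iterate hC k x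
          have h2 : (η1 : ℝ≥0∞) ^ p ≤ (η1 : ℝ≥0∞) ^ p * VV x₀ x ^ p := by
            calc (η1 : ℝ≥0∞) ^ p = (η1 : ℝ≥0∞) ^ p * 1 := (mul_one _).symm
              _ ≤ _ := by gcongr
          refine mul_le_mul_right (add_le_add (mul_le_mul_right (add_le_add ?_ ?_) _) h2) _
          · gcongr
          · exact mul_le_mul_right hx _
      _ = (cp p * cp p * ((C ^ k : ℝ≥0) : ℝ≥0∞) ^ p * (e1 : ℝ≥0∞) ^ p +
            cp p * cp p * (D : ℝ≥0∞) ^ p * e2 + cp p * (η1 : ℝ≥0∞) ^ p) * VV x₀ x ^ p := by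
          rw [ENNReal.mul_rpow_of_nonneg _ _ hp0, ENNReal.mul_rpow_of_nonneg _ _ hp0]
          ring
      _ ≤ ((e : ℝ≥0∞) / 3 + e / 3 + e / 3) * VV x₀ x ^ p :=
          mul_le_mul_left (add_le_add (add_le_add hs1 hs2) hs3) _
      _ = _ := by rw [ENNReal.add_thirds]

lemma drift (p : ℝ) (hp : 1 ≤ p) (x₀ : X) (f : X → X)
    (C : ℝ≥0) (hC : ∀ y, VV x₀ (f y) ≤ C * VV x₀ y)
    (hmod : ∀ e : ℝ≥0, 0 < e → ∃ D : ℝ≥0, ∀ y y', edist (f y') (f y) ≤ e * VV x₀ y' + D * edist y' y)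
    (hcontr : ∀ l : ℝ≥0, 0 < l →
      ∃ k : ℕ, 0 < k ∧ ∃ b : ℝ≥0, ∀ y, edist x₀ (f^[k] y) ^ p ≤ b + l * edist x₀ y ^ p) :
    ∃ (k : ℕ) (B : ℝ≥0) (η : ℝ≥0), 0 < k ∧ 0 < η ∧
      ∀ (κ : ProbabilityTheory.Kernel X X) [ProbabilityTheory.IsMarkovKernel κ],
      (∀ y, mom p (f y) (κ y) ≤ (η : ℝ≥0∞) ^ p) →
      ∀ μ : ProbabilityMeasure X, mom p x₀ ((PM κ)^[k] μ : Measure X) ≤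
        2⁻¹ * mom p x₀ (μ : Measure X) + B := by
  have hcp := cp_ne_top p hp
  have h4 : (2 : ℝ≥0∞)⁻¹ / 2 ≠ 0 := by simp
  obtain ⟨l, hl, hl'⟩ := exists_small (le_refl (1 : ℝ)) (cp p) hcp h4
  obtain ⟨e, he, he'⟩ := exists_small (le_refl (1 : ℝ)) (cp p * cp p) (by finiteness) h4
  rw [ENNReal.rpow_one] at hl' he'
  obtain ⟨k, hk, b, hb⟩ := hcontr l hl
  obtain ⟨η, hη, hdev⟩ := iter_dev p hp x₀ f C hC hmod k e he
  obtain ⟨B, hB⟩ : ∃ B : ℝ≥0, (B : ℝ≥0∞) = cp p * b + cp p * cp p * e := by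
    refine ⟨(cp p * b + cp p * cp p * e).toNNReal, ENNReal.coe_toNNReal ?_⟩
    finiteness
  refine ⟨k, B, η, hk, hη, fun κ _ hn μ => ?_⟩
  have hx : ∀ x, mom p x₀ ((PM κ)^[k] (dPM x) : Measure X) ≤ 2⁻¹ * edist x₀ x ^ p + B := by
    intro x
    refine (mom_triangle p hp x₀ (f^[k] x) _).trans ?_
    calc cp p * (edist x₀ (f^[k] x) ^ p + mom p (f^[k] x) ((PM κ)^[k] (dPM x) : Measure X))
        ≤ cp p * ((b + l * edist x₀ x ^ p) + e * (cp p * (1 + edist x₀ x ^ p))) :=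
          mul_le_mul_right (add_le_add (hb x) ((hdev κ hn x).trans
            (mul_le_mul_right (VV_rpow_le hp x₀ x) _))) _
      _ = (cp p * l + cp p * cp p * e) * edist x₀ x ^ p + (cp p * b + cp p * cp p * e) := by ring
      _ ≤ (2⁻¹ / 2 + 2⁻¹ / 2) * edist x₀ x ^ p + (cp p * b + cp p * cp p * e) :=
          add_le_add (mul_le_mul_left (add_le_add hl' he') _) le_rfl
      _ = _ := by rw [ENNReal.add_halves, hB]
  have hm := meas_edist_rpow p x₀
  calc mom p x₀ ((PM κ)^[k] μ : Measure X)
      = ∫⁻ x, mom p x₀ ((PM κ)^[k] (dPM x) : Measure X) ∂(μ : Measure X) :=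
        lintegral_PM_iter_dirac κ k μ hm
    _ ≤ ∫⁻ x, (2⁻¹ * edist x₀ x ^ p + B) ∂(μ : Measure X) := lintegral_mono hx
    _ = _ := by
      rw [lintegral_add_right _ measurable_const, lintegral_const_mul _ hm]
      simp [mom]

lemma one_step (p : ℝ) (hp : 1 ≤ p) (x₀ : X) (f : X → X)
    (C : ℝ≥0) (hC : ∀ y, VV x₀ (f y) ≤ C * VV x₀ y) :
    ∃ G : ℝ≥0, 1 ≤ G ∧ ∀ (κ : ProbabilityTheory.Kernel X X) [ProbabilityTheory.IsMarkovKernel κ],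
      (∀ y, mom p (f y) (κ y) ≤ 1) →
      ∀ μ : ProbabilityMeasure X, 1 + mom p x₀ (PM κ μ : Measure X) ≤
        G * (1 + mom p x₀ (μ : Measure X)) := by
  have hp0 : 0 ≤ p := by linarith
  have hcp := cp_ne_top p hp
  obtain ⟨G, hG⟩ : ∃ G : ℝ≥0, (G : ℝ≥0∞) = 1 + cp p * ((C : ℝ≥0∞) ^ p * cp p + 1) := by
    refine ⟨(1 + cp p * ((C : ℝ≥0∞) ^ p * cp p + 1)).toNNReal, ENNReal.coe_toNNReal ?_⟩
    have : (C : ℝ≥0∞) ^ p ≠ ⊤ := ENNReal.rpow_ne_top_of_nonneg hp0 ENNReal.coe_ne_top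
    finiteness
  refine ⟨G, ?_, fun κ _ hn μ => ?_⟩
  · have : (1 : ℝ≥0∞) ≤ G := by
      rw [hG]
      exact le_self_add
    exact_mod_cast this
  have hm := meas_edist_rpow p x₀
  have hx : ∀ x, mom p x₀ (κ x) ≤ cp p * ((C : ℝ≥0∞) ^ p * cp p + 1) * (1 + edist x₀ x ^ p) := by
    intro x
    refine (mom_triangle p hp x₀ (f x) _).trans ?_
    have h1 : edist x₀ (f x) ^ p ≤ (C : ℝ≥0∞) ^ p * (cp p * (1 + edist x₀ x ^ p)) := by
      calc edist x₀ (f x) ^ p ≤ (C * VV x₀ x) ^ p := by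
            gcongr
            exact (edist_le_VV _ _).trans (hC x)
        _ = (C : ℝ≥0∞) ^ p * VV x₀ x ^ p := ENNReal.mul_rpow_of_nonneg _ _ hp0
        _ ≤ _ := mul_le_mul_right (VV_rpow_le hp x₀ x) _
    have h2 : mom p (f x) (κ x) ≤ 1 + edist x₀ x ^ p := (hn x).trans le_self_add
    calc cp p * (edist x₀ (f x) ^ p + mom p (f x) (κ x))
        ≤ cp p * ((C : ℝ≥0∞) ^ p * (cp p * (1 + edist x₀ x ^ p)) + (1 + edist x₀ x ^ p)) :=
          mul_le_mul_right (add_le_add h1 h2) _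
      _ = _ := by ring
  have h3 : mom p x₀ (PM κ μ : Measure X) ≤
      cp p * ((C : ℝ≥0∞) ^ p * cp p + 1) * (1 + mom p x₀ (μ : Measure X)) := by
    calc mom p x₀ (PM κ μ : Measure X) = ∫⁻ y, mom p x₀ (κ y) ∂(μ : Measure X) :=
          lintegral_PM κ μ hm
      _ ≤ ∫⁻ x, cp p * ((C : ℝ≥0∞) ^ p * cp p + 1) * (1 + edist x₀ x ^ p) ∂(μ : Measure X) :=
          lintegral_mono hx
      _ = _ := by
        rw [lintegral_const_mul _ (by fun_prop), lintegral_add_left measurable_const]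
        simp [mom]
  rw [hG, add_mul, one_mul]
  exact add_le_add le_self_add h3

lemma feller (p : ℝ) (hp : 1 ≤ p) (x₀ : X) (κ : ProbabilityTheory.Kernel X X)
    [ProbabilityTheory.IsMarkovKernel κ] (hmem : ∀ x, (κ x : Measure X) ∈ Pp p x₀)
    (hcont : ∀ (xs : ℕ → X) (x : X), Tendsto xs atTop (𝓝 x) →
      Tendsto (fun k => Wp p (κ (xs k)) (κ x)) atTop (𝓝 0)) : Continuous (kPM κ) := by
  rw [continuous_iff_seqContinuous]
  intro xs x hx
  exact weak_of_WpTendsto p hp x₀ (fun n => kPM κ (xs n)) (kPM κ x) (fun n => hmem _) (hmem _)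
    (hcont xs x hx)

end PartOneC

/-- **Stability of the global attractor under Markov–Wasserstein noise.** If the transfer map
`f_*` of a continuous map `f` on a proper complete separable metric space has a global
attractor `A` in `(P_p(X), w_p)` and is uniformly continuous near it, and `Pₙ` are MW-maps
of order `p` relative to `f` with noise levels `εₙ → 0`, then for all large `n` there is a
closed, positively `Pₙ`-invariant isolating neighborhood `Nₙ` whose maximal invariant set
`Kₙ = A_{Pₙ}(Nₙ)` is nonempty, weakly (sequentially) compact, a weak attractor for `Pₙ`,
contains all measures on bounded full `Pₙ`-orbits in `P_p(X)`, and contains a stationary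
measure of `Pₙ`. -/
theorem wasserstein_weak_continuation_of_global_attractor
    [MetricSpace X] [MeasurableSpace X] [BorelSpace X] [ProperSpace X] [CompleteSpace X]
    [TopologicalSpace.SeparableSpace X]
    (p : ℝ) (hp : 1 ≤ p) (x₀ : X) (f : X → X) (hf : Continuous f)
    (hmap : ∀ μ ∈ Pp p x₀, μ.map f ∈ Pp p x₀)
    (hcont : ∀ (μs : ℕ → Measure X) (μ : Measure X), (∀ n, μs n ∈ Pp p x₀) → μ ∈ Pp p x₀ →
      WpTendsto p μs μ → WpTendsto p (fun n => (μs n).map f) (μ.map f))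
    (A : Set (Measure X)) (hA_sub : A ⊆ Pp p x₀) (hA_cpt : WpSeqCompact p A)
    (hA_inv : maxInv (fun μ : Measure X => μ.map f) A = A)
    (hA_attr : ∀ Bs : Set (Measure X), Bs ⊆ Pp p x₀ → WpBounded p x₀ Bs →
      ∀ e : ℝ, 0 < e → ∃ n₀ : ℕ, ∀ n, n₀ ≤ n → ∀ μ ∈ Bs,
        ∃ ν ∈ A, Wp p ((fun μ : Measure X => μ.map f)^[n] μ) ν < e)
    (δA : ℝ) (hδA : 0 < δA)
    (hunif : ∀ e : ℝ, 0 < e → ∃ d : ℝ, 0 < d ∧ ∀ μ ∈ Pp p x₀, ∀ ν ∈ Pp p x₀,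
      (∃ α ∈ A, Wp p μ α < δA) → (∃ α ∈ A, Wp p ν α < δA) →
      Wp p μ ν < d → Wp p (μ.map f) (ν.map f) < e)
    (q : ℕ → ProbabilityTheory.Kernel X X) [∀ n, ProbabilityTheory.IsMarkovKernel (q n)]
    (P : ℕ → Measure X → Measure X)
    (hP : ∀ (n : ℕ) (μ : Measure X), P n μ = μ.bind (fun x => q n x))
    (hq_mem : ∀ (n : ℕ) (x : X), (q n x : Measure X) ∈ Pp p x₀)
    (hq_cont : ∀ (n : ℕ) (xs : ℕ → X) (x : X), Tendsto xs atTop (𝓝 x) →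
      Tendsto (fun k => Wp p (q n (xs k)) (q n x)) atTop (𝓝 0))
    (hP_map : ∀ n, ∀ μ ∈ Pp p x₀, P n μ ∈ Pp p x₀)
    (hP_cont : ∀ (n : ℕ) (μs : ℕ → Measure X) (μ : Measure X), (∀ k, μs k ∈ Pp p x₀) →
      μ ∈ Pp p x₀ → WpTendsto p μs μ → WpTendsto p (fun k => P n (μs k)) (P n μ))
    (hP_convex : ∀ (n : ℕ) (t : ℝ), 0 ≤ t → t ≤ 1 → ∀ μ ∈ Pp p x₀, ∀ ν ∈ Pp p x₀,
      P n (mix t μ ν) = mix t (P n μ) (P n ν))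
    (ε : ℕ → ℝ) (hε : Tendsto ε atTop (𝓝 0))
    (hnoise : ∀ (n : ℕ) (x : X), Wp p (q n x) (Measure.dirac (f x)) ≤ ε n) :
    ∃ n₀ : ℕ, ∀ n, n₀ ≤ n → ∃ Nn : Set (Measure X),
      Nn ⊆ Pp p x₀ ∧
      WpClosed p x₀ Nn ∧
      PosInvariant (P n) Nn ∧
      (∃ δ : ℝ, 0 < δ ∧
        {μ : Measure X | μ ∈ Pp p x₀ ∧ ∃ ν ∈ maxInv (P n) Nn, Wp p μ ν < δ} ⊆ Nn) ∧
      (maxInv (P n) Nn).Nonempty ∧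
      WeakSeqCompact (maxInv (P n) Nn) ∧
      omegaWeakM (P n) Nn ⊆ maxInv (P n) Nn ∧
      (∀ σ : ℤ → Measure X, (∀ k, σ k ∈ Pp p x₀) →
        (∀ k : ℤ, P n (σ k) = σ (k + 1)) →
        (∃ R : ℝ, ∀ k : ℤ, Wp p (σ k) (Measure.dirac x₀) ≤ R) →
        σ 0 ∈ maxInv (P n) Nn) ∧
      ∃ μ ∈ maxInv (P n) Nn, P n μ = μ := by
  obtain ⟨C, hC⟩ := growth p hp x₀ f hf hmap hcont
  have hAne : ∃ α, α ∈ A := by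
    obtain ⟨n, hn⟩ := hA_attr {Measure.dirac x₀} (by
      rintro _ rfl
      exact dirac_mem_Pp p hp x₀ x₀) ⟨Wp p (Measure.dirac x₀) (Measure.dirac x₀), by
        rintro _ rfl
        exact le_rfl⟩ 1 one_pos
    obtain ⟨ν, hν, -⟩ := hn n le_rfl _ rfl
    exact ⟨ν, hν⟩
  obtain ⟨α, hα⟩ := hAne
  have hmod : ∀ e : ℝ≥0, 0 < e →
      ∃ D : ℝ≥0, ∀ y y', edist (f y') (f y) ≤ e * VV x₀ y' + D * edist y' y := fun e he =>
    cone_modulus x₀ f hf C hC e he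
      (far_modulus p hp x₀ f hf hmap A hA_sub α hα δA hδA hunif e he)
  have hcontr := contraction p hp x₀ f hf hmap A hA_sub hA_cpt hA_attr
  obtain ⟨k, B, η, hk, hη, hdrift⟩ := drift p hp x₀ f C hC hmod hcontr
  obtain ⟨G, hG1, hG⟩ := one_step p hp x₀ f C hC
  have hev : ∀ᶠ n in atTop, ε n < min (η : ℝ) 1 :=
    hε.eventually (gt_mem_nhds (lt_min (by exact_mod_cast hη) one_pos))
  obtain ⟨n₀, hn₀⟩ := eventually_atTop.1 hev
  refine ⟨n₀, fun n hn => ?_⟩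
  have hεn := hn₀ n hn
  have hm : ∀ y, mom p (f y) (q n y) ≤ ENNReal.ofReal (min (η : ℝ) 1) ^ p := by
    intro y
    rw [← wCost_dirac p hp]
    exact wCost_le_of_Wp_le p hp x₀ (hq_mem n y) (dirac_mem_Pp p hp x₀ _)
      ((hnoise n y).trans hεn.le)
  have hp0 : 0 ≤ p := by linarith
  have hm1 : ∀ y, mom p (f y) (q n y) ≤ (η : ℝ≥0∞) ^ p := fun y => (hm y).trans (by
    gcongr
    calc ENNReal.ofReal (min (η : ℝ) 1) ≤ ENNReal.ofReal (η : ℝ) :=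
          ENNReal.ofReal_le_ofReal (min_le_left _ _)
      _ = η := ENNReal.ofReal_coe_nnreal)
  have hm2 : ∀ y, mom p (f y) (q n y) ≤ 1 := fun y => (hm y).trans (by
    refine ENNReal.rpow_le_one ?_ hp0
    exact ENNReal.ofReal_le_one.2 (min_le_right _ _))
  exact part_two p hp x₀ (q n) (feller p hp x₀ (q n) (hq_mem n) (hq_cont n)) (P n)
    (funext (hP n)) k hk B G hG1 (hdrift (q n) hm1) (hG (q n) hm2)
end
end

section
/- Let (X,d) be a proper complete separable metric space. Then every closed R-neighborhood of a compact subset of (P_1(X), w_1) is sequentially compact in the weak topology: if K is a compact subset of (P_1(X), w_1) and R >= 0, then the set N_R(K) = {nu in P_1(X) : w_1(mu, nu) <= R for some mu in K} is weakly sequentially compact (with respect to the topology induced from P(X)). -/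
open MeasureTheory Topology Filter Metric Set
open scoped ENNReal NNReal

noncomputable section

variable {X : Type*}

lemma aux_cpt {Y : Type*} [MetricSpace Y] [MeasurableSpace Y] [BorelSpace Y] [ProperSpace Y]
    (y₀ : Y) (ρ : ℕ → ProbabilityMeasure Y) (M : ℝ≥0∞) (hM : M ≠ ⊤)
    (h : ∀ n, ∫⁻ y, edist y₀ y ∂(ρ n : Measure Y) ≤ M) :
    ∃ (ρ' : ProbabilityMeasure Y) (φ : ℕ → ℕ), StrictMono φ ∧
      Tendsto (fun n => ρ (φ n)) atTop (𝓝 ρ') := by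
  have ht : IsTightMeasureSet {((μ : ProbabilityMeasure Y) : Measure Y) | μ ∈ range ρ} := by
    rw [isTightMeasureSet_iff_exists_isCompact_measure_compl_le]
    intro ε hε
    rcases eq_or_ne ε ⊤ with rfl | hε'
    · exact ⟨∅, isCompact_empty, by simp⟩
    obtain ⟨r, hr0, hr⟩ : ∃ r : ℝ, 0 < r ∧ M / ENNReal.ofReal r ≤ ε := by
      refine ⟨(M / ε).toReal + 1, by positivity, ?_⟩
      have hfin : M / ε ≠ ⊤ := ENNReal.div_ne_top hM hε.ne'
      refine ENNReal.div_le_of_le_mul ?_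
      have h1 : M / ε ≤ ENNReal.ofReal ((M / ε).toReal + 1) := by
        rw [ENNReal.le_ofReal_iff_toReal_le hfin (by positivity)]
        linarith
      calc M = ε * (M / ε) := (ENNReal.mul_div_cancel hε.ne' hε').symm
        _ ≤ _ := by gcongr
    refine ⟨closedBall y₀ r, isCompact_closedBall _ _, ?_⟩
    rintro _ ⟨_, ⟨n, rfl⟩, rfl⟩
    refine le_trans ?_ hr
    refine le_trans (measure_mono ?_) ((meas_ge_le_lintegral_div (f := fun y => edist y₀ y)
      (by fun_prop) (ε := ENNReal.ofReal r) (by simpa using hr0) (by simp)).trans ?_)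
    · intro y hy
      simp only [mem_compl_iff, mem_closedBall, not_le] at hy
      simp only [mem_ofPred_eq]
      rw [edist_dist, dist_comm]
      exact ENNReal.ofReal_le_ofReal hy.le
    · gcongr
      exact h n
  have hc := (isCompact_closure_of_isTightMeasureSet ht).isSeqCompact
  obtain ⟨ρ', _, φ, hφ, hlim⟩ := hc (x := ρ) (fun n => subset_closure ⟨n, rfl⟩)
  exact ⟨ρ', φ, hφ, hlim⟩

lemma aux_lsc {X : Type*} [MetricSpace X] [MeasurableSpace X] [BorelSpace X] [ProperSpace X]
    (ρ : ℕ → ProbabilityMeasure (X × X)) (ρ' : ProbabilityMeasure (X × X))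
    (h : Tendsto ρ atTop (𝓝 ρ')) (u : ℕ → ℝ≥0∞) (c : ℝ≥0∞) (hu : Tendsto u atTop (𝓝 c))
    (hc : ∀ n, ∫⁻ q, edist q.1 q.2 ∂(ρ n : Measure (X × X)) ≤ u n) :
    ∫⁻ q, edist q.1 q.2 ∂(ρ' : Measure (X × X)) ≤ c := by
  have := lintegral_le_liminf_lintegral_of_forall_isOpen_measure_le_liminf_measure
    (μ := (ρ' : Measure (X × X))) (μs := fun n => (ρ n : Measure (X × X)))
    (f := fun q : X × X => dist q.1 q.2) (by fun_prop) (fun q => dist_nonneg)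
    (fun G hG => ProbabilityMeasure.le_liminf_measure_open_of_tendsto h hG)
  simp only [← edist_dist] at this
  refine this.trans ?_
  rw [← hu.liminf_eq]
  exact liminf_le_liminf (Eventually.of_forall hc)

lemma aux_main {X : Type*} [MetricSpace X] [MeasurableSpace X] [BorelSpace X] [ProperSpace X]
    (x₀ : X) (ρ : ℕ → ProbabilityMeasure (X × X)) (M : ℝ≥0∞) (hM : M ≠ ⊤)
    (h : ∀ n, ∫⁻ q, edist (x₀, x₀) q ∂(ρ n : Measure (X × X)) ≤ M) (c : ℝ)
    (hc : ∀ n, ∫⁻ q, edist q.1 q.2 ∂(ρ n : Measure (X × X)) ≤ ENNReal.ofReal (c + 1 / (n + 1))) :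
    ∃ (ρ' : ProbabilityMeasure (X × X)) (φ : ℕ → ℕ), StrictMono φ ∧
      Tendsto (fun n => ρ (φ n)) atTop (𝓝 ρ') ∧
      ∫⁻ q, edist q.1 q.2 ∂(ρ' : Measure (X × X)) ≤ ENNReal.ofReal c := by
  obtain ⟨ρ', φ, hφ, hlim⟩ := aux_cpt (x₀, x₀) ρ M hM h
  refine ⟨ρ', φ, hφ, hlim, ?_⟩
  refine aux_lsc _ ρ' hlim (fun n => ENNReal.ofReal (c + 1 / ((φ n : ℕ) + 1))) _ ?_
    (fun n => hc (φ n))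
  have h1 : Tendsto (fun n : ℕ => c + 1 / ((n : ℝ) + 1)) atTop (𝓝 (c + 0)) :=
    tendsto_const_nhds.add tendsto_one_div_add_atTop_nhds_zero_nat
  rw [add_zero] at h1
  exact (ENNReal.tendsto_ofReal h1).comp hφ.tendsto_atTop

lemma aux_mom {X : Type*} [MetricSpace X] [MeasurableSpace X] (x₀ : X) (μ : Measure X) :
    FiniteMoment 1 x₀ μ ↔ ∫⁻ x, edist x₀ x ∂μ < ⊤ := by
  simp [FiniteMoment, edist_dist]

lemma aux_Wp {X : Type*} [MetricSpace X] [MeasurableSpace X] (μ ν : Measure X) :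
    Wp 1 μ ν = (⨅ π ∈ {π : Measure (X × X) | IsProbabilityMeasure π ∧ IsCoupling π μ ν},
      ∫⁻ q, edist q.1 q.2 ∂π).toReal := by
  simp [Wp, wCost, edist_dist]

lemma aux_fst {X : Type*} [MetricSpace X] [MeasurableSpace X] [BorelSpace X] [ProperSpace X]
    (x₀ : X) (π : Measure (X × X)) {μ ν : Measure X} (h : IsCoupling π μ ν) :
    ∫⁻ q, edist x₀ q.1 ∂π = ∫⁻ x, edist x₀ x ∂μ := by
  rw [← h.1, lintegral_map (by fun_prop) (by fun_prop)]

lemma aux_snd {X : Type*} [MetricSpace X] [MeasurableSpace X] [BorelSpace X] [ProperSpace X]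
    (x₀ : X) (π : Measure (X × X)) {μ ν : Measure X} (h : IsCoupling π μ ν) :
    ∫⁻ q, edist x₀ q.2 ∂π = ∫⁻ x, edist x₀ x ∂ν := by
  rw [← h.2, lintegral_map (by fun_prop) (by fun_prop)]

lemma aux_both1 {X : Type*} [MetricSpace X] [MeasurableSpace X] [BorelSpace X] [ProperSpace X]
    (x₀ : X) (π : Measure (X × X)) {μ ν : Measure X} (h : IsCoupling π μ ν) :
    ∫⁻ q, edist (x₀, x₀) q ∂π ≤ ∫⁻ x, edist x₀ x ∂μ + ∫⁻ q, edist q.1 q.2 ∂π := by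
  rw [← aux_fst x₀ π h, ← lintegral_add_left (by fun_prop)]
  refine lintegral_mono fun q => ?_
  rw [Prod.edist_eq]
  exact max_le le_self_add (edist_triangle _ _ _)

lemma aux_both2 {X : Type*} [MetricSpace X] [MeasurableSpace X] [BorelSpace X] [ProperSpace X]
    (x₀ : X) (π : Measure (X × X)) {μ ν : Measure X} (h : IsCoupling π μ ν) :
    ∫⁻ q, edist (x₀, x₀) q ∂π ≤ ∫⁻ x, edist x₀ x ∂ν + ∫⁻ q, edist q.1 q.2 ∂π := by
  rw [← aux_snd x₀ π h, ← lintegral_add_left (by fun_prop)]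
  refine lintegral_mono fun q => ?_
  rw [Prod.edist_eq]
  refine max_le ?_ le_self_add
  rw [edist_comm q.1 q.2]
  exact edist_triangle _ _ _

lemma aux_le1 {X : Type*} [MetricSpace X] [MeasurableSpace X] [BorelSpace X] [ProperSpace X]
    (x₀ : X) (π : Measure (X × X)) {μ ν : Measure X} (h : IsCoupling π μ ν) :
    ∫⁻ x, edist x₀ x ∂μ ≤ ∫⁻ q, edist (x₀, x₀) q ∂π := by
  rw [← aux_fst x₀ π h]
  refine lintegral_mono fun q => ?_
  rw [Prod.edist_eq]
  exact le_max_left _ _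

lemma aux_le2 {X : Type*} [MetricSpace X] [MeasurableSpace X] [BorelSpace X] [ProperSpace X]
    (x₀ : X) (π : Measure (X × X)) {μ ν : Measure X} (h : IsCoupling π μ ν) :
    ∫⁻ x, edist x₀ x ∂ν ≤ ∫⁻ q, edist (x₀, x₀) q ∂π := by
  rw [← aux_snd x₀ π h]
  refine lintegral_mono fun q => ?_
  rw [Prod.edist_eq]
  exact le_max_right _ _

lemma aux_coup {X : Type*} [MetricSpace X] [MeasurableSpace X] [BorelSpace X] [ProperSpace X]
    (x₀ : X) (μ ν : Measure X) (hμ : μ ∈ Pp 1 x₀) (hν : ν ∈ Pp 1 x₀) (c : ℝ)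
    (hc : Wp 1 μ ν < c) :
    ∃ π : ProbabilityMeasure (X × X), IsCoupling (π : Measure (X × X)) μ ν ∧
      ∫⁻ q, edist q.1 q.2 ∂(π : Measure (X × X)) ≤ ENNReal.ofReal c := by
  obtain ⟨hμ1, hμ2⟩ := hμ
  obtain ⟨hν1, hν2⟩ := hν
  rw [aux_mom] at hμ2 hν2
  rw [aux_Wp] at hc
  have hprod : IsCoupling (μ.prod ν) μ ν := by
    constructor
    · simp
    · simp
  have hfin : (⨅ π ∈ {π : Measure (X × X) | IsProbabilityMeasure π ∧ IsCoupling π μ ν},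
      ∫⁻ q, edist q.1 q.2 ∂π) ≠ ⊤ := by
    refine ne_top_of_le_ne_top ?_ (iInf₂_le (μ.prod ν) ⟨inferInstance, hprod⟩)
    refine ne_top_of_le_ne_top (ENNReal.add_lt_top.2 ⟨hμ2, hν2⟩).ne ?_
    rw [← aux_fst x₀ _ hprod, ← aux_snd x₀ _ hprod, ← lintegral_add_left (by fun_prop)]
    refine lintegral_mono fun q => ?_
    rw [edist_comm x₀ q.1]
    exact edist_triangle _ _ _
  rw [← ENNReal.lt_ofReal_iff_toReal_lt hfin] at hc
  simp only [iInf_lt_iff] at hc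
  obtain ⟨π, ⟨hπ1, hπ2⟩, h⟩ := hc
  exact ⟨⟨π, hπ1⟩, hπ2, h.le⟩

lemma aux_diag {X : Type*} [MetricSpace X] [MeasurableSpace X] [BorelSpace X] [ProperSpace X]
    (π : Measure (X × X)) (h : ∫⁻ q, edist q.1 q.2 ∂π ≤ 0) :
    π.map Prod.fst = π.map Prod.snd := by
  rw [nonpos_iff_eq_zero, lintegral_eq_zero_iff (by fun_prop)] at h
  refine Measure.map_congr ?_
  filter_upwards [h] with q hq
  simpa using hq

/-- **`P₁(X)` of a proper space is weakly proper**: every closed `R`-neighborhood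
`N_R(K) = {ν ∈ P₁(X) : ∃ μ ∈ K, w₁(μ,ν) ≤ R}` of a compact subset `K` of `(P₁(X), w₁)` is
sequentially compact in the weak topology induced from `P(X)`. -/
theorem wasserstein_closed_nbhd_weakly_seq_compact
    [MetricSpace X] [MeasurableSpace X] [BorelSpace X] [ProperSpace X] [CompleteSpace X]
    [TopologicalSpace.SeparableSpace X] (x₀ : X)
    (K : Set (Measure X)) (hK_sub : K ⊆ Pp 1 x₀) (hK_cpt : WpSeqCompact 1 K)
    (R : ℝ) (hR : 0 ≤ R) :
    WeakSeqCompact {ν : Measure X | ν ∈ Pp 1 x₀ ∧ ∃ μ ∈ K, Wp 1 μ ν ≤ R} := by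
  intro νs hνs
  choose hνP μs hμK hW using hνs
  obtain ⟨μ, hμ, φ1, hφ1, hlim1⟩ := hK_cpt μs hμK
  have hμP := hK_sub hμ
  have hev : ∀ n : ℕ, ∀ᶠ k in atTop, Wp 1 (μs (φ1 k)) μ < 0 + 1 / ((n : ℝ) + 1) := fun n =>
    hlim1.eventually (gt_mem_nhds (by positivity))
  obtain ⟨φ2, hφ2, hlim2⟩ := extraction_forall_of_eventually' (fun n => eventually_atTop.1 (hev n))
  choose σ hσ hσc using fun n =>
    aux_coup x₀ (μs (φ1 (φ2 n))) μ (hK_sub (hμK _)) hμP _ (hlim2 n)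
  choose π hπ hπc using fun n : ℕ =>
    aux_coup x₀ (μs n) (νs n) (hK_sub (hμK _)) (hνP n) (R + 1 / ((n : ℝ) + 1))
      ((hW n).trans_lt (by simp only [lt_add_iff_pos_right]; positivity))
  have hone : ∀ n : ℕ, 1 / ((n : ℝ) + 1) ≤ 1 := fun n => by
    rw [div_le_one (by positivity)]
    linarith [(Nat.cast_nonneg n : (0 : ℝ) ≤ n)]
  have hμm := (aux_mom x₀ μ).1 hμP.2
  set m := ∫⁻ x, edist x₀ x ∂μ with hm
  have hσm : ∀ n, ∫⁻ q, edist (x₀, x₀) q ∂(σ n : Measure (X × X)) ≤ m + ENNReal.ofReal 1 :=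
    fun n => (aux_both2 x₀ _ (hσ n)).trans (by
      gcongr
      refine (hσc n).trans (ENNReal.ofReal_le_ofReal ?_)
      linarith [hone n])
  obtain ⟨σ', φ3, hφ3, hσlim, hσ'⟩ := aux_main x₀ σ _
    (ENNReal.add_lt_top.2 ⟨hμm, ENNReal.ofReal_lt_top⟩).ne hσm 0 hσc
  have hψ : StrictMono (fun n => φ1 (φ2 (φ3 n))) := hφ1.comp (hφ2.comp hφ3)
  set ψ := fun n => φ1 (φ2 (φ3 n)) with hψdef
  have hπm : ∀ n, ∫⁻ q, edist (x₀, x₀) q ∂(π (ψ n) : Measure (X × X)) ≤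
      (m + ENNReal.ofReal 1) + ENNReal.ofReal (R + 1) := fun n =>
    (aux_both1 x₀ _ (hπ (ψ n))).trans (by
      refine add_le_add ((aux_le1 x₀ _ (hσ (φ3 n))).trans (hσm _)) ?_
      refine (hπc _).trans (ENNReal.ofReal_le_ofReal ?_)
      linarith [hone (ψ n)])
  obtain ⟨π', φ4, hφ4, hπlim, hπ'⟩ := aux_main x₀ (fun n => π (ψ n)) _
    (ENNReal.add_lt_top.2 ⟨ENNReal.add_lt_top.2 ⟨hμm, ENNReal.ofReal_lt_top⟩,
      ENNReal.ofReal_lt_top⟩).ne hπm R (fun n => (hπc (ψ n)).trans (ENNReal.ofReal_le_ofReal (by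
        have : (n : ℝ) ≤ (ψ n : ℝ) := by exact_mod_cast hψ.le_apply
        gcongr)))
  have := hμP.1
  -- marginals of the limits
  have f1 := ProbabilityMeasure.tendsto_map_of_tendsto_of_continuous _ _
    (hσlim.comp hφ4.tendsto_atTop) (continuous_fst (X := X) (Y := X))
  have f2 := ProbabilityMeasure.tendsto_map_of_tendsto_of_continuous _ _
    (hσlim.comp hφ4.tendsto_atTop) (continuous_snd (X := X) (Y := X))
  have g1 := ProbabilityMeasure.tendsto_map_of_tendsto_of_continuous _ _
    hπlim (continuous_fst (X := X) (Y := X))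
  have g2 := ProbabilityMeasure.tendsto_map_of_tendsto_of_continuous _ _
    hπlim (continuous_snd (X := X) (Y := X))
  have e1 : (σ' : Measure (X × X)).map Prod.snd = μ := by
    let P : ProbabilityMeasure X := ⟨μ, hμP.1⟩
    have hh : Tendsto (fun i : ℕ => P) atTop (𝓝 _) :=
      f2.congr (fun i => Subtype.ext (hσ (φ3 (φ4 i))).2)
    have h3 := tendsto_nhds_unique hh tendsto_const_nhds
    exact congrArg (fun ρ : ProbabilityMeasure X => (ρ : Measure X)) h3
  have e2 : (σ' : Measure (X × X)).map Prod.fst = (π' : Measure (X × X)).map Prod.fst := by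
    have h3 := tendsto_nhds_unique f1 (g1.congr (fun i =>
      Subtype.ext ((hπ (ψ (φ4 i))).1.trans (hσ (φ3 (φ4 i))).1.symm)))
    exact congrArg (fun ρ : ProbabilityMeasure X => (ρ : Measure X)) h3
  have e3 : (π' : Measure (X × X)).map Prod.fst = μ := by
    rw [← e2, aux_diag _ (by simpa using hσ'), e1]
  have hcoup : IsCoupling (π' : Measure (X × X)) μ ((π' : Measure (X × X)).map Prod.snd) :=
    ⟨e3, rfl⟩
  have hprob : IsProbabilityMeasure ((π' : Measure (X × X)).map Prod.snd) :=
    Measure.isProbabilityMeasure_map (by fun_prop)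
  refine ⟨(π' : Measure (X × X)).map Prod.snd, ⟨⟨hprob, ?_⟩, μ, hμ, ?_⟩,
    fun n => ψ (φ4 n), hψ.comp hφ4, ?_⟩
  · rw [aux_mom]
    refine ((aux_le2 x₀ _ hcoup).trans (aux_both1 x₀ _ hcoup)).trans_lt ?_
    exact ENNReal.add_lt_top.2 ⟨hμm, hπ'.trans_lt ENNReal.ofReal_lt_top⟩
  · rw [aux_Wp]
    refine ENNReal.toReal_le_of_le_ofReal hR ?_
    exact (iInf₂_le (π' : Measure (X × X)) ⟨inferInstance, hcoup⟩).trans hπ'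
  · intro g
    have hg := (ProbabilityMeasure.tendsto_iff_forall_integral_tendsto.1 g2) g
    refine hg.congr (fun i => ?_)
    rw [ProbabilityMeasure.toMeasure_map, (hπ (ψ (φ4 i))).2]
end
end

section
/- Let (X,d) be a proper complete separable metric space and let 1 <= p < q < infinity. Then every closed w_q-R-neighborhood of a w_q-compact subset of P_q(X) is compact in (P_p(X), w_p): if K is a compact subset of (P_q(X), w_q) and R >= 0, then the set {nu in P_q(X) : w_q(mu, nu) <= R for some mu in K} is sequentially compact with respect to the metric w_p. -/
open MeasureTheory Topology Filter Metric Set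
open scoped ENNReal NNReal

noncomputable section

variable {X : Type*}

lemma gl_fst [MeasurableSpace X] (α β : Measure X) [IsFiniteMeasure α] [IsFiniteMeasure β]
    (h : α univ = β univ) :
    ((α univ)⁻¹ • α.prod β).map Prod.fst = α ∧ ((α univ)⁻¹ • α.prod β).map Prod.snd = β := by
  rw [Measure.map_smul, Measure.map_smul, Measure.map_fst_prod, Measure.map_snd_prod]
  by_cases h0 : α univ = 0
  · have h1 : α = 0 := Measure.measure_univ_eq_zero.1 h0
    have h2 : β = 0 := Measure.measure_univ_eq_zero.1 (h ▸ h0)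
    subst h1 h2
    simp
  · rw [← h, smul_smul, smul_smul, ENNReal.inv_mul_cancel h0 (measure_ne_top _ _)]
    simp

lemma exists_coupling_partition [MeasurableSpace X] (μ ν : Measure X) [IsProbabilityMeasure μ]
    [IsProbabilityMeasure ν] (A : ℕ → Set X) (hA : ∀ i, MeasurableSet (A i))
    (hd : Pairwise (Function.onFun Disjoint A)) (N : ℕ) :
    ∃ π : Measure (X × X), IsProbabilityMeasure π ∧ IsCoupling π μ ν ∧
      π (⋃ i ∈ Finset.range N, A i ×ˢ A i)ᶜ ≤
        1 - ∑ i ∈ Finset.range N, min (μ (A i)) (ν (A i)) := by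
  -- the part of a measure that gets matched
  have key : ∀ (μ : Measure X) [IsProbabilityMeasure μ] (m : ℕ → ℝ≥0∞), (∀ i, m i ≤ μ (A i)) →
      ∃ (α : ℕ → Measure X) (α' : Measure X), (∀ i, α i univ = m i) ∧ (∀ i, α i (A i)ᶜ = 0) ∧
        α' + ∑ i ∈ Finset.range N, α i = μ := by
    intro μ _ m hm
    let α : ℕ → Measure X := fun i => (m i / μ (A i)) • μ.restrict (A i)
    have hle : ∑ i ∈ Finset.range N, α i ≤ μ := by
      have h1 : ∑ i ∈ Finset.range N, α i ≤ ∑ i ∈ Finset.range N, μ.restrict (A i) := by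
        refine Finset.sum_le_sum fun i _ => ?_
        intro s
        simp only [α, Measure.smul_apply, smul_eq_mul]
        refine mul_le_of_le_one_left' (ENNReal.div_le_of_le_mul (by simpa using hm i))
      refine h1.trans ?_
      refine Measure.le_iff.2 fun s hs => ?_
      rw [Measure.finsetSum_apply]
      simp only [Measure.restrict_apply hs]
      rw [← measure_biUnion_finset]
      · exact measure_mono (by simp)
      · intro i _ j _ hij
        exact (hd hij).mono inter_subset_right inter_subset_right
      · intro i _; exact hs.inter (hA i)
    have : IsFiniteMeasure (∑ i ∈ Finset.range N, α i) := isFiniteMeasure_of_le μ hle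
    refine ⟨α, μ - ∑ i ∈ Finset.range N, α i, fun i => ?_, fun i => ?_, ?_⟩
    · simp only [α, Measure.smul_apply, smul_eq_mul, Measure.restrict_apply_univ]
      by_cases h0 : μ (A i) = 0
      · have := hm i
        simp_all
      · exact ENNReal.div_mul_cancel h0 (measure_ne_top _ _)
    · simp only [α, Measure.smul_apply, smul_eq_mul, Measure.restrict_apply (hA i).compl]
      simp
    · exact Measure.sub_add_cancel_of_le hle
  let m : ℕ → ℝ≥0∞ := fun i => min (μ (A i)) (ν (A i))
  obtain ⟨α, α', hα, hαA, hαs⟩ := key μ m (fun i => min_le_left _ _)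
  obtain ⟨β, β', hβ, hβA, hβs⟩ := key ν m (fun i => min_le_right _ _)
  have mtop : ∀ i, m i < ⊤ := fun i => (min_le_left _ _).trans_lt (measure_lt_top _ _)
  have sum_fin : ∑ i ∈ Finset.range N, m i ≠ ⊤ := ENNReal.sum_ne_top.2 fun i _ => (mtop i).ne
  have : ∀ i, IsFiniteMeasure (α i) := fun i => ⟨by rw [hα]; exact mtop i⟩
  have : ∀ i, IsFiniteMeasure (β i) := fun i => ⟨by rw [hβ]; exact mtop i⟩
  have hα1 : α' univ + ∑ i ∈ Finset.range N, m i = 1 := by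
    have := congrArg (fun μ : Measure X => μ univ) hαs
    simpa [Measure.finsetSum_apply, hα] using this
  have hβ1 : β' univ + ∑ i ∈ Finset.range N, m i = 1 := by
    have := congrArg (fun μ : Measure X => μ univ) hβs
    simpa [Measure.finsetSum_apply, hβ] using this
  have hα2 : α' univ = 1 - ∑ i ∈ Finset.range N, m i := ENNReal.eq_sub_of_add_eq sum_fin hα1
  have hβ2 : β' univ = 1 - ∑ i ∈ Finset.range N, m i := ENNReal.eq_sub_of_add_eq sum_fin hβ1
  have : IsFiniteMeasure α' := ⟨by rw [hα2]; exact tsub_le_self.trans_lt ENNReal.one_lt_top⟩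
  have : IsFiniteMeasure β' := ⟨by rw [hβ2]; exact tsub_le_self.trans_lt ENNReal.one_lt_top⟩
  have h' := gl_fst α' β' (hα2.trans hβ2.symm)
  have hi := fun i => gl_fst (α i) (β i) ((hα i).trans (hβ i).symm)
  let π : Measure (X × X) := (α' univ)⁻¹ • α'.prod β' +
    ∑ i ∈ Finset.range N, (α i univ)⁻¹ • (α i).prod (β i)
  have hmap : ∀ (f : X × X → X), Measurable f → π.map f = ((α' univ)⁻¹ • α'.prod β').map f +
      ∑ i ∈ Finset.range N, ((α i univ)⁻¹ • (α i).prod (β i)).map f := by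
    intro f hf
    simp only [π]
    rw [Measure.map_add _ _ hf]
    congr 1
    simp only [← Measure.mapₗ_apply_of_measurable hf]
    rw [map_sum]
  have hc : IsCoupling π μ ν := by
    constructor
    · rw [hmap _ measurable_fst, h'.1, ← hαs]
      simp only [fun i => (hi i).1]
    · rw [hmap _ measurable_snd, h'.2, ← hβs]
      simp only [fun i => (hi i).2]
  have hprob : IsProbabilityMeasure π := by
    constructor
    have h1 : π.map Prod.fst univ = 1 := by rw [hc.1]; exact measure_univ
    rwa [Measure.map_apply measurable_fst MeasurableSet.univ, preimage_univ] at h1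
  refine ⟨π, hprob, hc, ?_⟩
  simp only [π, Measure.add_apply, Measure.finsetSum_apply]
  have z : ∀ i ∈ Finset.range N, ((α i univ)⁻¹ • (α i).prod (β i))
      (⋃ i ∈ Finset.range N, A i ×ˢ A i)ᶜ = 0 := by
    intro i hi'
    have hs : (⋃ i ∈ Finset.range N, A i ×ˢ A i)ᶜ ⊆ (A i)ᶜ ×ˢ univ ∪ univ ×ˢ (A i)ᶜ := by
      intro x hx
      simp only [mem_compl_iff, mem_iUnion, not_exists] at hx
      have := hx i hi'
      by_cases h : x.1 ∈ A i
      · right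
        refine ⟨trivial, fun h2 => this ⟨h, h2⟩⟩
      · left; exact ⟨h, trivial⟩
    have : ((α i).prod (β i)) (⋃ i ∈ Finset.range N, A i ×ˢ A i)ᶜ = 0 := by
      refine measure_mono_null hs (measure_union_null ?_ ?_)
      · rw [Measure.prod_prod, hαA, zero_mul]
      · rw [Measure.prod_prod, hβA, mul_zero]
    rw [Measure.smul_apply, this, smul_zero]
  rw [Finset.sum_eq_zero z, add_zero, ← hα2]
  refine (measure_mono (subset_univ _)).trans ?_
  have : ((α' univ)⁻¹ • α'.prod β').map Prod.fst univ = α' univ := by rw [h'.1]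
  rw [Measure.map_apply measurable_fst MeasurableSet.univ, preimage_univ] at this
  exact this.le

lemma exists_coupling_of_tendsto [MetricSpace X] [MeasurableSpace X] [BorelSpace X]
    [TopologicalSpace.SeparableSpace X] [Nonempty X]
    (νs : ℕ → ProbabilityMeasure X) (ν : ProbabilityMeasure X) (h : Tendsto νs atTop (𝓝 ν))
    (ε : ℝ) (hε : 0 < ε) (δ : ℝ≥0∞) (hδ : 0 < δ) :
    ∀ᶠ n in atTop, ∃ (π : Measure (X × X)) (U : Set (X × X)), IsProbabilityMeasure π ∧
      IsCoupling π (νs n) ν ∧ MeasurableSet U ∧ (∀ z ∈ U, dist z.1 z.2 ≤ ε) ∧ π Uᶜ ≤ δ := by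
  obtain ⟨u, hu⟩ := TopologicalSpace.exists_dense_seq X
  have hr := fun k => exists_null_frontier_thickening (ν : Measure X) {u k}
    (show ε / 4 < ε / 2 by linarith)
  choose r hr hr0 using hr
  simp only [thickening_singleton] at hr0
  let B : ℕ → Set X := fun k => ball (u k) (r k)
  have hB : ∀ k, MeasurableSet (B k) := fun k => measurableSet_ball
  let A := disjointed B
  have hA : ∀ i, MeasurableSet (A i) := fun i => MeasurableSet.disjointed hB i
  have hAB : ∀ i, A i ⊆ B i := fun i => disjointed_subset B i
  have hcov : ⋃ i, A i = univ := by
    rw [iUnion_disjointed]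
    refine eq_univ_of_forall fun x => ?_
    obtain ⟨k, hk⟩ := hu.exists_dist_lt x (show 0 < ε / 4 by linarith)
    exact mem_iUnion.2 ⟨k, hk.trans (hr k).1⟩
  have hfr : ∀ i, (ν : Measure X) (frontier (A i)) = 0 := by
    intro i
    refine disjointedRec (p := fun s => (ν : Measure X) (frontier s) = 0) ?_ (hr0 i)
    intro t j ht
    rw [sdiff_eq]
    refine null_frontier_inter ht ?_
    rw [frontier_compl]; exact hr0 j
  have hd : Pairwise (Function.onFun Disjoint A) := disjoint_disjointed B
  have hsum : Tendsto (fun N => ∑ i ∈ Finset.range N, (ν : Measure X) (A i)) atTop (𝓝 1) := by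
    have h1 : ∑' i, (ν : Measure X) (A i) = 1 := by
      rw [← measure_iUnion hd hA, hcov, measure_univ]
    rw [← h1]
    exact ENNReal.tendsto_nat_tsum _
  have hlim : ∀ i, Tendsto (fun n => (νs n : Measure X) (A i)) atTop (𝓝 ((ν : Measure X) (A i))) :=
    fun i => ProbabilityMeasure.tendsto_measure_of_null_frontier_of_tendsto' h (hfr i)
  have hδ' : ∃ N, 1 - ∑ i ∈ Finset.range N, (ν : Measure X) (A i) < δ := by
    have : Tendsto (fun N => 1 - ∑ i ∈ Finset.range N, (ν : Measure X) (A i)) atTop (𝓝 (1 - 1)) :=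
      ENNReal.Tendsto.sub tendsto_const_nhds hsum (Or.inl ENNReal.one_ne_top)
    rw [tsub_self] at this
    exact (this.eventually_lt_const hδ).exists
  obtain ⟨N, hN⟩ := hδ'
  have h2 : Tendsto (fun n => 1 - ∑ i ∈ Finset.range N, min ((νs n : Measure X) (A i))
      ((ν : Measure X) (A i))) atTop (𝓝 (1 - ∑ i ∈ Finset.range N, (ν : Measure X) (A i))) := by
    refine ENNReal.Tendsto.sub tendsto_const_nhds ?_ (Or.inl ENNReal.one_ne_top)
    refine tendsto_finsetSum _ fun i _ => ?_
    have := (hlim i).min (tendsto_const_nhds (x := (ν : Measure X) (A i)))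
    rwa [min_self] at this
  filter_upwards [h2.eventually_lt_const hN] with n hn
  obtain ⟨π, hπ, hc, hle⟩ := exists_coupling_partition (νs n : Measure X) (ν : Measure X) A hA hd N
  refine ⟨π, _, hπ, hc, ?_, ?_, hle.trans hn.le⟩
  · exact Finset.measurableSet_biUnion _ fun i _ => (hA i).prod (hA i)
  · intro z hz
    simp only [mem_iUnion] at hz
    obtain ⟨i, _, hz1, hz2⟩ := hz
    have e1 := mem_ball.1 (hAB i hz1)
    have e2 := mem_ball.1 (hAB i hz2)
    have := dist_triangle_right z.1 z.2 (u i)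
    linarith [(hr i).2]

lemma lintegral_rpow_triangle {Ω : Type*} [MeasurableSpace Ω] (π : Measure Ω) (q : ℝ) (hq : 0 < q)
    (f g h : Ω → ℝ) (hf : ∀ z, 0 ≤ f z) (hg : ∀ z, 0 ≤ g z) (hh : ∀ z, 0 ≤ h z)
    (hgm : Measurable g) (hle : ∀ z, f z ≤ g z + h z) :
    ∫⁻ z, ENNReal.ofReal (f z ^ q) ∂π ≤ ENNReal.ofReal (2 ^ q) *
      (∫⁻ z, ENNReal.ofReal (g z ^ q) ∂π + ∫⁻ z, ENNReal.ofReal (h z ^ q) ∂π) := by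
  rw [← lintegral_add_left (by fun_prop), ← lintegral_const_mul' _ _ ENNReal.ofReal_ne_top]
  refine lintegral_mono fun z => ?_
  have e1 : 0 ≤ g z ^ q := Real.rpow_nonneg (hg z) q
  have e2 : 0 ≤ h z ^ q := Real.rpow_nonneg (hh z) q
  simp only
  rw [← ENNReal.ofReal_add e1 e2, ← ENNReal.ofReal_mul (by positivity)]
  refine ENNReal.ofReal_le_ofReal ?_
  have hm : 0 ≤ max (g z) (h z) := le_max_of_le_left (hg z)
  calc f z ^ q ≤ (2 * max (g z) (h z)) ^ q := by
        refine Real.rpow_le_rpow (hf z) ?_ hq.le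
        linarith [hle z, le_max_left (g z) (h z), le_max_right (g z) (h z)]
    _ = 2 ^ q * (max (g z) (h z)) ^ q := Real.mul_rpow (by norm_num) hm
    _ ≤ 2 ^ q * (g z ^ q + h z ^ q) := by
        refine mul_le_mul_of_nonneg_left ?_ (by positivity)
        rcases max_cases (g z) (h z) with h | h <;> rw [h.1] <;> linarith

lemma wCost_tendsto [MetricSpace X] [MeasurableSpace X] [BorelSpace X]
    [SecondCountableTopology X] (x₀ : X) (p q : ℝ) (hp : 1 ≤ p) (hpq : p < q)
    (νs : ℕ → ProbabilityMeasure X) (ν : ProbabilityMeasure X) (h : Tendsto νs atTop (𝓝 ν))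
    (C : ℝ≥0∞) (hC : C ≠ ⊤) (h1 : ∀ n, ∫⁻ x, ENNReal.ofReal (dist x₀ x ^ q) ∂(νs n : Measure X) ≤ C)
    (h2 : ∫⁻ x, ENNReal.ofReal (dist x₀ x ^ q) ∂(ν : Measure X) ≤ C) :
    Tendsto (fun n => wCost p (νs n : Measure X) (ν : Measure X)) atTop (𝓝 0) := by
  have : Nonempty X := ⟨x₀⟩
  have hq : 0 < q := by linarith
  rw [ENNReal.tendsto_nhds_zero]
  intro e he
  have he3 : 0 < e / 3 := ENNReal.div_pos he.ne' (by norm_num)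
  let C' := ENNReal.ofReal (2 ^ q) * (C + C)
  have hC' : C' ≠ ⊤ := ENNReal.mul_ne_top ENNReal.ofReal_ne_top (ENNReal.add_ne_top.2 ⟨hC, hC⟩)
  -- choose the truncation
  obtain ⟨T, hT0, hT⟩ : ∃ T : ℝ, 0 < T ∧ ENNReal.ofReal (T ^ (p - q)) * C' ≤ e / 3 := by
    have t1 : Tendsto (fun T : ℝ => T ^ (p - q)) atTop (𝓝 0) := by
      have := tendsto_rpow_neg_atTop (show 0 < q - p by linarith)
      simpa using this
    have t2 : Tendsto (fun T : ℝ => ENNReal.ofReal (T ^ (p - q)) * C') atTop (𝓝 (0 * C')) :=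
      ENNReal.Tendsto.mul_const (by simpa using ENNReal.tendsto_ofReal t1) (Or.inr hC')
    rw [zero_mul] at t2
    obtain ⟨T, hT, hT'⟩ := ((t2.eventually_lt_const he3).and (eventually_gt_atTop 0)).exists
    exact ⟨T, hT', hT.le⟩
  obtain ⟨ε, hε0, hε⟩ : ∃ ε : ℝ, 0 < ε ∧ ENNReal.ofReal (ε ^ p) ≤ e / 3 := by
    have t1 : Tendsto (fun ε : ℝ => ε ^ p) (𝓝[>] 0) (𝓝 0) := by
      have := (Real.continuousAt_rpow_const 0 p (Or.inr (by linarith))).tendsto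
      rw [Real.zero_rpow (by linarith)] at this
      exact this.mono_left nhdsWithin_le_nhds
    have t2 := ENNReal.tendsto_ofReal t1
    rw [ENNReal.ofReal_zero] at t2
    obtain ⟨T, hT, hT'⟩ := ((t2.eventually_lt_const he3).and self_mem_nhdsWithin).exists
    exact ⟨T, hT', hT.le⟩
  obtain ⟨δ, hδ0, hδ⟩ : ∃ δ : ℝ≥0∞, 0 < δ ∧ ENNReal.ofReal (T ^ p) * δ ≤ e / 3 := by
    have hTp : ENNReal.ofReal (T ^ p) ≠ 0 := by
      simpa using Real.rpow_pos_of_pos hT0 p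
    refine ⟨e / 3 / ENNReal.ofReal (T ^ p), ENNReal.div_pos he3.ne' ENNReal.ofReal_ne_top, ?_⟩
    exact ENNReal.mul_div_le
  filter_upwards [exists_coupling_of_tendsto νs ν h ε hε0 δ hδ0] with n hn
  obtain ⟨π, U, hπ, hc, hU, hUd, hUδ⟩ := hn
  refine (iInf₂_le π ⟨hπ, hc⟩).trans ?_
  have hq' : ∫⁻ z, ENNReal.ofReal (dist z.1 z.2 ^ q) ∂π ≤ C' := by
    refine (lintegral_rpow_triangle π q hq (fun z => dist z.1 z.2) (fun z => dist x₀ z.1)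
      (fun z => dist x₀ z.2) (fun _ => dist_nonneg) (fun _ => dist_nonneg) (fun _ => dist_nonneg)
      (by fun_prop) (fun z => dist_triangle_left _ _ _)).trans ?_
    refine mul_le_mul_right (add_le_add ?_ ?_) _
    · rw [← lintegral_map (f := fun x => ENNReal.ofReal (dist x₀ x ^ q)) (by fun_prop)
        measurable_fst, hc.1]
      exact h1 n
    · rw [← lintegral_map (f := fun x => ENNReal.ofReal (dist x₀ x ^ q)) (by fun_prop)
        measurable_snd, hc.2]
      exact h2
  have hpt : ∀ z : X × X, ENNReal.ofReal (dist z.1 z.2 ^ p) ≤ ENNReal.ofReal (ε ^ p) +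
      Uᶜ.indicator (fun _ => ENNReal.ofReal (T ^ p)) z +
      ENNReal.ofReal (T ^ (p - q)) * ENNReal.ofReal (dist z.1 z.2 ^ q) := by
    intro z
    by_cases hz : z ∈ U
    · refine le_add_right (le_add_right (ENNReal.ofReal_le_ofReal ?_))
      exact Real.rpow_le_rpow dist_nonneg (hUd z hz) (by linarith)
    · by_cases hd : dist z.1 z.2 ≤ T
      · refine le_add_right (le_add_left ?_)
        rw [indicator_of_mem (by exact hz)]
        exact ENNReal.ofReal_le_ofReal (Real.rpow_le_rpow dist_nonneg hd (by linarith))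
      · refine le_add_left ?_
        push Not at hd
        have hd0 : 0 < dist z.1 z.2 := hT0.trans hd
        rw [← ENNReal.ofReal_mul (Real.rpow_nonneg hT0.le _)]
        refine ENNReal.ofReal_le_ofReal ?_
        calc dist z.1 z.2 ^ p = dist z.1 z.2 ^ (p - q) * dist z.1 z.2 ^ q := by
              rw [← Real.rpow_add hd0]; congr 1; ring
          _ ≤ _ := mul_le_mul_of_nonneg_right
              (Real.rpow_le_rpow_of_nonpos hT0 hd.le (by linarith)) (Real.rpow_nonneg hd0.le _)
  calc ∫⁻ z, ENNReal.ofReal (dist z.1 z.2 ^ p) ∂π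
      ≤ ∫⁻ z, (ENNReal.ofReal (ε ^ p) +
      Uᶜ.indicator (fun _ => ENNReal.ofReal (T ^ p)) z +
      ENNReal.ofReal (T ^ (p - q)) * ENNReal.ofReal (dist z.1 z.2 ^ q)) ∂π := lintegral_mono hpt
    _ = ENNReal.ofReal (ε ^ p) + ENNReal.ofReal (T ^ p) * π Uᶜ +
        ENNReal.ofReal (T ^ (p - q)) * ∫⁻ z, ENNReal.ofReal (dist z.1 z.2 ^ q) ∂π := by
        rw [lintegral_add_left, lintegral_add_left measurable_const,
          lintegral_const_mul' _ _ ENNReal.ofReal_ne_top, lintegral_indicator_const hU.compl,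
          lintegral_const, measure_univ, mul_one]
        exact (measurable_const (a := ENNReal.ofReal (ε ^ p))).add
          ((measurable_const (a := ENNReal.ofReal (T ^ p))).indicator hU.compl)
    _ ≤ e / 3 + e / 3 + e / 3 := by
        refine add_le_add (add_le_add hε ?_) ?_
        · exact (mul_le_mul_right hUδ _).trans hδ
        · exact (mul_le_mul_right hq' _).trans hT
    _ = e := ENNReal.add_thirds e

lemma exists_subseq_tendsto {Y : Type*} [MetricSpace Y] [MeasurableSpace Y] [BorelSpace Y]
    [ProperSpace Y] (y₀ : Y) (q : ℝ) (hq : 0 < q) (πs : ℕ → ProbabilityMeasure Y)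
    (C : ℝ≥0∞) (hC : C ≠ ⊤)
    (h : ∀ n, ∫⁻ y, ENNReal.ofReal (dist y₀ y ^ q) ∂(πs n : Measure Y) ≤ C) :
    ∃ (π : ProbabilityMeasure Y) (φ : ℕ → ℕ), StrictMono φ ∧
      Tendsto (fun n => πs (φ n)) atTop (𝓝 π) := by
  have ht : IsTightMeasureSet {((μ : ProbabilityMeasure Y) : Measure Y) | μ ∈ range πs} := by
    rw [isTightMeasureSet_iff_exists_isCompact_measure_compl_le]
    intro ε hε
    obtain ⟨r, hr0, hr⟩ : ∃ r : ℝ, 0 < r ∧ C / ENNReal.ofReal (r ^ q) ≤ ε := by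
      have t1 : Tendsto (fun r : ℝ => C / ENNReal.ofReal (r ^ q)) atTop (𝓝 (C / ⊤)) :=
        ENNReal.Tendsto.const_div
          (ENNReal.tendsto_ofReal_nhds_top.2 (tendsto_rpow_atTop hq)) (Or.inr hC)
      rw [ENNReal.div_top] at t1
      obtain ⟨T, hT, hT'⟩ := ((t1.eventually_lt_const hε).and (eventually_gt_atTop 0)).exists
      exact ⟨T, hT', hT.le⟩
    refine ⟨closedBall y₀ r, isCompact_closedBall _ _, ?_⟩
    rintro _ ⟨_, ⟨n, rfl⟩, rfl⟩
    refine le_trans ?_ hr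
    have hrq : 0 < r ^ q := Real.rpow_pos_of_pos hr0 q
    have hm := meas_ge_le_lintegral_div (μ := (πs n : Measure Y))
      (f := fun y => ENNReal.ofReal (dist y₀ y ^ q)) (by fun_prop)
      (ε := ENNReal.ofReal (r ^ q)) (by simpa using hrq) ENNReal.ofReal_ne_top
    refine (measure_mono ?_).trans (hm.trans (ENNReal.div_le_div_right (h n) _))
    intro y hy
    simp only [mem_compl_iff, mem_closedBall, not_le] at hy
    refine ENNReal.ofReal_le_ofReal (Real.rpow_le_rpow hr0.le ?_ hq.le)
    rw [dist_comm]; exact hy.le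
  have hc := isCompact_closure_of_isTightMeasureSet ht
  obtain ⟨π, -, φ, hφ, hlim⟩ := hc.isSeqCompact (fun n => subset_closure (mem_range_self n))
  exact ⟨π, φ, hφ, hlim⟩

lemma lsc_cost {Y : Type*} [MetricSpace Y] [MeasurableSpace Y] [BorelSpace Y]
    (f : Y → ℝ) (hf : Continuous f) (hf0 : ∀ y, 0 ≤ f y) (πs : ℕ → ProbabilityMeasure Y)
    (π : ProbabilityMeasure Y) (h : Tendsto πs atTop (𝓝 π)) (c : ℕ → ℝ≥0∞) (c₀ : ℝ≥0∞)
    (hc : Tendsto c atTop (𝓝 c₀))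
    (hle : ∀ n, ∫⁻ y, ENNReal.ofReal (f y) ∂(πs n : Measure Y) ≤ c n) :
    ∫⁻ y, ENNReal.ofReal (f y) ∂(π : Measure Y) ≤ c₀ := by
  refine (lintegral_le_liminf_lintegral_of_forall_isOpen_measure_le_liminf_measure hf hf0
    (fun G hG => ProbabilityMeasure.le_liminf_measure_open_of_tendsto h hG)).trans ?_
  rw [← hc.liminf_eq]
  exact liminf_le_liminf (Eventually.of_forall hle)

lemma wCost_le_of_Wp_le_s3 [MetricSpace X] [MeasurableSpace X] (q : ℝ) (hq : 0 < q) (μ ν : Measure X)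
    (hfin : wCost q μ ν ≠ ⊤) (R : ℝ) (h : Wp q μ ν ≤ R) :
    wCost q μ ν ≤ ENNReal.ofReal R ^ q := by
  have h1 : wCost q μ ν ^ (1 / q) ≤ ENNReal.ofReal R :=
    (ENNReal.le_ofReal_iff_toReal_le (ENNReal.rpow_ne_top_of_nonneg (by positivity) hfin)
      (ENNReal.toReal_nonneg.trans h)).2 h
  calc wCost q μ ν = (wCost q μ ν ^ (1 / q)) ^ q := by
        rw [← ENNReal.rpow_mul, one_div_mul_cancel hq.ne', ENNReal.rpow_one]
    _ ≤ _ := ENNReal.rpow_le_rpow h1 hq.le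

lemma Wp_le_of_wCost_le_s3 [MetricSpace X] [MeasurableSpace X] (q : ℝ) (hq : 0 < q) (μ ν : Measure X)
    (R : ℝ) (hR : 0 ≤ R) (h : wCost q μ ν ≤ ENNReal.ofReal R ^ q) : Wp q μ ν ≤ R := by
  have h1 : wCost q μ ν ^ (1 / q) ≤ ENNReal.ofReal R := by
    refine (ENNReal.rpow_le_rpow h (by positivity)).trans ?_
    rw [← ENNReal.rpow_mul, mul_one_div_cancel hq.ne', ENNReal.rpow_one]
  exact ENNReal.toReal_le_of_le_ofReal hR h1

lemma exists_coupling_le [MetricSpace X] [MeasurableSpace X] (q : ℝ) (μ ν : Measure X)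
    (hfin : wCost q μ ν ≠ ⊤) (e : ℝ≥0∞) (he : e ≠ 0) :
    ∃ π : ProbabilityMeasure (X × X), IsCoupling (π : Measure (X × X)) μ ν ∧
      ∫⁻ z, ENNReal.ofReal (dist z.1 z.2 ^ q) ∂(π : Measure (X × X)) ≤ wCost q μ ν + e := by
  have h : wCost q μ ν < wCost q μ ν + e := ENNReal.lt_add_right hfin he
  conv_lhs at h => unfold wCost
  simp only [iInf_lt_iff] at h
  obtain ⟨π, ⟨hπ, hc⟩, hlt⟩ := h
  exact ⟨⟨π, hπ⟩, hc, hlt.le⟩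

lemma wCost_ne_top [MetricSpace X] [MeasurableSpace X] [BorelSpace X] [SecondCountableTopology X]
    (q : ℝ) (hq : 0 < q) (x₀ : X) (μ ν : Measure X)
    (hμ : μ ∈ Pp q x₀) (hν : ν ∈ Pp q x₀) : wCost q μ ν ≠ ⊤ := by
  obtain ⟨hμp, hμm⟩ := hμ
  obtain ⟨hνp, hνm⟩ := hν
  have hc : IsCoupling (μ.prod ν) μ ν := by
    constructor
    · rw [Measure.map_fst_prod]; simp
    · rw [Measure.map_snd_prod]; simp
  refine ne_top_of_le_ne_top ?_ (iInf₂_le (μ.prod ν) ⟨inferInstance, hc⟩)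
  refine ne_top_of_le_ne_top ?_ (lintegral_rpow_triangle (μ.prod ν) q hq (fun z => dist z.1 z.2)
      (fun z => dist x₀ z.1)
      (fun z => dist x₀ z.2) (fun _ => dist_nonneg) (fun _ => dist_nonneg) (fun _ => dist_nonneg)
      (by fun_prop) (fun z => dist_triangle_left _ _ _))
  rw [← lintegral_map (f := fun x => ENNReal.ofReal (dist x₀ x ^ q)) (by fun_prop)
      measurable_fst, hc.1, ← lintegral_map (f := fun x => ENNReal.ofReal (dist x₀ x ^ q))
      (by fun_prop) measurable_snd, hc.2]
  exact ENNReal.mul_ne_top ENNReal.ofReal_ne_top (ENNReal.add_ne_top.2 ⟨hμm.ne, hνm.ne⟩)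

lemma moment_snd_le [MetricSpace X] [MeasurableSpace X] [BorelSpace X] [SecondCountableTopology X]
    (q : ℝ) (hq : 0 < q) (x₀ : X) (μ ν : Measure X) (π : Measure (X × X)) (hc : IsCoupling π μ ν)
    (a b : ℝ≥0∞) (ha : ∫⁻ x, ENNReal.ofReal (dist x₀ x ^ q) ∂μ ≤ a)
    (hb : ∫⁻ z, ENNReal.ofReal (dist z.1 z.2 ^ q) ∂π ≤ b) :
    ∫⁻ x, ENNReal.ofReal (dist x₀ x ^ q) ∂ν ≤ ENNReal.ofReal (2 ^ q) * (a + b) := by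
  have h := lintegral_rpow_triangle π q hq (fun z => dist x₀ z.2)
      (fun z => dist x₀ z.1)
      (fun z => dist z.1 z.2) (fun _ => dist_nonneg) (fun _ => dist_nonneg) (fun _ => dist_nonneg)
      (by fun_prop) (fun z => dist_triangle _ _ _)
  rw [← lintegral_map (f := fun x => ENNReal.ofReal (dist x₀ x ^ q)) (by fun_prop)
      measurable_fst, hc.1, ← lintegral_map (f := fun x => ENNReal.ofReal (dist x₀ x ^ q))
      (by fun_prop) measurable_snd, hc.2] at h
  exact h.trans (mul_le_mul_right (add_le_add ha hb) _)

lemma moment_pair_le [MetricSpace X] [MeasurableSpace X] [BorelSpace X] [SecondCountableTopology X]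
    (q : ℝ) (hq : 0 < q) (x₀ : X) (μ ν : Measure X) (π : Measure (X × X)) (hc : IsCoupling π μ ν)
    (a b : ℝ≥0∞) (ha : ∫⁻ x, ENNReal.ofReal (dist x₀ x ^ q) ∂μ ≤ a)
    (hb : ∫⁻ x, ENNReal.ofReal (dist x₀ x ^ q) ∂ν ≤ b) :
    ∫⁻ z, ENNReal.ofReal (dist (x₀, x₀) z ^ q) ∂π ≤ ENNReal.ofReal (2 ^ q) * (a + b) := by
  have h := lintegral_rpow_triangle π q hq (fun z => dist (x₀, x₀) z)
      (fun z => dist x₀ z.1)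
      (fun z => dist x₀ z.2) (fun _ => dist_nonneg) (fun _ => dist_nonneg) (fun _ => dist_nonneg)
      (by fun_prop) (fun z => by
        rw [Prod.dist_eq]
        exact max_le_add_of_nonneg dist_nonneg dist_nonneg)
  rw [← lintegral_map (f := fun x => ENNReal.ofReal (dist x₀ x ^ q)) (by fun_prop)
      measurable_fst, hc.1, ← lintegral_map (f := fun x => ENNReal.ofReal (dist x₀ x ^ q))
      (by fun_prop) measurable_snd, hc.2] at h
  exact h.trans (mul_le_mul_right (add_le_add ha hb) _)

/-- For `1 ≤ p < q`, every closed `w_q`-`R`-neighborhood of a `w_q`-compact subset of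
`P_q(X)` of a proper space `X` is sequentially compact with respect to the metric `w_p`. -/
theorem wasserstein_q_nbhd_wp_seq_compact
    [MetricSpace X] [MeasurableSpace X] [BorelSpace X] [ProperSpace X] [CompleteSpace X]
    [TopologicalSpace.SeparableSpace X] (x₀ : X)
    (p q : ℝ) (hp : 1 ≤ p) (hpq : p < q)
    (K : Set (Measure X)) (hK_sub : K ⊆ Pp q x₀) (hK_cpt : WpSeqCompact q K)
    (R : ℝ) (hR : 0 ≤ R) :
    WpSeqCompact p {ν : Measure X | ν ∈ Pp q x₀ ∧ ∃ μ ∈ K, Wp q μ ν ≤ R} := by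
  have hq : 0 < q := by linarith
  have hp0 : 0 < p := by linarith
  intro νs hνs
  have hνP : ∀ n, νs n ∈ Pp q x₀ := fun n => (hνs n).1
  choose μs hμK hW using fun n => (hνs n).2
  obtain ⟨μ, hμ, φ, hφ, hlim⟩ := hK_cpt μs hμK
  have hμP := hK_sub hμ
  have hμp : IsProbabilityMeasure μ := hμP.1
  have hμsP : ∀ n, μs n ∈ Pp q x₀ := fun n => hK_sub (hμK n)
  -- couplings of the centers with their limit
  have fin1 : ∀ n, wCost q (μs (φ n)) μ ≠ ⊤ := fun n => wCost_ne_top q hq x₀ _ _ (hμsP _) hμP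
  have fin2 : ∀ n, wCost q (μs (φ n)) (νs (φ n)) ≠ ⊤ :=
    fun n => wCost_ne_top q hq x₀ _ _ (hμsP _) (hνP _)
  have inv0 : ∀ n : ℕ, ((n : ℝ≥0∞) + 1)⁻¹ ≠ 0 := fun n =>
    ENNReal.inv_ne_zero.2 (by simp)
  have inv1 : ∀ n : ℕ, ((n : ℝ≥0∞) + 1)⁻¹ ≤ 1 := fun n => by
    rw [ENNReal.inv_le_one]; exact le_add_self
  have invlim : Tendsto (fun n : ℕ => ((n : ℝ≥0∞) + 1)⁻¹) atTop (𝓝 0) := by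
    have := (tendsto_add_atTop_iff_nat 1).2 ENNReal.tendsto_inv_nat_nhds_zero
    simpa using this
  choose σs hσc hσ using fun n => exists_coupling_le q (μs (φ n)) μ (fin1 n) _ (inv0 n)
  choose πs hπc hπ using fun n => exists_coupling_le q (μs (φ n)) (νs (φ n)) (fin2 n) _ (inv0 n)
  have hπ' : ∀ n, ∫⁻ z, ENNReal.ofReal (dist z.1 z.2 ^ q) ∂(πs n : Measure (X × X)) ≤
      ENNReal.ofReal R ^ q + ((n : ℝ≥0∞) + 1)⁻¹ := fun n =>
    (hπ n).trans (add_le_add_left (wCost_le_of_Wp_le_s3 q hq _ _ (fin2 n) R (hW _)) _)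
  obtain ⟨B, hB⟩ := hlim.bddAbove_range
  have hσB : ∀ n, ∫⁻ z, ENNReal.ofReal (dist z.1 z.2 ^ q) ∂(σs n : Measure (X × X)) ≤
      ENNReal.ofReal B ^ q + 1 := fun n =>
    (hσ n).trans (add_le_add (wCost_le_of_Wp_le_s3 q hq _ _ (fin1 n) B (hB (mem_range_self n)))
      (inv1 n))
  have hcost0 : Tendsto (fun n => wCost q (μs (φ n)) μ) atTop (𝓝 0) := by
    have t1 : Tendsto (fun n => ENNReal.ofReal (Wp q (μs (φ n)) μ) ^ q) atTop
        (𝓝 (ENNReal.ofReal 0 ^ q)) :=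
      ((ENNReal.continuous_rpow_const (y := q)).tendsto _).comp (ENNReal.tendsto_ofReal hlim)
    rw [ENNReal.ofReal_zero, ENNReal.zero_rpow_of_pos hq] at t1
    exact tendsto_of_tendsto_of_tendsto_of_le_of_le tendsto_const_nhds t1 (fun n => zero_le)
      (fun n => wCost_le_of_Wp_le_s3 q hq _ _ (fin1 n) _ le_rfl)
  have hσlim : Tendsto (fun n : ℕ => wCost q (μs (φ n)) μ + ((n : ℝ≥0∞) + 1)⁻¹) atTop (𝓝 0) := by
    simpa using hcost0.add invlim
  have hπlim : Tendsto (fun n : ℕ => ENNReal.ofReal R ^ q + ((n : ℝ≥0∞) + 1)⁻¹) atTop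
      (𝓝 (ENNReal.ofReal R ^ q)) := by
    simpa using (tendsto_const_nhds (x := ENNReal.ofReal R ^ q)).add invlim
  -- moment bounds
  let M := ∫⁻ x, ENNReal.ofReal (dist x₀ x ^ q) ∂μ
  have hM : M ≠ ⊤ := hμP.2.ne
  let C1 := ENNReal.ofReal (2 ^ q) * (M + (ENNReal.ofReal B ^ q + 1))
  have hofR : ∀ r : ℝ, ENNReal.ofReal r ^ q ≠ ⊤ := fun r =>
    ENNReal.rpow_ne_top_of_nonneg hq.le ENNReal.ofReal_ne_top
  have hC1 : C1 ≠ ⊤ := by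
    refine ENNReal.mul_ne_top ENNReal.ofReal_ne_top ?_
    simp [hM, hofR]
  have hmμ : ∀ n, ∫⁻ x, ENNReal.ofReal (dist x₀ x ^ q) ∂(μs (φ n)) ≤ C1 := by
    intro n
    have hsw : IsCoupling ((σs n : Measure (X × X)).map Prod.swap) μ (μs (φ n)) := by
      constructor
      · rw [Measure.map_map measurable_fst measurable_swap]; exact (hσc n).2
      · rw [Measure.map_map measurable_snd measurable_swap]; exact (hσc n).1
    refine moment_snd_le q hq x₀ _ _ _ hsw M _ le_rfl ?_
    rw [lintegral_map (by fun_prop) measurable_swap]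
    simpa [dist_comm] using hσB n
  let C2 := ENNReal.ofReal (2 ^ q) * (C1 + (ENNReal.ofReal R ^ q + 1))
  have hC2 : C2 ≠ ⊤ := by
    refine ENNReal.mul_ne_top ENNReal.ofReal_ne_top ?_
    simp [hC1, hofR]
  have hmν : ∀ n, ∫⁻ x, ENNReal.ofReal (dist x₀ x ^ q) ∂(νs (φ n)) ≤ C2 := fun n =>
    moment_snd_le q hq x₀ _ _ _ (hπc n) _ _ (hmμ n)
      ((hπ' n).trans (add_le_add_right (inv1 n) _))
  -- extract limits
  obtain ⟨π, ψ, hψ, hπt⟩ := exists_subseq_tendsto (x₀, x₀) q hq πs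
    (ENNReal.ofReal (2 ^ q) * (C1 + C2))
    (ENNReal.mul_ne_top ENNReal.ofReal_ne_top (ENNReal.add_ne_top.2 ⟨hC1, hC2⟩))
    (fun n => moment_pair_le q hq x₀ _ _ _ (hπc n) _ _ (hmμ n) (hmν n))
  obtain ⟨σ, χ, hχ, hσt⟩ := exists_subseq_tendsto (x₀, x₀) q hq (fun n => σs (ψ n))
    (ENNReal.ofReal (2 ^ q) * (C1 + M))
    (ENNReal.mul_ne_top ENNReal.ofReal_ne_top (ENNReal.add_ne_top.2 ⟨hC1, hM⟩))
    (fun n => moment_pair_le q hq x₀ _ _ _ (hσc _) _ _ (hmμ _) le_rfl)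
  have hπt' : Tendsto (fun n => πs (ψ (χ n))) atTop (𝓝 π) := hπt.comp hχ.tendsto_atTop
  have hρ : Tendsto (fun n => ψ (χ n)) atTop atTop := hψ.tendsto_atTop.comp hχ.tendsto_atTop
  have hcont : Continuous fun z : X × X => dist z.1 z.2 ^ q :=
    (continuous_fst.dist continuous_snd).rpow_const fun _ => Or.inr hq.le
  have hnn : ∀ z : X × X, 0 ≤ dist z.1 z.2 ^ q := fun z => Real.rpow_nonneg dist_nonneg q
  have hσ0 := lsc_cost _ hcont hnn _ _ hσt _ _ (hσlim.comp hρ) (fun n => hσ _)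
  have hπR := lsc_cost _ hcont hnn _ _ hπt' _ _ (hπlim.comp hρ) (fun n => hπ' _)
  -- identify the marginals
  let μP : ProbabilityMeasure X := ⟨μ, hμp⟩
  let νP : ℕ → ProbabilityMeasure X := fun n => ⟨νs n, (hνP n).1⟩
  have hσf := ProbabilityMeasure.tendsto_map_of_tendsto_of_continuous _ _ hσt continuous_fst
  have hσs' := ProbabilityMeasure.tendsto_map_of_tendsto_of_continuous _ _ hσt continuous_snd
  have hπf := ProbabilityMeasure.tendsto_map_of_tendsto_of_continuous _ _ hπt' continuous_fst
  have hπs' := ProbabilityMeasure.tendsto_map_of_tendsto_of_continuous _ _ hπt' continuous_snd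
  have e1 : (π : Measure (X × X)).map Prod.fst = (σ : Measure (X × X)).map Prod.fst := by
    refine congrArg (fun P : ProbabilityMeasure X => (P : Measure X))
      (tendsto_nhds_unique hπf (hσf.congr fun n => ?_))
    refine ProbabilityMeasure.toMeasure_injective ?_
    exact (hσc _).1.trans (hπc _).1.symm
  have e2 : (σ : Measure (X × X)).map Prod.snd = μ := by
    refine congrArg (fun P : ProbabilityMeasure X => (P : Measure X))
      (tendsto_nhds_unique hσs' (Tendsto.congr (f₁ := fun _ => μP) ?_
        (tendsto_const_nhds (x := μP))))
    intro n
    exact ProbabilityMeasure.toMeasure_injective (hσc _).2.symm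
  have e3 : (σ : Measure (X × X)).map Prod.fst = (σ : Measure (X × X)).map Prod.snd := by
    refine Measure.map_congr ?_
    have := (lintegral_eq_zero_iff (by fun_prop)).1 (le_antisymm hσ0 zero_le)
    filter_upwards [this] with z hz
    have hz' : dist z.1 z.2 ^ q ≤ 0 := ENNReal.ofReal_eq_zero.1 hz
    have hz2 := le_antisymm hz' (hnn z)
    rw [Real.rpow_eq_zero dist_nonneg hq.ne'] at hz2
    exact dist_eq_zero.1 hz2
  let ν : ProbabilityMeasure X := π.map continuous_snd.measurable.aemeasurable
  have hcπ : IsCoupling (π : Measure (X × X)) μ (ν : Measure X) := ⟨e1.trans (e3.trans e2), rfl⟩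
  have hνlim : Tendsto (fun n => νP (φ (ψ (χ n)))) atTop (𝓝 ν) := by
    refine Tendsto.congr (fun n => ?_) hπs'
    exact ProbabilityMeasure.toMeasure_injective (hπc (ψ (χ n))).2
  have hνm : ∫⁻ x, ENNReal.ofReal (dist x₀ x ^ q) ∂(ν : Measure X) ≤ C2 :=
    lsc_cost (fun x => dist x₀ x ^ q)
      ((continuous_const.dist continuous_id).rpow_const fun _ => Or.inr hq.le)
      (fun x => Real.rpow_nonneg dist_nonneg q) _ _ hνlim (fun _ => C2) C2 tendsto_const_nhds
      (fun n => hmν _)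
  refine ⟨ν, ⟨⟨inferInstance, hνm.trans_lt hC2.lt_top⟩, μ, hμ, ?_⟩, fun n => φ (ψ (χ n)),
    hφ.comp (hψ.comp hχ), ?_⟩
  · exact Wp_le_of_wCost_le_s3 q hq _ _ R hR ((iInf₂_le _ ⟨inferInstance, hcπ⟩).trans hπR)
  · have hw := wCost_tendsto x₀ p q hp hpq _ ν hνlim C2 hC2 (fun n => hmν _) hνm
    have t1 := ((ENNReal.continuous_rpow_const (y := 1 / p)).tendsto _).comp hw
    rw [ENNReal.zero_rpow_of_pos (by positivity)] at t1
    have t2 := (ENNReal.tendsto_toReal ENNReal.zero_ne_top).comp t1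
    rw [ENNReal.toReal_zero] at t2
    exact t2
end
end
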